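/- Let A = S¹ ∪ ((∂R(1) ∪ ∂R(2) ∪ ∂R(3)) ∩ D), where S¹ is the unit circle, D is the open unit disk, and ∂ denotes the topological frontier in ℂ. Then the zero sets Z(F_n) = {z ∈ ℂ : F_n(z) = 0} converge to A in the Hausdorff metric on compact subsets of ℂ: the Hausdorff distance between Z(F_n) and A tends to 0 as n → ∞. -/

import Mathlib

open Complex Filter

/-- `partsCount k n` is the number of partitions of `n` with exactly `k` parts. -/
noncomputable def partsCount (k n : ℕ) : ℕ := Nat.card {p : Nat.Partition n // p.parts.card = k}

/-- The partition polynomial `F_n(x) = ∑_{k=1}^n p_k(n) x^k`. -/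
noncomputable def F (n : ℕ) (x : ℂ) : ℂ := ∑ k ∈ Finset.Icc 1 n, (partsCount k n : ℂ) * x ^ k

/-- The dilogarithm `Li₂(z) = ∑_{n=1}^∞ zⁿ/n²`. -/
noncomputable def dilog (z : ℂ) : ℂ := ∑' n : ℕ, z ^ (n + 1) / ((n : ℂ) + 1) ^ 2

/-- `fk k x = (1/k)·Re √(Li₂(x^k))` with the principal branch square root. -/
noncomputable def fk (k : ℕ) (x : ℂ) : ℝ := (1 / (k : ℝ)) * ((dilog (x ^ k)) ^ (1 / 2 : ℂ)).re

/-- The region `R(1)`. -/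
def R1 : Set ℂ := {x | ‖x‖ < 1 ∧ fk 2 x ≤ fk 1 x ∧ fk 3 x ≤ fk 1 x}

/-- The region `R(2)`. -/
def R2 : Set ℂ := {x | ‖x‖ < 1 ∧ fk 1 x ≤ fk 2 x ∧ fk 3 x ≤ fk 2 x}

/-- The region `R(3)`. -/
def R3 : Set ℂ := {x | ‖x‖ < 1 ∧ fk 1 x ≤ fk 3 x ∧ fk 2 x ≤ fk 3 x}

section PartP1
open Complex Filter
set_option linter.unusedVariables false

/-! ### Moments of `-log` -/

lemma neglog_moment (n : ℕ) : ∫ v in (0:ℝ)..1, (-Real.log v) * v ^ n = 1 / ((n:ℝ) + 1) ^ 2 := by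
  have hn : (n:ℝ) + 1 ≠ 0 := by positivity
  have h := intervalIntegral.integral_eq_sub_of_hasDerivAt_of_le (a := (0:ℝ)) (b := 1)
    (f := fun v => -(v ^ n * (v * Real.log v)) / (n + 1) + v ^ (n + 1) / ((n:ℝ) + 1) ^ 2)
    (f' := fun v => (-Real.log v) * v ^ n) zero_le_one ?_ ?_ ?_
  · rw [h]; simp
  · apply Continuous.continuousOn
    have := Real.continuous_mul_log
    fun_prop
  · intro v hv
    have hv0 : v ≠ 0 := hv.1.ne'
    have h1 := (((hasDerivAt_pow (n+1) v).mul (Real.hasDerivAt_log hv0)).neg.div_const ((n:ℝ)+1)).add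
      ((hasDerivAt_pow (n+1) v).div_const (((n:ℝ)+1)^2))
    convert h1 using 1
    · ext v; simp; ring
    · simp; field_simp; ring
  · exact (intervalIntegral.intervalIntegrable_log'.neg).mul_continuousOn (by fun_prop)

lemma neglog_int {f : ℝ → ℝ} (hf : ContinuousOn f (Set.Icc 0 1)) :
    IntervalIntegrable (fun v => (-Real.log v) * f v) MeasureTheory.volume 0 1 :=
  (intervalIntegral.intervalIntegrable_log'.neg).mul_continuousOn (by simpa using hf)

lemma E_lower {f : ℝ → ℝ} (hf : ContinuousOn f (Set.Icc 0 1)) (c0 c1 c2 : ℝ)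
    (h : ∀ v ∈ Set.Icc (0:ℝ) 1, c0 + c1 * v + c2 * v ^ 2 ≤ f v) :
    c0 + c1 / 4 + c2 / 9 ≤ ∫ v in (0:ℝ)..1, (-Real.log v) * f v := by
  have e : ∫ v in (0:ℝ)..1, (-Real.log v) * (c0 + c1 * v + c2 * v ^ 2) = c0 + c1 / 4 + c2 / 9 := by
    have e1 : ∀ v : ℝ, (-Real.log v) * (c0 + c1 * v + c2 * v ^ 2) =
      c0 * ((-Real.log v) * v ^ 0) + c1 * ((-Real.log v) * v ^ 1) + c2 * ((-Real.log v) * v ^ 2) := by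
      intro v; ring
    simp_rw [e1]
    rw [intervalIntegral.integral_add, intervalIntegral.integral_add]
    · simp_rw [intervalIntegral.integral_const_mul, neglog_moment]; norm_num; ring
    all_goals first
      | exact (neglog_int (by fun_prop)).const_mul _
      | exact ((neglog_int (by fun_prop)).const_mul _).add ((neglog_int (by fun_prop)).const_mul _)
  rw [← e]
  apply intervalIntegral.integral_mono_on zero_le_one (neglog_int (by fun_prop)) (neglog_int hf)
  intro v hv
  apply mul_le_mul_of_nonneg_left (h v hv)
  have := Real.log_nonpos hv.1 hv.2
  linarith

/-! ### Integral representation of the dilogarithm -/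

lemma dilog_integral {x : ℂ} (hx : ‖x‖ < 1) :
    dilog x = ∫ v in (0:ℝ)..1, ((-Real.log v : ℝ) : ℂ) * (x / (1 - v * x)) := by
  have h := intervalIntegral.hasSum_integral_of_dominated_convergence (a := (0:ℝ)) (b := 1)
    (μ := MeasureTheory.volume)
    (F := fun (n:ℕ) (v:ℝ) => ((-Real.log v : ℝ) : ℂ) * (x * (v * x) ^ n))
    (f := fun v => ((-Real.log v : ℝ) : ℂ) * (x / (1 - v * x)))
    (fun n v => (-Real.log v) * ‖x‖ ^ (n+1)) ?_ ?_ ?_ ?_ ?_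
  · rw [← h.tsum_eq, dilog]
    congr 1; ext n
    have : ∀ v : ℝ, ((-Real.log v : ℝ) : ℂ) * (x * (v * x) ^ n) = x ^ (n+1) * (((-Real.log v) * v ^ n : ℝ) : ℂ) := by
      intro v; push_cast; ring
    simp_rw [this]
    rw [intervalIntegral.integral_const_mul, intervalIntegral.integral_ofReal, neglog_moment]
    push_cast; ring
  · intro n
    apply Measurable.aestronglyMeasurable
    fun_prop
  · intro n
    refine Filter.Eventually.of_forall fun v hv => ?_
    rw [Set.uIoc_of_le zero_le_one] at hv
    have h0 : 0 ≤ -Real.log v := by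
      have := Real.log_nonpos hv.1.le hv.2
      linarith
    rw [norm_mul, Complex.norm_real, Real.norm_of_nonneg h0]
    apply mul_le_mul_of_nonneg_left _ h0
    rw [norm_mul, norm_pow, norm_mul, Complex.norm_real, Real.norm_of_nonneg hv.1.le, pow_succ']
    have hx0 := norm_nonneg x
    have hvx : 0 ≤ v * ‖x‖ := mul_nonneg hv.1.le hx0
    gcongr
    nlinarith [hv.2]
  · refine Filter.Eventually.of_forall fun v hv => ?_
    exact ((summable_nat_add_iff 1).2 (summable_geometric_of_lt_one (norm_nonneg x) hx)).mul_left _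
  · simp_rw [tsum_mul_left]
    exact neglog_int (by fun_prop)
  · refine Filter.Eventually.of_forall fun v hv => ?_
    rw [Set.uIoc_of_le zero_le_one] at hv
    apply HasSum.mul_left
    rw [div_eq_mul_inv]
    apply HasSum.mul_left
    apply hasSum_geometric_of_norm_lt_one
    rw [norm_mul, Complex.norm_real, Real.norm_of_nonneg hv.1.le]
    have := norm_nonneg x
    nlinarith [hv.2]

/-- `q v = |1 - v x|²`. -/
noncomputable def qq (x : ℂ) (v : ℝ) : ℝ := 1 - 2 * v * x.re + v ^ 2 * ‖x‖ ^ 2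

lemma abs_re_le' (x : ℂ) : -‖x‖ ≤ x.re ∧ x.re ≤ ‖x‖ := abs_le.1 (Complex.abs_re_le_norm x)

lemma qq_pos {x : ℂ} (hx : ‖x‖ < 1) {v : ℝ} (hv : v ∈ Set.Icc (0:ℝ) 1) : 0 < qq x v := by
  have h0 := norm_nonneg x
  have h1 := abs_re_le' x
  have : (1 - v * ‖x‖)^2 ≤ qq x v := by
    unfold qq; nlinarith [mul_le_mul_of_nonneg_left h1.2 hv.1]
  have h2 : 0 < 1 - v * ‖x‖ := by nlinarith [hv.1, hv.2]
  nlinarith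

lemma qq_cont {x : ℂ} : Continuous (qq x) := by unfold qq; fun_prop

noncomputable def dA (x : ℂ) : ℝ := ∫ v in (0:ℝ)..1, (-Real.log v) * (1 / qq x v)
noncomputable def dB (x : ℂ) : ℝ := ∫ v in (0:ℝ)..1, (-Real.log v) * (v / qq x v)

lemma dA_int {x : ℂ} (hx : ‖x‖ < 1) : ContinuousOn (fun v => 1 / qq x v) (Set.Icc 0 1) :=
  continuousOn_const.div qq_cont.continuousOn (fun v hv => (qq_pos hx hv).ne')
lemma dB_int {x : ℂ} (hx : ‖x‖ < 1) : ContinuousOn (fun v => v / qq x v) (Set.Icc 0 1) :=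
  continuousOn_id.div qq_cont.continuousOn (fun v hv => (qq_pos hx hv).ne')

lemma dAB_lower {x : ℂ} (hx : ‖x‖ < 1) (α β c0 c1 c2 : ℝ)
    (h : ∀ v ∈ Set.Icc (0:ℝ) 1, c0 + c1 * v + c2 * v ^ 2 ≤ (α + β * v) / qq x v) :
    c0 + c1 / 4 + c2 / 9 ≤ α * dA x + β * dB x := by
  have := E_lower (f := fun v => (α + β * v) / qq x v)
    ((by fun_prop : Continuous fun v : ℝ => α + β * v).continuousOn.div qq_cont.continuousOn
      (fun v hv => (qq_pos hx hv).ne')) c0 c1 c2 h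
  refine this.trans_eq ?_
  unfold dA dB
  rw [← intervalIntegral.integral_const_mul, ← intervalIntegral.integral_const_mul,
    ← intervalIntegral.integral_add ((neglog_int (dA_int hx)).const_mul _)
      ((neglog_int (dB_int hx)).const_mul _)]
  congr 1; ext v; ring

lemma dilog_eq {x : ℂ} (hx : ‖x‖ < 1) : dilog x = dA x * x - dB x * ((‖x‖ ^ 2 : ℝ) : ℂ) := by
  rw [dilog_integral hx]
  unfold dA dB
  rw [← intervalIntegral.integral_ofReal, ← intervalIntegral.integral_ofReal,
    ← intervalIntegral.integral_mul_const, ← intervalIntegral.integral_mul_const,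
    ← intervalIntegral.integral_sub]
  · apply intervalIntegral.integral_congr
    intro v hv
    rw [Set.uIcc_of_le zero_le_one] at hv
    have hq := qq_pos hx hv
    have hq' : ((qq x v : ℝ) : ℂ) = (1 - v * x) * (1 - v * (starRingEnd ℂ) x) := by
      have h1 := Complex.mul_conj x
      have h2 := Complex.add_conj x
      rw [Complex.normSq_eq_norm_sq] at h1
      unfold qq; push_cast at h1 h2 ⊢
      linear_combination (v:ℂ) * h2 - (v:ℂ)^2 * h1
    have hne : ((qq x v : ℝ) : ℂ) ≠ 0 := by exact_mod_cast hq.ne'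
    have hne1 : (1 - v * x : ℂ) ≠ 0 := by
      intro h; rw [hq', h, zero_mul] at hne; exact hne rfl
    have hne2 : (1 - v * (starRingEnd ℂ) x : ℂ) ≠ 0 := by
      intro h; rw [hq', h, mul_zero] at hne; exact hne rfl
    have h1 := Complex.mul_conj x
    rw [Complex.normSq_eq_norm_sq] at h1
    rw [← h1]
    simp only [Complex.ofReal_mul, Complex.ofReal_div, hq', Complex.ofReal_one]
    field_simp
  · exact IntervalIntegrable.mul_const ⟨(neglog_int (dA_int hx)).1.ofReal, (neglog_int (dA_int hx)).2.ofReal⟩ _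
  · exact IntervalIntegrable.mul_const ⟨(neglog_int (dB_int hx)).1.ofReal, (neglog_int (dB_int hx)).2.ofReal⟩ _

lemma dilog_norm_le {x : ℂ} (hx : ‖x‖ < 1) (hre : x.re ≤ 0) : ‖dilog x‖ ≤ ‖x‖ := by
  rw [dilog_integral hx]
  have := intervalIntegral.norm_integral_le_of_norm_le (a := (0:ℝ)) (b := 1) (μ := MeasureTheory.volume)
    (f := fun v : ℝ => ((-Real.log v : ℝ) : ℂ) * (x / (1 - v * x)))
    (g := fun v => ‖x‖ * ((-Real.log v) * v ^ 0)) zero_le_one ?_ ((neglog_int (by fun_prop)).const_mul _)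
  · rw [intervalIntegral.integral_const_mul, neglog_moment] at this
    simpa using this
  · refine Filter.Eventually.of_forall fun v hv => ?_
    have h0 : 0 ≤ -Real.log v := by
      have := Real.log_nonpos hv.1.le hv.2
      linarith
    rw [norm_mul, Complex.norm_real, Real.norm_of_nonneg h0, norm_div]
    have h1 : 1 ≤ ‖(1 - v * x : ℂ)‖ := by
      refine le_trans ?_ (Complex.re_le_norm _)
      simp; nlinarith [hv.1]
    have : ‖x‖ / ‖(1 - v * x : ℂ)‖ ≤ ‖x‖ := div_le_self (norm_nonneg _) h1
    nlinarith

end PartP1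

section PartP1b
open Complex Filter
set_option linter.unusedVariables false

lemma dilog_re {x : ℂ} (hx : ‖x‖ < 1) : (dilog x).re = x.re * dA x - ‖x‖ ^ 2 * dB x := by
  rw [dilog_eq hx]
  simp only [Complex.sub_re, Complex.re_ofReal_mul, Complex.ofReal_re]; ring

lemma dilog_im {x : ℂ} (hx : ‖x‖ < 1) : (dilog x).im = dA x * x.im := by
  rw [dilog_eq hx]
  simp only [Complex.sub_im, Complex.im_ofReal_mul, Complex.ofReal_im]; ring

lemma re_sq_add_im_sq (x : ℂ) : x.re ^ 2 + x.im ^ 2 = ‖x‖ ^ 2 := by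
  rw [← Complex.normSq_eq_norm_sq, Complex.normSq_apply]; ring

lemma dA_pos {x : ℂ} (hx : ‖x‖ < 1) : 0 < dA x := by
  have := dAB_lower hx 1 0 (1/4) 0 0 (by
    intro v hv
    rw [le_div_iff₀ (qq_pos hx hv)]
    have := abs_re_le' x
    have h0 := norm_nonneg x
    have h2 : v * ‖x‖ ≤ 1 := by nlinarith [hv.1, hv.2]
    have h3 : 0 ≤ v * ‖x‖ := mul_nonneg hv.1 h0
    have h4 : v * x.re ≥ -1 := by nlinarith [hv.1, hv.2]
    unfold qq
    nlinarith)
  linarith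

lemma dB_nonneg {x : ℂ} (hx : ‖x‖ < 1) : 0 ≤ dB x := by
  have := dAB_lower hx 0 1 0 0 0 (by
    intro v hv
    have h1 := qq_pos hx hv
    have := hv.1
    simp; positivity)
  linarith

lemma dAB_abs {x : ℂ} (hx : ‖x‖ < 1) : 0.96 - 0.16 * ‖x‖ ≤ dA x - x.re * dB x := by
  have := dAB_lower hx 1 (-x.re) 0.96 (-0.64 * ‖x‖) 0 (by
    intro v hv
    have hq := qq_pos hx hv
    have h1 := abs_re_le' x
    have h0 := norm_nonneg x
    have h2 : v * ‖x‖ ≤ 1 := by nlinarith [hv.1, hv.2]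
    have h3 : 0 ≤ v * ‖x‖ := mul_nonneg hv.1 h0
    have a1 : 1 / (1 + v * ‖x‖) ≤ (1 + -x.re * v) / qq x v := by
      rw [div_le_div_iff₀ (by positivity) hq]
      unfold qq
      have : 0 ≤ v * (‖x‖ + x.re) * (1 - v * ‖x‖) :=
        mul_nonneg (mul_nonneg hv.1 (by linarith)) (by linarith)
      nlinarith
    refine le_trans ?_ a1
    rw [le_div_iff₀ (by positivity)]
    nlinarith [sq_nonneg (v * ‖x‖ - 1/4)])
  linarith

lemma dilog_norm_ge {x : ℂ} (hx : ‖x‖ < 1) : 0.8 * ‖x‖ ≤ ‖dilog x‖ := by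
  rcases eq_or_ne x 0 with rfl | h0
  · simp
  have hr : 0 < ‖x‖ := norm_pos_iff.2 h0
  have h1 : ‖x‖ ^ 2 * (dA x - x.re * dB x) ≤ ‖dilog x‖ * ‖x‖ := by
    have := Complex.re_le_norm (dilog x * (starRingEnd ℂ) x)
    rw [norm_mul, Complex.norm_conj, Complex.mul_re, Complex.conj_re, Complex.conj_im,
      dilog_re hx, dilog_im hx] at this
    have e := re_sq_add_im_sq x
    have : ‖x‖ ^ 2 * (dA x - x.re * dB x) = (x.re * dA x - ‖x‖ ^ 2 * dB x) * x.re - dA x * x.im * -x.im := by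
      linear_combination (-dA x) * e
    linarith
  have h2 := dAB_abs hx
  have h3 : 0.8 * ‖x‖ ^ 2 ≤ ‖x‖ ^ 2 * (dA x - x.re * dB x) := by
    rw [mul_comm]; gcongr; linarith
  have : 0.8 * ‖x‖ * ‖x‖ ≤ ‖dilog x‖ * ‖x‖ := by nlinarith
  exact le_of_mul_le_mul_right this hr

lemma dilog_re_ge {x : ℂ} (hx : ‖x‖ < 1) (hre : 0 ≤ x.re) : -(‖x‖ ^ 2 / 4) ≤ (dilog x).re := by
  rw [dilog_re hx]
  have := dAB_lower hx x.re (-‖x‖^2) 0 (-‖x‖^2) 0 (by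
    intro v hv
    have hq := qq_pos hx hv
    have h1 := abs_re_le' x
    have h0 := norm_nonneg x
    have h2 : v * ‖x‖ ≤ 1 := by nlinarith [hv.1, hv.2]
    have h3 : 0 ≤ v * ‖x‖ := mul_nonneg hv.1 h0
    rw [le_div_iff₀ hq]
    unfold qq
    have key : 0 ≤ x.re * (1 - 2 * (v * ‖x‖)^2) + ‖x‖ * (v * ‖x‖)^3 := by
      rcases le_total 0 (1 - 2 * (v * ‖x‖)^2) with h | h
      · positivity
      · have : 0 ≤ ‖x‖ * ((1 - v * ‖x‖) * (1 + v * ‖x‖ - (v * ‖x‖)^2)) := by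
          apply mul_nonneg h0; apply mul_nonneg <;> nlinarith
        nlinarith [mul_le_mul_of_nonpos_right h1.2 h]
    nlinarith)
  linarith

lemma dilog_re_ge' {x : ℂ} (hx : ‖x‖ < 1) (hre : 0.7 * ‖x‖ ≤ x.re) : ‖x‖ / 4 ≤ (dilog x).re := by
  rw [dilog_re hx]
  have h0 := norm_nonneg x
  have := dAB_lower hx x.re (-‖x‖^2) (‖x‖/2) (-‖x‖^2) 0 (by
    intro v hv
    have hq := qq_pos hx hv
    have h1 := abs_re_le' x
    have h2 : v * ‖x‖ ≤ 1 := by nlinarith [hv.1, hv.2]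
    have h3 : 0 ≤ v * ‖x‖ := mul_nonneg hv.1 h0
    rw [le_div_iff₀ hq]
    unfold qq
    have k1 : 0 ≤ (x.re - ‖x‖/2) + (2 * x.re - ‖x‖/2) * (v * ‖x‖) - ‖x‖ * (v * ‖x‖)^2 := by
      have : ‖x‖ * (v * ‖x‖)^2 ≤ ‖x‖ * (v * ‖x‖) := by
        apply mul_le_mul_of_nonneg_left _ h0; nlinarith
      have h5 : (2 * x.re - 3/2 *‖x‖) * (v * ‖x‖) ≥ -(0.1 * ‖x‖) * 1 := by nlinarith
      nlinarith
    have k2 := mul_nonneg k1 (sub_nonneg.2 h2)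
    nlinarith)
  nlinarith

/-- `gg z = |Li₂ z| + Re Li₂ z`. -/
noncomputable def gg (z : ℂ) : ℝ := ‖dilog z‖ + (dilog z).re

lemma gg_right {x : ℂ} (hx : ‖x‖ < 1) (hre : 0 ≤ x.re) : 0.55 * ‖x‖ ≤ gg x := by
  have h1 := dilog_norm_ge hx
  have h2 := dilog_re_ge hx hre
  have h0 := norm_nonneg x
  unfold gg; nlinarith

lemma gg_right' {x : ℂ} (hx : ‖x‖ < 1) (hre : 0.7 * ‖x‖ ≤ x.re) : 1.05 * ‖x‖ ≤ gg x := by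
  have h1 := dilog_norm_ge hx
  have h2 := dilog_re_ge' hx hre
  unfold gg; linarith

lemma gg_left_le {x : ℂ} (hx : ‖x‖ < 1) (hre : x.re ≤ 0) : gg x ≤ ‖x‖ := by
  have h1 := dilog_norm_le hx hre
  have h2 : (dilog x).re ≤ 0 := by
    rw [dilog_re hx]
    have := dA_pos hx; have := dB_nonneg hx
    nlinarith [sq_nonneg ‖x‖, mul_nonneg (sq_nonneg ‖x‖) (dB_nonneg hx), mul_nonneg (neg_nonneg.2 hre) (dA_pos hx).le]
  unfold gg; linarith

lemma gg_le {x : ℂ} (hx : ‖x‖ < 1) : gg x ≤ 2 * (1.645 * ‖x‖) := by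
  have : ‖dilog x‖ ≤ 1.645 * ‖x‖ := by
    have hz : HasSum (fun n : ℕ => ‖x‖ * (1 / ((n : ℝ) + 1) ^ 2)) (‖x‖ * (Real.pi ^ 2 / 6)) := by
      have := (hasSum_nat_add_iff' 1).2 hasSum_zeta_two
      simp at this
      simpa using this.mul_left ‖x‖
    refine (tsum_of_norm_bounded hz ?_).trans ?_
    · intro n
      rw [norm_div, norm_pow, norm_pow]
      have : ‖((n:ℂ) + 1)‖ = (n:ℝ) + 1 := by
        have := Complex.norm_natCast (n+1); push_cast at this; exact this
      rw [this, mul_one_div]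
      gcongr
      exact pow_le_of_le_one (norm_nonneg _) hx.le (by simp)
    · rw [mul_comm]
      gcongr
      have := Real.pi_lt_d4; have := Real.pi_pos; nlinarith
  have h2 := (abs_le.1 (Complex.abs_re_le_norm (dilog x))).2
  unfold gg; linarith

lemma dA_ge_left {x : ℂ} (hx : ‖x‖ < 1) (hre : x.re ≤ 0) : 1 / (1 - x.re / 2 + ‖x‖^2/9) ≤ dA x := by
  set Q := 1 - x.re / 2 + ‖x‖^2/9 with hQ
  have hQ0 : 0 < Q := by have := sq_nonneg ‖x‖; linarith
  have := dAB_lower hx 1 0 (2/Q - 1/Q^2) (2 * x.re/Q^2) (-‖x‖^2/Q^2) (by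
    intro v hv
    have hq := qq_pos hx hv
    have e : 2/Q - 1/Q^2 + 2 * x.re/Q^2 * v + -‖x‖^2/Q^2 * v^2 = (2 * Q - qq x v) / Q^2 := by
      unfold qq; field_simp; ring
    rw [e, div_le_div_iff₀ (by positivity) hq]
    nlinarith [sq_nonneg (Q - qq x v)])
  have e : 2/Q - 1/Q^2 + 2 * x.re/Q^2/4 + -‖x‖^2/Q^2/9 = 1/Q := by
    field_simp; linarith
  linarith

lemma dB_le_left {x : ℂ} (hx : ‖x‖ < 1) (hre : x.re ≤ 0) : dB x ≤ dA x / 4 := by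
  have hq4 := qq_pos hx (v := 1/4) ⟨by norm_num, by norm_num⟩
  have := dAB_lower hx (1/4) (-1) (1/4/qq x (1/4)) (-1/qq x (1/4)) 0 (by
    intro v hv
    have hq := qq_pos hx hv
    have e : 1/4/qq x (1/4) + -1/qq x (1/4) * v + 0 * v^2 = (1/4 - v) / qq x (1/4) := by
      field_simp; ring
    rw [e, div_le_div_iff₀ hq4 hq]
    have : 0 ≤ (v - 1/4) * (qq x v - qq x (1/4)) := by
      have : qq x v - qq x (1/4) = (v - 1/4) * (-2 * x.re + (v + 1/4) * ‖x‖^2) := by unfold qq; ring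
      rw [this, ← mul_assoc]
      have := hv.1
      have : 0 ≤ -2 * x.re := by linarith
      exact mul_nonneg (mul_self_nonneg _) (by positivity)
    nlinarith)
  have e : 1/4/qq x (1/4) + -1/qq x (1/4)/4 + 0/9 = 0 := by ring
  linarith

/-- General lower bound on the left half plane. -/
lemma gg_left {x : ℂ} (hx : ‖x‖ < 1) (hx0 : x ≠ 0) (hre : x.re ≤ 0) (C D : ℝ) (hC : 0 ≤ C) (hD : 0 ≤ D)
    (hxC : -x.re ≤ C * ‖x‖) (hCD : 2 * D * (C + 1/4) + D ^ 2 ≤ 1 - C ^ 2) :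
    D / (1 + C/2 + 1/9) * ‖x‖ ≤ gg x := by
  have hr : 0 < ‖x‖ := norm_pos_iff.2 hx0
  have ha := dA_ge_left hx hre
  have hb := dB_le_left hx hre
  have ha0 := dA_pos hx
  have hb0 := dB_nonneg hx
  have h1 : 1 / (1 + C/2 + 1/9) ≤ dA x := by
    refine le_trans ?_ ha
    apply one_div_le_one_div_of_le
    · have := sq_nonneg ‖x‖; linarith
    · have : C * ‖x‖ ≤ C := by nlinarith
      have : ‖x‖^2 ≤ 1 := by nlinarith
      linarith
  set a := dA x
  set r := ‖x‖
  set p := a * r * (C + 1/4) with hp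
  have hp0 : 0 ≤ p := by positivity
  have hre2 : -(dilog x).re ≤ p := by
    rw [dilog_re hx]
    have e1 : a * (-x.re) ≤ a * (C * r) := mul_le_mul_of_nonneg_left hxC ha0.le
    have e2 : r ^ 2 * dB x ≤ r ^ 2 * (a/4) := mul_le_mul_of_nonneg_left hb (by positivity)
    have e3 : r^2 * (a/4) ≤ r * (a / 4) := by
      apply mul_le_mul_of_nonneg_right _ (by positivity); nlinarith
    rw [hp]; nlinarith
  have him : (a * r)^2 * (1 - C^2) ≤ (dilog x).im ^ 2 := by
    rw [dilog_im hx, mul_pow, mul_pow]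
    have e := re_sq_add_im_sq x
    have : x.re^2 ≤ (C*r)^2 := by
      have := abs_le_abs_of_nonneg (neg_nonneg.2 hre) hxC
      nlinarith
    have : r^2 * (1 - C^2) ≤ x.im^2 := by nlinarith
    nlinarith [mul_le_mul_of_nonneg_left this (sq_nonneg a)]
  have hn : ‖dilog x‖^2 = (dilog x).re^2 + (dilog x).im^2 := (re_sq_add_im_sq _).symm
  set m := ‖dilog x‖
  set t := (dilog x).re
  have hm : 0 ≤ m := norm_nonneg _
  -- (m + t) ≥ a r D
  have goal2 : a * r * D ≤ m + t := by
    by_contra hlt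
    push Not at hlt
    have e1 : m < a * r * D + (-t) := by linarith
    have e2 : m^2 < (a * r * D - t)^2 := by
      apply pow_lt_pow_left₀ _ hm (by norm_num); linarith
    have e3 : 0 ≤ a * r * D := by positivity
    have e4 : (a*r*D) * (-t) ≤ (a * r * D) * p := mul_le_mul_of_nonneg_left hre2 e3
    have e5 : (a * r)^2 * (2 * D * (C + 1/4) + D ^ 2) ≤ (a*r)^2 * (1 - C^2) :=
      mul_le_mul_of_nonneg_left hCD (by positivity)
    rw [hp] at e4
    nlinarith
  unfold gg
  refine le_trans ?_ goal2
  have : D / (1 + C/2 + 1/9) * r = 1 / (1 + C/2 + 1/9) * r * D := by ring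
  rw [this]
  gcongr

end PartP1b

section PartP1c
open Complex Filter
set_option linter.unusedVariables false

lemma gg_nonneg (z : ℂ) : 0 ≤ gg z := by
  have := (abs_le.1 (Complex.abs_re_le_norm (dilog z))).1
  unfold gg; linarith

lemma fk_eq (k : ℕ) (x : ℂ) : fk k x = (1 / (k:ℝ)) * √(gg (x ^ k) / 2) := by
  unfold fk gg
  rw [one_div (2:ℂ), Complex.cpow_inv_two_re]

lemma fk_nonneg (k : ℕ) (x : ℂ) : 0 ≤ fk k x := by rw [fk_eq]; positivity

lemma fk_sq (k : ℕ) (x : ℂ) : fk k x ^ 2 = gg (x ^ k) / (2 * k ^ 2) := by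
  rw [fk_eq, mul_pow, Real.sq_sqrt (by have := gg_nonneg (x^k); positivity)]
  field_simp

noncomputable def MM (x : ℂ) : ℝ := max (fk 1 x) (max (fk 2 x) (fk 3 x))

lemma dilog_zero : dilog 0 = 0 := by simp [dilog]

lemma fk_zero (k : ℕ) : fk k 0 = 0 := by
  rcases eq_or_ne k 0 with rfl | h
  · rw [fk_eq]; simp
  · rw [fk_eq, zero_pow h]; simp [gg, dilog_zero]

/-- Re(x²) in terms of Re x. -/
lemma sq_re' (x : ℂ) : (x ^ 2).re = 2 * x.re ^ 2 - ‖x‖ ^ 2 := by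
  rw [← re_sq_add_im_sq x, sq, Complex.mul_re]; ring

lemma norm_pow_lt_one' {x : ℂ} (hx : ‖x‖ < 1) {k : ℕ} (hk : k ≠ 0) : ‖x ^ k‖ < 1 := by
  rw [norm_pow]; exact pow_lt_one₀ (norm_nonneg _) hx hk

lemma fk_lt_of_sq {k j : ℕ} {x : ℂ} (h : fk k x ^ 2 < fk j x ^ 2) : fk k x < fk j x :=
  lt_of_pow_lt_pow_left₀ 2 (fk_nonneg j x) h

lemma fk_sq_le {x : ℂ} (hx : ‖x‖ < 1) {k j : ℕ} (hj : j ≠ 0) (hk : j ≤ k) :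
    fk k x ^ 2 ≤ 1.645 * ‖x‖ ^ j / j ^ 2 := by
  have hk0 : k ≠ 0 := by omega
  rw [fk_sq]
  have h1 := gg_le (norm_pow_lt_one' hx hk0)
  rw [norm_pow] at h1
  have h2 : ‖x‖ ^ k ≤ ‖x‖ ^ j := pow_le_pow_of_le_one (norm_nonneg _) hx.le hk
  have hj' : (0:ℝ) < j := by positivity
  have hjk : (j:ℝ) ≤ k := by exact_mod_cast hk
  calc gg (x^k) / (2 * k^2) ≤ (2 * (1.645 * ‖x‖^j)) / (2 * k^2) := by gcongr; linarith
    _ ≤ (2 * (1.645 * ‖x‖^j)) / (2 * j^2) := by gcongr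
    _ = _ := by field_simp

lemma fk4_sq_le {x : ℂ} (hx : ‖x‖ < 1) (h4 : (x^4).re ≤ 0) : fk 4 x ^ 2 ≤ ‖x‖^4 / 32 := by
  rw [fk_sq]
  have := gg_left_le (norm_pow_lt_one' hx (k := 4) (by norm_num)) h4
  rw [norm_pow] at this
  push_cast; linarith

/-- Domination: for `k ≥ 4`, `f_k` is strictly below `max f_1 f_2` -/
lemma fk_lt_aux {x : ℂ} (hx : ‖x‖ < 1) (hx0 : x ≠ 0) :
    (0 < fk 1 x ∧ ∀ k ≥ 4, fk k x < fk 1 x) ∨ (0 < fk 2 x ∧ ∀ k ≥ 4, fk k x < fk 2 x) := by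
  have hr : 0 < ‖x‖ := norm_pos_iff.2 hx0
  set r := ‖x‖ with hrdef
  have hr4 : r ^ 4 ≤ r := pow_le_of_le_one hr.le hx.le (by norm_num)
  have hr5 : r ^ 5 ≤ r := pow_le_of_le_one hr.le hx.le (by norm_num)
  have hr52 : r ^ 5 ≤ r ^ 2 := pow_le_pow_of_le_one hr.le hx.le (by norm_num)
  have hr42 : r ^ 4 ≤ r ^ 2 := pow_le_pow_of_le_one hr.le hx.le (by norm_num)
  have f1 : fk 1 x ^ 2 = gg x / 2 := by rw [fk_sq]; simp
  have f2 : fk 2 x ^ 2 = gg (x^2) / 8 := by rw [fk_sq]; norm_num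
  have pos_of : ∀ j : ℕ, 0 < fk j x ^ 2 → 0 < fk j x := fun j h =>
    lt_of_le_of_ne (fk_nonneg j x) (fun h' => by rw [← h'] at h; simp at h)
  rcases le_or_gt 0 x.re with hre | hre
  · left
    have h := gg_right hx hre
    refine ⟨pos_of 1 (by rw [f1]; nlinarith), fun k hk => fk_lt_of_sq ?_⟩
    have h4 := fk_sq_le hx (by norm_num) hk
    rw [f1]; push_cast at h4
    norm_num at h4 h ⊢
    linarith
  · have hr2 := sq_re' x
    have hr4' := sq_re' (x^2)
    have hx2n : ‖x^2‖ = r^2 := norm_pow x 2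
    rw [← pow_mul, hx2n] at hr4'
    norm_num at hr4'
    rcases le_or_gt (x^2).re 0 with hre2 | hre2
    · left
      have hc : x.re ^ 2 ≤ r^2/2 := by linarith
      have hcc : -x.re ≤ 0.7072 * r := by
        by_contra h; push Not at h; nlinarith
      have h := gg_left hx hx0 hre.le 0.7072 0.2326 (by norm_num) (by norm_num) hcc (by norm_num)
      have h' : 0.158 * r ≤ gg x := le_trans (by gcongr; norm_num) h
      refine ⟨pos_of 1 (by rw [f1]; nlinarith), fun k hk => fk_lt_of_sq ?_⟩
      rw [f1]
      rcases eq_or_lt_of_le hk with h4 | h4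
      · subst h4
        rcases le_or_gt (x^4).re 0 with hx4 | hx4
        · have := fk4_sq_le hx hx4
          rw [← hrdef] at this
          norm_num at h' ⊢
          linarith
        · have h5 : (x^2).re ≤ -(0.707 * r^2) := by
            by_contra h; push Not at h
            have : 0 < r^2 := by positivity
            nlinarith
          have hcc : -x.re ≤ 0.3829 * r := by
            by_contra h; push Not at h; nlinarith
          have h := gg_left hx hx0 hre.le 0.3829 0.486 (by norm_num) (by norm_num) hcc (by norm_num)
          have h' : 0.37 * r ≤ gg x := le_trans (by gcongr; norm_num) h
          have h4 := fk_sq_le hx (k := 4) (j := 4) (by norm_num) le_rfl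
          push_cast at h4
          norm_num at h4 h' ⊢
          linarith
      · have h4 := fk_sq_le hx (k := k) (j := 5) (by norm_num) (by omega)
        push_cast at h4
        norm_num at h4 h' ⊢
        linarith
    · right
      have hz : ‖x^2‖ < 1 := norm_pow_lt_one' hx (by norm_num)
      have h := gg_right hz hre2.le
      rw [hx2n] at h
      refine ⟨pos_of 2 (by rw [f2]; nlinarith), fun k hk => fk_lt_of_sq ?_⟩
      rw [f2]
      rcases eq_or_lt_of_le hk with h4 | h4
      · subst h4
        have hr20 : 0 < r^2 := by positivity
        rcases le_or_gt (x^4).re 0 with hx4 | hx4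
        · have := fk4_sq_le hx hx4
          rw [← hrdef] at this
          norm_num at h ⊢
          nlinarith
        · have h5 : 0.7 * ‖x^2‖ ≤ (x^2).re := by
            rw [hx2n]
            by_contra h; push Not at h
            nlinarith
          have h := gg_right' hz h5
          rw [hx2n] at h
          have h4 := fk_sq_le hx (k := 4) (j := 4) (by norm_num) le_rfl
          push_cast at h4
          norm_num at h4 h ⊢
          linarith
      · have h4 := fk_sq_le hx (k := k) (j := 5) (by norm_num) (by omega)
        have hr20 : 0 < r^2 := by positivity
        push_cast at h4
        norm_num at h4 h ⊢
        linarith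

lemma MM_pos {x : ℂ} (hx : ‖x‖ < 1) (hx0 : x ≠ 0) : 0 < MM x := by
  rcases fk_lt_aux hx hx0 with h | h
  · exact lt_max_of_lt_left h.1
  · exact lt_max_of_lt_right (lt_max_of_lt_left h.1)

lemma fk_lt_MM {x : ℂ} (hx : ‖x‖ < 1) (hx0 : x ≠ 0) {k : ℕ} (hk : 4 ≤ k) : fk k x < MM x := by
  rcases fk_lt_aux hx hx0 with h | h
  · exact lt_max_of_lt_left (h.2 k hk)
  · exact lt_max_of_lt_right (lt_max_of_lt_left (h.2 k hk))

lemma fk_le_MM {x : ℂ} (hx : ‖x‖ < 1) (k : ℕ) : fk k x ≤ MM x := by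
  rcases eq_or_ne x 0 with rfl | hx0
  · simp [fk_zero, MM]
  match k with
  | 0 => rw [fk_eq]; simpa using (MM_pos hx hx0).le
  | 1 => exact le_max_left _ _
  | 2 => exact le_max_of_le_right (le_max_left _ _)
  | 3 => exact le_max_of_le_right (le_max_right _ _)
  | k+4 => exact (fk_lt_MM hx hx0 (by omega)).le

lemma dilog_slit {z : ℂ} (hz : ‖z‖ < 1) (h : z ∈ Complex.slitPlane) : dilog z ∈ Complex.slitPlane := by
  rw [Complex.mem_slitPlane_iff] at h ⊢
  by_cases him : z.im = 0
  · left
    rcases h with h | h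
    · rw [dilog_re hz]
      have e := re_sq_add_im_sq z
      rw [him] at e
      have := dAB_abs hz
      rw [← e]
      have : 0 < z.re * (dA z - z.re * dB z) := mul_pos h (by linarith)
      nlinarith
    · exact absurd him h
  · right
    rw [dilog_im hz]
    exact mul_ne_zero (dA_pos hz).ne' him

/-- negative reals give `gg = 0` -/
lemma gg_neg {z : ℂ} (hz : ‖z‖ < 1) (h : z ∉ Complex.slitPlane) : gg z = 0 := by
  rw [Complex.mem_slitPlane_iff] at h
  push Not at h
  have h1 : (dilog z).im = 0 := by rw [dilog_im hz, h.2, mul_zero]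
  have h2 : (dilog z).re ≤ 0 := by
    rw [dilog_re hz]
    nlinarith [mul_nonneg (sq_nonneg ‖z‖) (dB_nonneg hz), mul_nonneg (neg_nonneg.2 h.1) (dA_pos hz).le]
  unfold gg
  have : dilog z = ((dilog z).re : ℂ) := by
    apply Complex.ext <;> simp [h1]
  have hn : ‖dilog z‖ = -(dilog z).re := by
    conv_lhs => rw [this]
    rw [Complex.norm_real, Real.norm_of_nonpos h2]
  rw [hn]; ring

lemma pow_slit_of_fk_pos {k : ℕ} (hk : k ≠ 0) {x : ℂ} (hx : ‖x‖ < 1) (h : 0 < fk k x) :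
    x ^ k ∈ Complex.slitPlane := by
  by_contra hn
  rw [fk_eq, gg_neg (norm_pow_lt_one' hx hk) hn] at h
  simp at h

lemma im_ne_zero_of_f3 {x : ℂ} (hx : ‖x‖ < 1) (h : fk 1 x < fk 3 x) : x.im ≠ 0 := by
  intro him
  have h3 := pow_slit_of_fk_pos (by norm_num) hx ((fk_nonneg 1 x).trans_lt h)
  have hxr : x = (x.re : ℂ) := by apply Complex.ext <;> simp [him]
  have hpos : 0 < x.re := by
    rw [hxr, ← Complex.ofReal_pow, Complex.ofReal_mem_slitPlane] at h3
    by_contra hn; push Not at hn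
    have : x.re ^ 3 = x.re * x.re^2 := by ring
    nlinarith [mul_nonneg (neg_nonneg.2 hn) (sq_nonneg x.re)]
  have h1 := gg_right' hx (by
    rw [hxr, Complex.norm_real, Real.norm_of_nonneg hpos.le]; simp; linarith)
  have h2 := fk_sq_le hx (k := 3) (j := 3) (by norm_num) le_rfl
  have hsq : fk 1 x ^2 < fk 3 x ^ 2 := pow_lt_pow_left₀ h (fk_nonneg 1 x) (by norm_num)
  have f1 : fk 1 x ^ 2 = gg x / 2 := by rw [fk_sq]; simp
  have : ‖x‖^3 ≤ ‖x‖ := pow_le_of_le_one (norm_nonneg _) hx.le (by norm_num)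
  push_cast at h2
  norm_num at h1 h2
  have := norm_nonneg x
  linarith

end PartP1c

section PartP1d
open Complex Filter Topology
set_option linter.unusedVariables false

lemma dilog_diffOn : DifferentiableOn ℂ dilog (Metric.ball 0 1) := by
  have hs : Summable (fun n : ℕ => 1 / ((n : ℝ) + 1) ^ 2) := by
    have := (hasSum_nat_add_iff' 1).2 hasSum_zeta_two
    simpa using this.summable
  apply differentiableOn_tsum_of_summable_norm hs
  · intro n; fun_prop
  · exact Metric.isOpen_ball
  · intro n z hz
    rw [mem_ball_zero_iff] at hz
    have : ‖((n:ℂ) + 1)‖ = (n:ℝ) + 1 := by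
      have := Complex.norm_natCast (n+1); push_cast at this; exact this
    rw [norm_div, norm_pow, norm_pow, this]
    gcongr
    exact pow_le_one₀ (norm_nonneg _) hz.le

lemma dilog_diffAt {z : ℂ} (hz : ‖z‖ < 1) : DifferentiableAt ℂ dilog z :=
  dilog_diffOn.differentiableAt (Metric.isOpen_ball.mem_nhds (by simpa using hz))

lemma dilog_pow_diffAt {k : ℕ} (hk : k ≠ 0) {z : ℂ} (hz : ‖z‖ < 1) :
    DifferentiableAt ℂ (fun x => dilog (x ^ k)) z :=
  DifferentiableAt.comp (f := fun x : ℂ => x ^ k) z (dilog_diffAt (norm_pow_lt_one' hz hk)) (by fun_prop)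

noncomputable def Phi (k : ℕ) (x : ℂ) : ℂ := (1 / (k : ℂ)) * (dilog (x ^ k)) ^ (1 / 2 : ℂ)

lemma Phi_re (k : ℕ) (x : ℂ) : (Phi k x).re = fk k x := by
  unfold Phi fk
  have : (1 / (k:ℂ)) = ((1 / (k:ℝ) : ℝ) : ℂ) := by push_cast; rfl
  rw [this, Complex.re_ofReal_mul]

lemma Phi_sq (k : ℕ) (x : ℂ) : (Phi k x) ^ 2 = dilog (x ^ k) / k ^ 2 := by
  unfold Phi
  rw [mul_pow, ← Complex.cpow_mul_nat]
  norm_num; field_simp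

lemma Phi_diffAt {k : ℕ} (hk : k ≠ 0) {x : ℂ} (hx : ‖x‖ < 1) (h : x ^ k ∈ Complex.slitPlane) :
    DifferentiableAt ℂ (Phi k) x := by
  unfold Phi
  apply DifferentiableAt.const_mul
  exact (dilog_pow_diffAt hk hx).cpow (by fun_prop) (dilog_slit (norm_pow_lt_one' hx hk) h)

lemma fk_contAt {k : ℕ} (hk : k ≠ 0) {x : ℂ} (hx : ‖x‖ < 1) : ContinuousAt (fk k) x := by
  have h1 : ContinuousAt (fun x => dilog (x ^ k)) x := (dilog_pow_diffAt hk hx).continuousAt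
  have : fk k = fun x => (1 / (k:ℝ)) * √((‖dilog (x ^ k)‖ + (dilog (x^k)).re) / 2) := by
    ext x; rw [fk_eq]; rfl
  rw [this]
  have h2 : ContinuousAt (fun x => (dilog (x^k)).re) x := Complex.continuous_re.continuousAt.comp h1
  exact continuousAt_const.mul (Real.continuous_sqrt.continuousAt.comp ((h1.norm.add h2).div_const 2))

lemma MM_contAt {x : ℂ} (hx : ‖x‖ < 1) : ContinuousAt MM x :=
  (fk_contAt (by norm_num) hx).max ((fk_contAt (by norm_num) hx).max (fk_contAt (by norm_num) hx))

lemma ball_ev {x : ℂ} (hx : ‖x‖ < 1) : ∀ᶠ y in 𝓝 x, ‖y‖ < 1 :=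
  (continuous_norm.tendsto x).eventually_lt_const hx

end PartP1d

section PartP2
open Complex Filter Topology
set_option linter.unusedVariables false

section GenFun
open PowerSeries
open scoped PowerSeries.WithPiTopology

variable {K : Type*} [RCLike K]

/-- weighted partition sum -/
noncomputable def pa (c : ℕ → K) (n : ℕ) : K := ∑ p : n.Partition, (p.parts.map c).prod

/-- geometric factor -/
noncomputable def GG (a : K) (m : ℕ) : K⟦X⟧ := 1 + ∑' j : ℕ, a ^ (j+1) • (X : K⟦X⟧) ^ (m * (j+1))

lemma coeff_gen (c : ℕ → K) (n : ℕ) :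
    (Nat.Partition.genFun (fun i j => c i ^ j)).coeff n = pa c n := by
  rw [Nat.Partition.coeff_genFun, pa]
  refine Finset.sum_congr rfl fun p _ => ?_
  rw [Finset.prod_multiset_map_count, Finsupp.prod, Multiset.toFinsupp_support]
  rfl

lemma hasProd_GG (c : ℕ → K) :
    HasProd (fun i => GG (c (i+1)) (i+1)) (Nat.Partition.genFun (fun i j => c i ^ j)) :=
  Nat.Partition.hasProd_genFun (fun i j => c i ^ j)

lemma GG_zero (m : ℕ) : GG (0:K) m = 1 := by simp [GG]

lemma coeff_GG (a : K) {m : ℕ} (hm : m ≠ 0) (n : ℕ) :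
    (GG a m).coeff n = if m ∣ n then a ^ (n / m) else 0 := by
  obtain ⟨m, rfl⟩ := Nat.exists_eq_add_one_of_ne_zero hm
  have hs := Nat.Partition.summable_genFun_term (R := K) (fun _ j => a ^ j) m
  rw [GG, map_add, hs.map_tsum _ (WithPiTopology.continuous_coeff _ _)]
  simp only [map_smul, coeff_X_pow, smul_eq_mul, coeff_one, mul_ite, mul_one, mul_zero]
  rcases Nat.eq_zero_or_pos n with rfl | hn
  · simp
  · rw [if_neg hn.ne', zero_add]
    split_ifs with h
    · obtain ⟨j, rfl⟩ := h
      have hj : j ≠ 0 := by rintro rfl; simp at hn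
      obtain ⟨j, rfl⟩ := Nat.exists_eq_add_one_of_ne_zero hj
      rw [tsum_eq_single j]
      · simp
      · intro j' hj'
        rw [if_neg]
        intro h
        have := Nat.eq_of_mul_eq_mul_left (by omega) h
        omega
    · refine (tsum_congr fun j => ?_).trans tsum_zero
      rw [if_neg]
      rintro rfl
      exact h (dvd_mul_right _ _)

/-- evaluation of a power series with absolute convergence -/
def EvTo (φ : K⟦X⟧) (v s : K) : Prop :=
  Summable (fun n => ‖φ.coeff n * v ^ n‖) ∧ ∑' n, φ.coeff n * v ^ n = s

lemma EvTo.mul {φ ψ : K⟦X⟧} {v s t : K} (h : EvTo φ v s) (h' : EvTo ψ v t) : EvTo (φ * ψ) v (s * t) := by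
  have e : ∀ n, (φ * ψ).coeff n * v ^ n =
      ∑ kl ∈ Finset.HasAntidiagonal.antidiagonal n, (φ.coeff kl.1 * v ^ kl.1) * (ψ.coeff kl.2 * v ^ kl.2) := by
    intro n
    rw [coeff_mul, Finset.sum_mul]
    refine Finset.sum_congr rfl fun kl hkl => ?_
    rw [← Finset.HasAntidiagonal.mem_antidiagonal.1 hkl, pow_add]; ring
  constructor
  · have := summable_norm_sum_mul_antidiagonal_of_summable_norm (f := fun n => φ.coeff n * v ^ n)
      (g := fun n => ψ.coeff n * v ^ n) h.1 h'.1
    refine this.congr fun n => ?_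
    rw [e n]
  · have := tsum_mul_tsum_eq_tsum_sum_antidiagonal_of_summable_norm (f := fun n => φ.coeff n * v ^ n)
      (g := fun n => ψ.coeff n * v ^ n) h.1 h'.1
    rw [h.2, h'.2] at this
    rw [this]
    exact tsum_congr e

lemma EvTo.one (v : K) : EvTo 1 v 1 := by
  have e : ∀ n, (1 : K⟦X⟧).coeff n * v ^ n = if n = 0 then 1 else 0 := by
    intro n; rw [coeff_one]; split_ifs with h <;> simp [h]
  constructor
  · simp_rw [e]
    apply summable_of_ne_finset_zero (s := {0})
    intro n hn; simp at hn; simp [hn]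
  · simp_rw [e]; exact tsum_ite_eq 0 _

lemma EvTo.GG {a v : K} {m : ℕ} (hm : m ≠ 0) (h : ‖a * v ^ m‖ < 1) :
    EvTo (GG a m) v (1 - a * v ^ m)⁻¹ := by
  have hinj : Function.Injective (fun j : ℕ => m * j) := fun i j h => Nat.eq_of_mul_eq_mul_left (by omega) h
  have e : ∀ j, (_root_.GG a m).coeff (m * j) * v ^ (m * j) = (a * v ^ m) ^ j := by
    intro j
    rw [coeff_GG a hm, if_pos (dvd_mul_right _ _), Nat.mul_div_cancel_left _ (by omega), mul_pow, pow_mul]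
  have z : ∀ n, n ∉ Set.range (fun j : ℕ => m * j) → (_root_.GG a m).coeff n * v ^ n = 0 := by
    intro n hn
    rw [coeff_GG a hm, if_neg, zero_mul]
    rintro ⟨j, rfl⟩; exact hn ⟨j, rfl⟩
  constructor
  · rw [← hinj.summable_iff]
    · have : ((fun n => ‖(_root_.GG a m).coeff n * v ^ n‖) ∘ fun j => m * j) = fun j => ‖a * v ^ m‖ ^ j := by
        ext j; simp only [Function.comp]; rw [e, norm_pow]
      rw [this]
      exact summable_geometric_of_lt_one (norm_nonneg _) h
    · intro n hn; rw [z n hn, norm_zero]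
  · apply HasSum.tsum_eq
    rw [← hinj.hasSum_iff z]
    have : ((fun n => (_root_.GG a m).coeff n * v ^ n) ∘ fun j => m * j) = fun j => (a * v ^ m) ^ j := by
      ext j; exact e j
    rw [this]
    exact hasSum_geometric_of_norm_lt_one h

/-- truncation -/
def trunc' (N : ℕ) (c : ℕ → K) (i : ℕ) : K := if i ≤ N then c i else 0

lemma gen_trunc (N : ℕ) (c : ℕ → K) :
    Nat.Partition.genFun (fun i j => trunc' N c i ^ j) = ∏ i ∈ Finset.range N, GG (c (i+1)) (i+1) := by
  have h := hasProd_GG (trunc' N c)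
  have h2 := hasProd_prod_of_ne_finset_one (L := SummationFilter.unconditional ℕ) (f := fun i => GG (trunc' N c (i+1)) (i+1)) (s := Finset.range N)
    (by intro i hi; simp at hi; simp [trunc', show ¬ (i + 1 ≤ N) by omega, GG_zero])
  rw [h.unique h2]
  refine Finset.prod_congr rfl fun i hi => ?_
  simp at hi
  simp [trunc', show i + 1 ≤ N by omega]

lemma ev_trunc (N : ℕ) (c : ℕ → K) (v : K) (h1 : ∀ i, ‖c (i+1) * v ^ (i+1)‖ < 1) :
    Summable (fun n => ‖pa (trunc' N c) n * v ^ n‖) ∧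
    ∑' n, pa (trunc' N c) n * v ^ n = ∏ i ∈ Finset.range N, (1 - c (i+1) * v ^ (i+1))⁻¹ := by
  have : EvTo (∏ i ∈ Finset.range N, GG (c (i+1)) (i+1)) v (∏ i ∈ Finset.range N, (1 - c (i+1) * v ^ (i+1))⁻¹) := by
    induction N with
    | zero => simpa using EvTo.one v
    | succ N ih =>
      rw [Finset.prod_range_succ, Finset.prod_range_succ]
      exact ih.mul (EvTo.GG (by omega) (h1 N))
  rw [← gen_trunc] at this
  simpa only [EvTo, coeff_gen] using this

lemma pa_trunc_eq {N n : ℕ} (h : n ≤ N) (c : ℕ → K) : pa (trunc' N c) n = pa c n := by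
  unfold pa
  refine Finset.sum_congr rfl fun p _ => ?_
  congr 1
  apply Multiset.map_congr rfl
  intro i hi
  have : i ≤ n := by
    have h2 := Multiset.le_sum_of_mem hi
    rwa [p.parts_sum] at h2
  simp [trunc', this.trans h]

lemma pa_norm_le {K' : Type*} [RCLike K'] (c : ℕ → K') (d : ℕ → ℝ) (h : ∀ i, ‖c i‖ ≤ d i) (n : ℕ) : ‖pa c n‖ ≤ pa d n := by
  unfold pa
  refine (norm_sum_le _ _).trans (Finset.sum_le_sum fun p _ => ?_)
  generalize p.parts = s
  induction s using Multiset.induction_on with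
  | empty => simp
  | cons a s ih =>
    simp only [Multiset.map_cons, Multiset.prod_cons, norm_mul]
    exact mul_le_mul (h a) ih (norm_nonneg _) ((norm_nonneg _).trans (h a))

lemma pa_factor (c : ℕ → K) (hc : c 1 = 1) (n : ℕ) :
    pa c n = ∑ j ∈ Finset.range (n+1), pa (fun i => if i = 1 then 0 else c i) j := by
  have h := hasProd_GG c
  have h1 := hasProd_GG (fun i => if i = 1 then 0 else c i)
  have h2 := hasProd_ite_eq (0:ℕ) (GG (1:K) 1)
  have h3 := h2.mul h1
  have e : (fun i => (if i = 0 then GG (1:K) 1 else 1) * GG (if i + 1 = 1 then 0 else c (i+1)) (i+1))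
      = fun i => GG (c (i+1)) (i+1) := by
    ext1 i
    rcases Nat.eq_zero_or_pos i with rfl | hi
    · simp [GG_zero, hc]
    · rw [if_neg hi.ne', if_neg (by omega), one_mul]
  rw [e] at h3
  have h4 := h.unique h3
  rw [← coeff_gen, h4, coeff_mul, Finset.Nat.antidiagonal_eq_map', Finset.sum_map]
  refine Finset.sum_congr rfl fun j hj => ?_
  change (GG (1:K) 1).coeff (n - j) * _ = _
  rw [coeff_GG _ one_ne_zero, if_pos (one_dvd _), one_pow, one_mul]
  exact coeff_gen _ _

end GenFun

section Analytic

lemma pa_summable_real (c : ℕ → ℝ) (v : ℝ) (hc : ∀ i, 0 ≤ c i) (hv : 0 ≤ v)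
    (hs : Summable fun i : ℕ => c (i+1) * v ^ (i+1)) (h1 : ∀ i, c (i+1) * v ^ (i+1) < 1) :
    Summable (fun n => pa c n * v ^ n) := by
  have hpa : ∀ d : ℕ → ℝ, (∀ i, 0 ≤ d i) → ∀ n, 0 ≤ pa d n := by
    intro d hd n
    unfold pa
    refine Finset.sum_nonneg fun p _ => Multiset.prod_nonneg ?_
    intro a ha
    obtain ⟨i, -, rfl⟩ := Multiset.mem_map.1 ha
    exact hd i
  have ht : ∀ i : ℕ, 0 ≤ c (i+1) * v ^ (i+1) := fun i => mul_nonneg (hc _) (by positivity)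
  have hlog : Summable fun i : ℕ => -Real.log (1 - c (i+1) * v ^ (i+1)) := by
    have := Real.summable_log_one_add_of_summable hs.neg
    simpa [sub_eq_add_neg] using this.neg
  apply summable_of_sum_range_le (c := Real.exp (∑' i : ℕ, -Real.log (1 - c (i+1) * v ^ (i+1))))
  · intro n; exact mul_nonneg (hpa c hc n) (by positivity)
  · intro K
    have hev := ev_trunc K c v (fun i => by rw [Real.norm_of_nonneg (ht i)]; exact h1 i)
    calc ∑ n ∈ Finset.range K, pa c n * v ^ n = ∑ n ∈ Finset.range K, pa (trunc' K c) n * v ^ n := by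
          refine Finset.sum_congr rfl fun n hn => ?_
          rw [pa_trunc_eq (Finset.mem_range.1 hn).le]
      _ ≤ ∑' n, pa (trunc' K c) n * v ^ n := by
          apply hev.1.of_norm.sum_le_tsum
          intro n _
          refine mul_nonneg (hpa _ ?_ n) (by positivity)
          intro i; unfold trunc'; split_ifs <;> simp [hc]
      _ = ∏ i ∈ Finset.range K, (1 - c (i+1) * v ^ (i+1))⁻¹ := hev.2
      _ = Real.exp (∑ i ∈ Finset.range K, -Real.log (1 - c (i+1) * v ^ (i+1))) := by
          rw [Real.exp_sum]
          refine Finset.prod_congr rfl fun i _ => ?_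
          rw [Real.exp_neg, Real.exp_log (by linarith [h1 i])]
      _ ≤ _ := by
          apply Real.exp_le_exp.2
          apply hlog.sum_le_tsum
          intro i _
          have := Real.log_nonpos (x := 1 - c (i+1) * v ^ (i+1)) (by linarith [h1 i]) (by linarith [ht i])
          linarith

theorem pa_hasSum (c : ℕ → ℂ) (v : ℂ) (hs : Summable fun i : ℕ => ‖c (i+1) * v ^ (i+1)‖)
    (h1 : ∀ i, ‖c (i+1) * v ^ (i+1)‖ < 1) :
    Summable (fun n => ‖pa c n * v ^ n‖) ∧
    ∑' n, pa c n * v ^ n = Complex.exp (∑' i : ℕ, -Complex.log (1 - c (i+1) * v ^ (i+1))) := by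
  have hB : Summable (fun n => pa (fun i => ‖c i‖) n * ‖v‖ ^ n) := by
    apply pa_summable_real _ _ (fun i => norm_nonneg _) (norm_nonneg _)
    · simpa [norm_mul, norm_pow] using hs
    · simpa [norm_mul, norm_pow] using h1
  have hle : ∀ d : ℕ → ℂ, (∀ i, ‖d i‖ ≤ ‖c i‖) → ∀ n, ‖pa d n * v ^ n‖ ≤ pa (fun i => ‖c i‖) n * ‖v‖ ^ n := by
    intro d hd n
    rw [norm_mul, norm_pow]
    exact mul_le_mul_of_nonneg_right (pa_norm_le d _ hd n) (by positivity)
  refine ⟨Summable.of_nonneg_of_le (fun _ => norm_nonneg _) (hle c fun _ => le_rfl) hB, ?_⟩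
  have hlog : Summable fun i : ℕ => -Complex.log (1 - c (i+1) * v ^ (i+1)) := by
    have := Complex.summable_log_one_add_of_summable (f := fun i : ℕ => -(c (i+1) * v ^ (i+1))) hs.of_norm.neg
    simpa [sub_eq_add_neg] using this.neg
  have t1 : Tendsto (fun N => ∑' n, pa (trunc' N c) n * v ^ n) atTop (𝓝 (∑' n, pa c n * v ^ n)) := by
    apply tendsto_tsum_of_dominated_convergence hB
    · intro n
      apply tendsto_const_nhds.congr'
      filter_upwards [eventually_ge_atTop n] with N hN
      rw [pa_trunc_eq hN]
    · refine Filter.Eventually.of_forall fun N n => hle _ ?_ n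
      intro i; unfold trunc'; split_ifs <;> simp
  have t2 : Tendsto (fun N => ∑' n, pa (trunc' N c) n * v ^ n) atTop
      (𝓝 (Complex.exp (∑' i : ℕ, -Complex.log (1 - c (i+1) * v ^ (i+1))))) := by
    have := (Complex.continuous_exp.tendsto _).comp hlog.hasSum.tendsto_sum_nat
    refine this.congr fun N => ?_
    rw [(ev_trunc N c v h1).2, Function.comp, Complex.exp_sum]
    refine Finset.prod_congr rfl fun i _ => ?_
    rw [Complex.exp_neg, Complex.exp_log]
    intro h
    have : c (i+1) * v ^ (i+1) = 1 := by linear_combination -h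
    have h2 := h1 i
    rw [this] at h2; simp at h2
  exact tendsto_nhds_unique t1 t2

end Analytic

lemma F_eq_pa {n : ℕ} (hn : n ≠ 0) (x : ℂ) : F n x = pa (fun _ => x) n := by
  unfold F pa
  simp only [Multiset.map_const', Multiset.prod_replicate]
  have hmem : ∀ p : n.Partition, Multiset.card p.parts ∈ Finset.Icc 1 n := by
    intro p
    rw [Finset.mem_Icc]
    constructor
    · rw [Nat.one_le_iff_ne_zero, Ne, Multiset.card_eq_zero]
      intro h
      have := p.parts_sum
      rw [h] at this; simp at this; exact hn this.symm
    · have h1 := p.parts_sum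
      have h2 : Multiset.card p.parts • 1 ≤ p.parts.sum :=
        Multiset.card_nsmul_le_sum (fun i hi => p.parts_pos hi)
      simpa [h1] using h2
  rw [← Finset.sum_fiberwise_of_maps_to (s := Finset.univ) (t := Finset.Icc 1 n)
    (g := fun p : n.Partition => Multiset.card p.parts) (fun p _ => hmem p)]
  refine Finset.sum_congr rfl fun k hk => ?_
  rw [Finset.sum_congr rfl (g := fun _ => x ^ k) (by intro p hp; rw [(Finset.mem_filter.1 hp).2])]
  rw [Finset.sum_const, nsmul_eq_mul]
  congr 2
  unfold partsCount
  rw [Nat.card_eq_fintype_card, Fintype.card_subtype]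

end PartP2

section PartP3a
open Complex Filter Topology
set_option linter.unusedVariables false

/-- the exponent of the generating function -/
noncomputable def SS (x w : ℂ) : ℂ := ∑' l : ℕ, x ^ (l+1) / ((l:ℂ)+1) * (1 / (Complex.exp (((l:ℂ)+1) * w) - 1))

lemma norm_exp_sub_one_ge (z : ℂ) : z.re ≤ ‖Complex.exp z - 1‖ := by
  have h1 : ‖Complex.exp z‖ - ‖(1:ℂ)‖ ≤ ‖Complex.exp z - 1‖ := norm_sub_norm_le _ _
  rw [Complex.norm_exp, norm_one] at h1
  linarith [Real.add_one_le_exp z.re]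

lemma norm_natCast_add_one (l : ℕ) : ‖((l:ℂ)+1)‖ = (l:ℝ)+1 := by
  have := Complex.norm_natCast (l+1); push_cast at this; exact this

lemma re_natCast_add_one_mul (l : ℕ) (w : ℂ) : (((l:ℂ)+1) * w).re = ((l:ℝ)+1) * w.re := by
  simp [Complex.mul_re]

lemma SS_eq {x w : ℂ} (hx : ‖x‖ < 1) (hw : 0 < w.re) :
    ∑' i : ℕ, -Complex.log (1 - x * (Complex.exp (-w)) ^ (i+1)) = SS x w := by
  set u := Complex.exp (-w) with hu
  have hu1 : ‖u‖ < 1 := by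
    rw [hu, Complex.norm_exp, Real.exp_lt_one_iff]; simpa using hw
  have hxu : ∀ i, ‖x * u ^ (i+1)‖ < 1 := by
    intro i
    rw [norm_mul, norm_pow]
    calc ‖x‖ * ‖u‖^(i+1) ≤ ‖x‖ * 1 := by
          gcongr; exact pow_le_one₀ (norm_nonneg _) hu1.le
      _ < 1 := by linarith
  have e1 : ∀ i : ℕ, -Complex.log (1 - x * u ^ (i+1)) = ∑' l : ℕ, (x * u ^ (i+1)) ^ (l+1) / ((l:ℂ)+1) :=
    fun i => (hasSum_taylorSeries_neg_log' (hxu i)).tsum_eq.symm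
  have hsum : Summable (Function.uncurry fun (i l : ℕ) => (x * u ^ (i+1)) ^ (l+1) / ((l:ℂ)+1)) := by
    have h1 : Summable fun i : ℕ => ‖u‖ ^ (i) := summable_geometric_of_lt_one (norm_nonneg _) hu1
    have h2 : Summable fun i : ℕ => ‖x‖ ^ (i) := summable_geometric_of_lt_one (norm_nonneg _) hx
    have h3 := h1.mul_of_nonneg h2 (fun _ => by positivity) (fun _ => by positivity)
    refine Summable.of_norm_bounded h3 ?_
    rintro ⟨i, l⟩
    simp only [Function.uncurry]
    rw [norm_div, norm_natCast_add_one, norm_pow, norm_mul, norm_pow, mul_pow, ← pow_mul]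
    have a1 : ‖u‖ ^ ((i+1)*(l+1)) ≤ ‖u‖^i := pow_le_pow_of_le_one (norm_nonneg _) hu1.le (by nlinarith)
    have a2 : ‖x‖ ^ (l+1) ≤ ‖x‖^l := pow_le_pow_of_le_one (norm_nonneg _) hx.le (by omega)
    calc ‖x‖ ^ (l+1) * ‖u‖ ^ ((i+1)*(l+1)) / ((l:ℝ)+1) ≤ ‖x‖ ^ (l+1) * ‖u‖ ^ ((i+1)*(l+1)) := by
          apply div_le_self (by positivity); linarith [(Nat.cast_nonneg l : (0:ℝ) ≤ l)]
      _ ≤ ‖x‖ ^ l * ‖u‖ ^ i := by gcongr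
      _ = _ := mul_comm _ _
  simp_rw [e1]
  rw [← hsum.tsum_comm, SS]
  refine tsum_congr fun l => ?_
  have hul : ‖u ^ (l+1)‖ < 1 := norm_pow_lt_one' hu1 (by omega)
  have e2 : ∀ i : ℕ, (x * u ^ (i+1)) ^ (l+1) / ((l:ℂ)+1) = x ^ (l+1) / ((l:ℂ)+1) * u ^ (l+1) * (u ^ (l+1)) ^ i := by
    intro i; rw [mul_pow, ← pow_mul, ← pow_mul, mul_assoc, ← pow_add]
    rw [show l + 1 + (l+1) * i = (i+1) * (l+1) by ring]; ring
  simp_rw [e2]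
  rw [tsum_mul_left, tsum_geometric_of_norm_lt_one hul]
  have e3 : Complex.exp (((l:ℂ)+1) * w) = (u ^ (l+1))⁻¹ := by
    rw [hu, ← Complex.exp_nat_mul, ← Complex.exp_neg]; push_cast; ring_nf
  have h0 : u ^ (l+1) ≠ 0 := pow_ne_zero _ (Complex.exp_ne_zero _)
  have h1 : 1 - u ^ (l+1) ≠ 0 := by
    intro h
    have : u ^ (l+1) = 1 := by linear_combination -h
    rw [this] at hul; simp at hul
  rw [e3, mul_assoc]
  congr 1
  field_simp

lemma gen_eq {x w : ℂ} (hx : ‖x‖ < 1) (hw : 0 < w.re) :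
    Summable (fun n => ‖pa (fun _ => x) n * (Complex.exp (-w)) ^ n‖) ∧
    ∑' n, pa (fun _ => x) n * (Complex.exp (-w)) ^ n = Complex.exp (SS x w) := by
  rw [← SS_eq hx hw]
  have hu1 : ‖Complex.exp (-w)‖ < 1 := by
    rw [Complex.norm_exp, Real.exp_lt_one_iff]; simpa using hw
  apply pa_hasSum (fun _ => x) (Complex.exp (-w))
  · have := (summable_geometric_of_lt_one (norm_nonneg _) hu1).mul_left (‖x‖ * ‖Complex.exp (-w)‖)
    refine this.congr fun i => ?_
    rw [norm_mul, norm_pow]; ring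
  · intro i
    rw [norm_mul, norm_pow]
    calc ‖x‖ * ‖Complex.exp (-w)‖^(i+1) ≤ ‖x‖ * 1 := by
          gcongr; exact pow_le_one₀ (norm_nonneg _) hu1.le
      _ < 1 := by linarith

lemma orth (m n : ℕ) : ∫ θ in (-1:ℝ)..(2*Real.pi-1), Complex.exp ((((n:ℂ) - m) * I) * θ) =
    if m = n then 2 * (Real.pi:ℂ) else 0 := by
  split_ifs with h
  · subst h; simp
  · have hne : ((n:ℂ) - m) * I ≠ 0 := by
      apply mul_ne_zero _ I_ne_zero
      rw [sub_ne_zero]; exact_mod_cast (Ne.symm h)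
    rw [integral_exp_mul_complex hne]
    have : ((n:ℂ) - m) * I * ((2*Real.pi-1:ℝ):ℂ) = ((n:ℂ) - m) * I * ((-1:ℝ):ℂ) + ((n - m : ℤ) : ℂ) * (2 * Real.pi * I) := by
      push_cast; ring
    rw [this, Complex.exp_add, Complex.exp_int_mul_two_pi_mul_I]
    simp

theorem cauchy {x : ℂ} (hx : ‖x‖ < 1) {σ : ℝ} (hσ : 0 < σ) {n : ℕ} (hn : n ≠ 0) :
    2 * (Real.pi : ℂ) * F n x = ∫ θ in (-1:ℝ)..(2*Real.pi-1),
      Complex.exp (SS x (σ + θ * I) + n * (σ + θ * I)) := by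
  have hw : ∀ θ : ℝ, 0 < ((σ:ℂ) + θ * I).re := by intro θ; simpa using hσ
  have hsm := (gen_eq hx (w := (σ:ℂ)) (by simpa using hσ)).1
  have key := intervalIntegral.hasSum_integral_of_dominated_convergence (μ := MeasureTheory.volume)
    (a := (-1:ℝ)) (b := 2*Real.pi-1)
    (F := fun (m : ℕ) (θ : ℝ) => pa (fun _ => x) m * (Complex.exp (-((σ:ℂ) + θ * I))) ^ m * Complex.exp (n * (σ + θ * I)))
    (f := fun θ : ℝ => Complex.exp (SS x (σ + θ * I) + n * (σ + θ * I)))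
    (fun (m : ℕ) (θ : ℝ) => ‖pa (fun _ => x) m * (Complex.exp (-(σ:ℂ))) ^ m‖ * Real.exp (n * σ))
    (fun m => Continuous.aestronglyMeasurable (by fun_prop))
    (fun m => Eventually.of_forall fun θ _ => by
      rw [norm_mul, norm_mul, norm_mul, norm_pow, norm_pow, Complex.norm_exp, Complex.norm_exp, Complex.norm_exp]
      simp)
    (Eventually.of_forall fun θ _ => hsm.mul_right _)
    (by simp)
    (Eventually.of_forall fun θ _ => by
      have := gen_eq hx (hw θ)
      rw [Complex.exp_add, ← this.2]
      exact (this.1.of_norm.hasSum).mul_right _)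
  have e : ∀ m : ℕ, (∫ θ in (-1:ℝ)..(2*Real.pi-1), pa (fun _ => x) m * (Complex.exp (-((σ:ℂ) + θ * I))) ^ m * Complex.exp (n * (σ + θ * I)))
      = if m = n then 2 * (Real.pi:ℂ) * F n x else 0 := by
    intro m
    have : ∀ θ : ℝ, pa (fun _ => x) m * (Complex.exp (-((σ:ℂ) + θ * I))) ^ m * Complex.exp (n * (σ + θ * I)) =
        (pa (fun _ => x) m * Complex.exp (((n:ℂ) - m) * σ)) * Complex.exp ((((n:ℂ) - m) * I) * θ) := by
      intro θ
      rw [← Complex.exp_nat_mul, mul_assoc, mul_assoc, ← Complex.exp_add, ← Complex.exp_add]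
      congr 2; ring
    simp_rw [this]
    rw [intervalIntegral.integral_const_mul, orth]
    split_ifs with h
    · subst h; rw [F_eq_pa hn]; simp; ring
    · simp
  simp_rw [e] at key
  exact (hasSum_ite_eq n _).unique key

end PartP3a

section PartP3b
open Complex Filter Topology
set_option linter.unusedVariables false

lemma DD_eq (k : ℕ) (y : ℂ) :
    ∑' l : ℕ, (if k ∣ l+1 then y ^ (l+1) / ((l:ℂ)+1)^2 else 0) = Phi k y ^ 2 := by
  rw [Phi_sq]
  rcases Nat.eq_zero_or_pos k with rfl | hk
  · simp
  have hinj : Function.Injective (fun j : ℕ => k * (j+1) - 1) := by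
    intro i j h
    have hi : 0 < k * (i+1) := by positivity
    have hj : 0 < k * (j+1) := by positivity
    have h' : k * (i+1) - 1 = k * (j+1) - 1 := h
    have : k * (i+1) = k * (j+1) := by omega
    have := Nat.eq_of_mul_eq_mul_left hk this
    omega
  rw [← hinj.tsum_eq]
  · rw [dilog, ← tsum_div_const]
    refine tsum_congr fun j => ?_
    have hj : 0 < k * (j+1) := by positivity
    have e : k * (j+1) - 1 + 1 = k * (j+1) := by omega
    have e2 : (((k * (j+1) - 1 : ℕ) : ℂ) + 1) = k * ((j:ℂ)+1) := by
      have : (((k * (j+1) - 1 + 1 : ℕ) : ℂ)) = ((k * (j+1) : ℕ) : ℂ) := by rw [e]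
      push_cast at this; exact this
    rw [e, if_pos (dvd_mul_right _ _), e2, pow_mul, mul_pow]
    rw [div_div, mul_comm]
  · intro l hl
    simp only [Function.mem_support, ne_eq, ite_eq_right_iff, not_forall] at hl
    obtain ⟨⟨j, hj⟩, -⟩ := hl
    rcases Nat.eq_zero_or_pos j with rfl | hj0
    · simp at hj
    · exact ⟨j - 1, by simp only []; rw [Nat.sub_add_cancel hj0, ← hj]; rfl⟩

/-- remainder of the Bernoulli function -/
noncomputable def EE (z : ℂ) : ℂ := 1 / (Complex.exp z - 1) - 1 / z

lemma EE_eq {z : ℂ} (hz : z ≠ 0) (h : Complex.exp z - 1 ≠ 0) :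
    EE z = -(Complex.exp z - 1 - z) / (z * (Complex.exp z - 1)) := by
  unfold EE; field_simp; ring

lemma EE_bound {z : ℂ} (hz : z ≠ 0) (h : ‖z‖ ≤ 1/2) : ‖EE z‖ ≤ 2 := by
  have h0 : 0 < ‖z‖ := norm_pos_iff.2 hz
  have h1 := Complex.norm_exp_sub_one_sub_id_le (x := z) (by linarith)
  have h2 : ‖z‖ / 2 ≤ ‖Complex.exp z - 1‖ := by
    have : ‖z‖ - ‖Complex.exp z - 1‖ ≤ ‖z - (Complex.exp z - 1)‖ := norm_sub_norm_le _ _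
    rw [norm_sub_rev z] at this
    nlinarith
  have h3 : Complex.exp z - 1 ≠ 0 := by
    intro h; rw [h, norm_zero] at h2; linarith
  rw [EE_eq hz h3, norm_div, norm_neg, norm_mul, div_le_iff₀ (by positivity)]
  nlinarith

lemma exp_l_eq {θ₀ : ℝ} {l : ℕ} (h : orderOf (Complex.exp (θ₀ * I)) ∣ l+1) (w : ℂ) :
    Complex.exp (((l:ℂ)+1) * w) = Complex.exp (((l:ℂ)+1) * (w - θ₀ * I)) := by
  have h1 := orderOf_dvd_iff_pow_eq_one.1 h
  rw [← Complex.exp_nat_mul] at h1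
  push_cast at h1
  rw [mul_sub, Complex.exp_sub, h1, div_one]

lemma exp_l_ne {θ₀ : ℝ} {l : ℕ} (h : ¬ orderOf (Complex.exp (θ₀ * I)) ∣ l+1) :
    Complex.exp (((l:ℂ)+1) * (θ₀ * I)) ≠ 1 := by
  intro h1
  apply h
  rw [orderOf_dvd_iff_pow_eq_one, ← Complex.exp_nat_mul]
  push_cast; exact h1

lemma sigma_bound {σ : ℝ} (hσ : 0 < σ) (t : ℝ) (l : ℕ) :
    ‖(σ:ℂ) / (Complex.exp (((l:ℂ)+1) * (σ + t * I)) - 1)‖ ≤ 1 := by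
  have h1 := norm_exp_sub_one_ge (((l:ℂ)+1) * (σ + t * I))
  rw [re_natCast_add_one_mul] at h1
  have h2 : σ ≤ ‖Complex.exp (((l:ℂ)+1) * (σ + t * I)) - 1‖ := by
    have : ((σ:ℂ) + t * I).re = σ := by simp
    rw [this] at h1
    nlinarith [(Nat.cast_nonneg l : (0:ℝ) ≤ l)]
  rw [norm_div, Complex.norm_real, Real.norm_of_nonneg hσ.le]
  exact div_le_one_of_le₀ h2 (norm_nonneg _)

lemma sigma_bound' {σ : ℝ} (hσ : 0 < σ) (t : ℝ) : ‖(σ:ℂ) / (σ + t * I)‖ ≤ 1 := by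
  rw [norm_div, Complex.norm_real, Real.norm_of_nonneg hσ.le]
  have := Complex.re_le_norm ((σ:ℂ) + t * I)
  have e : ((σ:ℂ) + t * I).re = σ := by simp
  rw [e] at this
  exact div_le_one_of_le₀ this (norm_nonneg _)

lemma w_ne {σ : ℝ} (hσ : 0 < σ) (t : ℝ) : (σ:ℂ) + t * I ≠ 0 := by
  intro h
  have := congrArg Complex.re h
  simp at this; linarith

lemma local_tannery {x : ℂ} (hx : ‖x‖ < 1) (θ₀ : ℝ) :
    Tendsto (fun z : (ℝ × ℂ) × ℝ => (z.1.1:ℂ) * SS z.1.2 (z.1.1 + z.2 * I) -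
      Phi (orderOf (Complex.exp (θ₀ * I))) z.1.2 ^ 2 * ((z.1.1:ℂ) / (z.1.1 + ((z.2 - θ₀ : ℝ):ℂ) * I)))
      (𝓝[{z | 0 < z.1.1}] ((0, x), θ₀)) (𝓝 0) := by
  set k := orderOf (Complex.exp (θ₀ * I)) with hk
  obtain ⟨ρ, hρ, hρ1⟩ := exists_between hx
  have hρ0 : 0 ≤ ρ := (norm_nonneg x).trans hρ.le
  set f : (ℝ × ℂ) × ℝ → ℕ → ℂ := fun z l => z.1.2 ^ (l+1) / ((l:ℂ)+1) *
      ((z.1.1:ℂ) / (Complex.exp (((l:ℂ)+1) * (z.1.1 + z.2 * I)) - 1)) -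
      (if k ∣ l+1 then z.1.2 ^ (l+1) / ((l:ℂ)+1)^2 else 0) * ((z.1.1:ℂ) / (z.1.1 + ((z.2 - θ₀ : ℝ):ℂ) * I)) with hf
  have hsr : Summable fun l : ℕ => ρ ^ (l+1) := by
    simpa [pow_succ] using (summable_geometric_of_lt_one hρ0 hρ1).mul_right ρ
  have ev1 : ∀ᶠ z : (ℝ × ℂ) × ℝ in 𝓝[{z | 0 < z.1.1}] ((0, x), θ₀), ‖z.1.2‖ ≤ ρ := by
    apply eventually_nhdsWithin_of_eventually_nhds
    have : Tendsto (fun z : (ℝ × ℂ) × ℝ => ‖z.1.2‖) (𝓝 ((0, x), θ₀)) (𝓝 ‖x‖) := by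
      have : Continuous (fun z : (ℝ × ℂ) × ℝ => ‖z.1.2‖) := by fun_prop
      exact this.tendsto ((0,x),θ₀)
    exact this.eventually_le_const hρ
  have ev2 : ∀ᶠ z : (ℝ × ℂ) × ℝ in 𝓝[{z | 0 < z.1.1}] ((0, x), θ₀), 0 < z.1.1 := eventually_mem_nhdsWithin
  have c1 : ∀ (y : ℂ) (l : ℕ), ‖y‖ ≤ ρ → ‖y ^ (l+1) / ((l:ℂ)+1)‖ ≤ ρ ^ (l+1) := by
    intro y l hy
    rw [norm_div, norm_pow, norm_natCast_add_one]
    refine (div_le_self (by positivity) (by linarith [(Nat.cast_nonneg l : (0:ℝ) ≤ l)])).trans ?_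
    gcongr
  have c2 : ∀ (y : ℂ) (l : ℕ), ‖y‖ ≤ ρ → ‖(if k ∣ l+1 then y ^ (l+1) / ((l:ℂ)+1)^2 else 0)‖ ≤ ρ ^ (l+1) := by
    intro y l hy
    split_ifs
    · rw [norm_div, norm_pow, norm_pow, norm_natCast_add_one]
      refine (div_le_self (by positivity) (by nlinarith [(Nat.cast_nonneg l : (0:ℝ) ≤ l)])).trans ?_
      gcongr
    · rw [norm_zero]; positivity
  have key : Tendsto (fun z => ∑' l, f z l) (𝓝[{z | 0 < z.1.1}] ((0, x), θ₀)) (𝓝 (∑' l : ℕ, (0:ℂ))) := by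
    apply tendsto_tsum_of_dominated_convergence (hsr.mul_left 2)
    · intro l
      by_cases hl : k ∣ l+1
      · have t0 : Tendsto (fun z : (ℝ × ℂ) × ℝ => 2 * z.1.1) (𝓝[{z | 0 < z.1.1}] ((0, x), θ₀)) (𝓝 0) := by
          apply tendsto_nhdsWithin_of_tendsto_nhds
          have : Continuous (fun z : (ℝ × ℂ) × ℝ => 2 * z.1.1) := by fun_prop
          simpa using this.tendsto ((0,x),θ₀)
        have ev3 : ∀ᶠ z : (ℝ × ℂ) × ℝ in 𝓝[{z | 0 < z.1.1}] ((0, x), θ₀),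
            ‖((l:ℂ)+1) * (z.1.1 + ((z.2 - θ₀ : ℝ):ℂ) * I)‖ ≤ 1/2 := by
          apply eventually_nhdsWithin_of_eventually_nhds
          have : Continuous (fun z : (ℝ × ℂ) × ℝ => ‖((l:ℂ)+1) * (z.1.1 + ((z.2 - θ₀ : ℝ):ℂ) * I)‖) := by fun_prop
          have := this.tendsto ((0,x),θ₀)
          exact this.eventually_le_const (by simp)
        apply squeeze_zero_norm' _ t0
        filter_upwards [ev1, ev2, ev3] with z h1 h2 h3
        set w' : ℂ := z.1.1 + ((z.2 - θ₀ : ℝ):ℂ) * I with hw'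
        have hw0 : w' ≠ 0 := w_ne h2 _
        have hl0 : ((l:ℂ)+1) ≠ 0 := by
          rw [← norm_pos_iff, norm_natCast_add_one]; positivity
        have e1 : (z.1.1 : ℂ) + z.2 * I - θ₀ * I = w' := by rw [hw']; push_cast; ring
        have : f z l = (z.1.2 ^ (l+1) / ((l:ℂ)+1)) * (z.1.1 * EE (((l:ℂ)+1) * w')) := by
          simp only [hf]
          rw [if_pos hl, exp_l_eq hl, e1, EE]
          rw [← hw']
          field_simp
        rw [this, norm_mul, norm_mul, Complex.norm_real, Real.norm_of_nonneg h2.le]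
        have b1 := EE_bound (mul_ne_zero hl0 hw0) h3
        have b2 := (c1 z.1.2 l h1).trans (pow_le_one₀ hρ0 hρ1.le)
        calc _ ≤ 1 * (z.1.1 * 2) := by
              apply mul_le_mul b2 _ (by positivity) (by norm_num)
              gcongr
          _ = _ := by ring
      · have hne := exp_l_ne hl
        apply tendsto_nhdsWithin_of_tendsto_nhds
        have : ContinuousAt (fun z : (ℝ × ℂ) × ℝ => f z l) ((0, x), θ₀) := by
          simp only [hf, if_neg hl, zero_mul, sub_zero]
          apply ContinuousAt.mul (by fun_prop)
          apply ContinuousAt.div (by fun_prop) (by fun_prop)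
          simpa [sub_eq_zero] using hne
        have h2 := this.tendsto
        have : f ((0,x),θ₀) l = 0 := by simp [hf, hl]
        rwa [this] at h2
    · filter_upwards [ev1, ev2] with z h1 h2 l
      have a1 := sigma_bound h2 z.2 l
      have a2 := sigma_bound' h2 (z.2 - θ₀)
      have b1 := c1 z.1.2 l h1
      have b2 := c2 z.1.2 l h1
      refine (norm_sub_le _ _).trans ?_
      rw [norm_mul, norm_mul]
      calc _ ≤ ρ ^ (l+1) * 1 + ρ ^ (l+1) * 1 := by gcongr
        _ = _ := by ring
  rw [tsum_zero] at key
  refine key.congr' ?_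
  filter_upwards [ev1, ev2] with z h1 h2
  have s1 : Summable fun l : ℕ => z.1.2 ^ (l+1) / ((l:ℂ)+1) *
      ((z.1.1:ℂ) / (Complex.exp (((l:ℂ)+1) * (z.1.1 + z.2 * I)) - 1)) := by
    refine Summable.of_norm_bounded hsr fun l => ?_
    rw [norm_mul]
    have a1 := sigma_bound h2 z.2 l
    have b1 := c1 z.1.2 l h1
    calc _ ≤ ρ ^ (l+1) * 1 := by gcongr
      _ = _ := by ring
  have s2 : Summable fun l : ℕ => (if k ∣ l+1 then z.1.2 ^ (l+1) / ((l:ℂ)+1)^2 else 0) :=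
    Summable.of_norm_bounded hsr fun l => c2 _ l h1
  simp only [hf]
  rw [s1.tsum_sub (s2.mul_right _), tsum_mul_right, DD_eq, SS, ← tsum_mul_left]
  congr 1
  refine tsum_congr fun l => ?_
  ring

lemma saddle_le (A : ℂ) {σ : ℝ} (hσ : 0 < σ) (t : ℝ) : (A ^ 2 * ((σ:ℂ) / (σ + t * I))).re ≤ A.re ^ 2 := by
  have hD : 0 < σ^2 + t^2 := by positivity
  have e : (σ:ℂ) / (σ + t * I) = ((σ^2/(σ^2+t^2) : ℝ):ℂ) - ((σ*t/(σ^2+t^2) : ℝ):ℂ) * I := by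
    have h1 := w_ne hσ t
    have h2 : ((σ:ℂ)^2+t^2) ≠ 0 := by exact_mod_cast hD.ne'
    push_cast
    field_simp
    ring_nf; simp [I_sq]
  rw [e]
  obtain ⟨a, b⟩ := A
  simp only [Complex.mul_re, Complex.sub_re, Complex.sub_im, pow_two, Complex.mul_im, Complex.ofReal_re, Complex.ofReal_im, Complex.I_re, Complex.I_im]
  have h3 : a * a - ((a*a - b*b) * (σ*σ/(σ*σ+t*t)) + (a*b+b*a) * (σ*t/(σ*σ+t*t))) = (a*t - b*σ)^2/(σ*σ+t*t) := by
    have : σ*σ+t*t ≠ 0 := by nlinarith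
    field_simp; ring
  have h4 : 0 ≤ (a*t - b*σ)^2/(σ*σ+t*t) := div_nonneg (sq_nonneg _) (by nlinarith)
  nlinarith

lemma fk_contAt' (k : ℕ) {x : ℂ} (hx : ‖x‖ < 1) : ContinuousAt (fk k) x := by
  rcases Nat.eq_zero_or_pos k with rfl | hk
  · have : fk 0 = fun _ => 0 := by ext x; simp [fk]
    rw [this]; exact continuousAt_const
  · exact fk_contAt hk.ne' hx

lemma local_upper {x : ℂ} (hx : ‖x‖ < 1) (θ₀ : ℝ) {ε : ℝ} (hε : 0 < ε) :
    ∀ᶠ z : (ℝ × ℂ) × ℝ in 𝓝 ((0, x), θ₀), 0 < z.1.1 →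
      z.1.1 * (SS z.1.2 (z.1.1 + z.2 * I)).re ≤ fk (orderOf (Complex.exp (θ₀ * I))) x ^ 2 + ε := by
  have h1 := local_tannery hx θ₀
  set k := orderOf (Complex.exp (θ₀ * I)) with hk
  have h2 := (Complex.continuous_re.tendsto 0).comp h1
  rw [Complex.zero_re] at h2
  have h3 := eventually_nhdsWithin_iff.1 (h2.eventually_lt_const (half_pos hε))
  have h4 : ∀ᶠ z : (ℝ × ℂ) × ℝ in 𝓝 ((0, x), θ₀), fk k z.1.2 ^ 2 < fk k x ^ 2 + ε / 2 := by
    have c : ContinuousAt (fun z : (ℝ × ℂ) × ℝ => fk k z.1.2 ^ 2) ((0,x),θ₀) := by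
      apply ContinuousAt.pow
      exact ContinuousAt.comp (f := fun z : (ℝ × ℂ) × ℝ => z.1.2) (g := fk k) (fk_contAt' k hx) (by fun_prop)
    exact c.tendsto.eventually_lt_const (by simpa using hε)
  filter_upwards [h3, h4] with z h3 h4 hz
  have h5 := h3 hz
  have h6 := saddle_le (Phi k z.1.2) hz (z.2 - θ₀)
  rw [Phi_re] at h6
  simp only [Function.comp, Complex.sub_re] at h5
  rw [Complex.re_ofReal_mul] at h5
  linarith

lemma upper_uniform {x : ℂ} (hx : ‖x‖ < 1) {ε : ℝ} (hε : 0 < ε) :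
    ∀ᶠ z : ℝ × ℂ in 𝓝 (0, x), ∀ θ ∈ Set.Icc (-1:ℝ) (2*Real.pi-1), 0 < z.1 →
      z.1 * (SS z.2 (z.1 + θ * I)).re ≤ MM x ^ 2 + ε := by
  apply isCompact_Icc.eventually_forall_of_forall_eventually (P := fun (z : ℝ × ℂ) (θ : ℝ) => 0 < z.1 →
      z.1 * (SS z.2 (z.1 + θ * I)).re ≤ MM x ^ 2 + ε)
  intro θ₀ _
  filter_upwards [local_upper hx θ₀ hε] with z h hz
  refine (h hz).trans ?_
  have := fk_le_MM hx (orderOf (Complex.exp (θ₀ * I)))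
  have h0 := fk_nonneg (orderOf (Complex.exp (θ₀ * I))) x
  gcongr

lemma MM_nonneg (x : ℂ) : 0 ≤ MM x := (fk_nonneg 1 x).trans (le_max_left _ _)

theorem F_upper {x : ℂ} (hx : ‖x‖ < 1) {ε : ℝ} (hε : 0 < ε) :
    ∀ᶠ z : ℕ × ℂ in atTop ×ˢ 𝓝 x, ‖F z.1 z.2‖ ≤ Real.exp (2 * √z.1 * (MM x + ε)) := by
  set m := MM x + ε with hm
  have hm0 : 0 < m := by have := MM_nonneg x; linarith
  have hδ : 0 < m ^ 2 - MM x ^ 2 := by have := MM_nonneg x; nlinarith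
  have h1 := upper_uniform hx hδ
  have t : Tendsto (fun z : ℕ × ℂ => ((m / √z.1 : ℝ), z.2)) (atTop ×ˢ 𝓝 x) (𝓝 (0, x)) := by
    rw [nhds_prod_eq]
    apply Tendsto.prodMk
    · have : Tendsto (fun n : ℕ => m / √(n:ℝ)) atTop (𝓝 0) :=
        tendsto_const_nhds.div_atTop (Real.tendsto_sqrt_atTop.comp tendsto_natCast_atTop_atTop)
      exact this.comp tendsto_fst
    · exact tendsto_snd
  have h2 := t.eventually h1
  have h3 : ∀ᶠ z : ℕ × ℂ in atTop ×ˢ 𝓝 x, ‖z.2‖ < 1 := tendsto_snd.eventually (ball_ev hx)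
  have h4 : ∀ᶠ z : ℕ × ℂ in atTop ×ˢ 𝓝 x, 0 < z.1 := tendsto_fst.eventually (eventually_gt_atTop 0)
  filter_upwards [h2, h3, h4] with z h2 h3 h4
  have hn : (0:ℝ) < √(z.1:ℝ) := by
    apply Real.sqrt_pos.2; exact_mod_cast h4
  have hs : √(z.1:ℝ) * √(z.1:ℝ) = z.1 := Real.mul_self_sqrt (Nat.cast_nonneg _)
  have hσ : 0 < m / √(z.1:ℝ) := by positivity
  have hc := cauchy h3 hσ h4.ne'
  have hb : ‖∫ θ in (-1:ℝ)..(2*Real.pi-1),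
      Complex.exp (SS z.2 ((m / √(z.1:ℝ) : ℝ) + θ * I) + z.1 * ((m / √(z.1:ℝ) : ℝ) + θ * I))‖
      ≤ Real.exp (2 * √z.1 * m) * |2*Real.pi-1-(-1)| := by
    apply intervalIntegral.norm_integral_le_of_norm_le_const
    intro θ hθ
    rw [Set.uIoc_of_le (by linarith [Real.pi_pos])] at hθ
    have h5 := h2 θ ⟨hθ.1.le, hθ.2⟩ hσ
    rw [Complex.norm_exp]
    apply Real.exp_le_exp.2
    have e : (SS z.2 ((m / √(z.1:ℝ) : ℝ) + θ * I) + z.1 * ((m / √(z.1:ℝ) : ℝ) + θ * I)).re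
       = (SS z.2 ((m / √(z.1:ℝ) : ℝ) + θ * I)).re + √(z.1:ℝ) * m := by
      rw [Complex.add_re]; congr 1
      rw [show (z.1:ℂ) = ((z.1:ℝ):ℂ) by push_cast; rfl, Complex.re_ofReal_mul]
      simp only [Complex.add_re, Complex.ofReal_re, Complex.mul_re, Complex.I_re, Complex.ofReal_im, Complex.I_im]
      nth_rewrite 1 [← hs]
      field_simp; ring
    rw [e]
    rw [div_mul_eq_mul_div, div_le_iff₀ hn] at h5
    have h6 : m * (SS z.2 ((m / √(z.1:ℝ) : ℝ) + θ * I)).re ≤ m * (m * √(z.1:ℝ)) := by nlinarith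
    have h7 := le_of_mul_le_mul_left h6 hm0
    nlinarith
  rw [← hc, norm_mul] at hb
  have e2 : ‖2 * (Real.pi:ℂ)‖ = 2 * Real.pi := by
    rw [norm_mul, Complex.norm_real, Real.norm_of_nonneg Real.pi_pos.le]; simp
  rw [e2, show |2*Real.pi-1-(-1)| = 2 * Real.pi by rw [abs_of_nonneg] <;> linarith [Real.pi_pos]] at hb
  have := Real.pi_pos
  nlinarith [norm_nonneg (F z.1 z.2)]

end PartP3b

section PartP3c
open Complex Filter Topology
set_option linter.unusedVariables false

lemma EE_tendsto : Tendsto EE (𝓝[≠] 0) (𝓝 (-1/2)) := by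
  have h1 : Tendsto (fun z : ℂ => (Complex.exp z - 1) / z) (𝓝[≠] 0) (𝓝 1) := by
    have := (Complex.hasDerivAt_exp 0).tendsto_slope
    rw [Complex.exp_zero] at this
    refine this.congr fun z => ?_
    rw [slope_def_field]; simp
  have h2 : Tendsto (fun z : ℂ => (Complex.exp z - 1 - z) / z ^ 2) (𝓝[≠] 0) (𝓝 (1/2)) := by
    rw [tendsto_iff_norm_sub_tendsto_zero]
    have t0 : Tendsto (fun z : ℂ => ‖z‖) (𝓝[≠] 0) (𝓝 0) := by
      apply tendsto_nhdsWithin_of_tendsto_nhds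
      simpa using (continuous_norm.tendsto (0:ℂ))
    apply squeeze_zero' (Eventually.of_forall fun _ => norm_nonneg _) _ t0
    have e1 : ∀ᶠ z : ℂ in 𝓝[≠] 0, ‖z‖ ≤ 1 := t0.eventually_le_const (by norm_num)
    filter_upwards [e1, self_mem_nhdsWithin] with z hz hz0
    have hz0' : z ≠ 0 := hz0
    have hb := Complex.exp_bound hz (n := 3) (by norm_num)
    simp only [Finset.sum_range_succ, Finset.sum_range_zero] at hb
    norm_num [Nat.factorial] at hb
    have e : (Complex.exp z - 1 - z) / z ^ 2 - 1/2 = (Complex.exp z - (1 + z + z^2/2)) / z^2 := by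
      field_simp; ring
    rw [e, norm_div, norm_pow, div_le_iff₀ (by positivity)]
    refine hb.trans ?_
    nlinarith [norm_nonneg z, pow_nonneg (norm_nonneg z) 3]
  have h3 := (h2.div h1 one_ne_zero).neg
  rw [show -(1/2/1:ℂ) = -1/2 by norm_num] at h3
  refine h3.congr' ?_
  have t0 : Tendsto (fun z : ℂ => (Complex.exp z - 1) / z) (𝓝[≠] 0) (𝓝 1) := h1
  filter_upwards [self_mem_nhdsWithin, h1.eventually_ne one_ne_zero] with z hz0 hne
  have hz0' : z ≠ 0 := hz0
  have : Complex.exp z - 1 ≠ 0 := by intro h; apply hne; rw [h, zero_div]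
  rw [EE_eq hz0' this]
  simp only [Pi.div_apply]
  field_simp

/-- termwise constants -/
noncomputable def ee (θ₀ : ℝ) (l : ℕ) : ℂ :=
  if orderOf (Complex.exp (θ₀ * I)) ∣ l+1 then -1/2 else 1 / (Complex.exp (((l:ℂ)+1) * (θ₀ * I)) - 1)

/-- the constant at a cusp -/
noncomputable def cc (θ₀ : ℝ) (x : ℂ) : ℂ := ∑' l : ℕ, x ^ (l+1) / ((l:ℂ)+1) * ee θ₀ l

lemma EE_bound_sector {z : ℂ} {C : ℝ} (hC : 0 < C) (h0 : 0 < z.re) (h : ‖z‖ ≤ C * z.re) : ‖EE z‖ ≤ 4 * C + 4 := by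
  have hz : z ≠ 0 := by rintro rfl; simp at h0
  have hzn : 0 < ‖z‖ := norm_pos_iff.2 hz
  rcases le_total ‖z‖ (1/2) with h1 | h1
  · exact (EE_bound hz h1).trans (by linarith)
  · unfold EE
    refine (norm_sub_le _ _).trans ?_
    rw [norm_div, norm_div, norm_one]
    have h2 := norm_exp_sub_one_ge z
    have h3 : 1 / ‖z‖ ≤ 2 := by rw [div_le_iff₀ hzn]; linarith
    have h4 : 1 / ‖Complex.exp z - 1‖ ≤ 2 * C := by
      rw [div_le_iff₀ (h0.trans_le h2)]; nlinarith
    linarith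

lemma nres_bound {z η : ℂ} {C : ℝ} (hC : 0 < C) (h0 : 0 < z.re) (h : ‖z‖ ≤ C * z.re) (hη : ‖η‖ = 1)
    (hη1 : 1 ≤ ‖η - 1‖) : ‖1 / (Complex.exp z * η - 1)‖ ≤ 4 * C + 4 := by
  rw [norm_div, norm_one]
  rcases le_total ‖z‖ (1/4) with h1 | h1
  · have h2 := Complex.norm_exp_sub_one_le (x := z) (by linarith)
    have h3 : ‖η - 1‖ - ‖(Complex.exp z - 1) * η‖ ≤ ‖Complex.exp z * η - 1‖ := by
      have := norm_sub_le (Complex.exp z * η - 1) ((Complex.exp z - 1) * η)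
      rw [show Complex.exp z * η - 1 - (Complex.exp z - 1) * η = η - 1 by ring] at this
      linarith
    rw [norm_mul, hη, mul_one] at h3
    have h4 : 1/2 ≤ ‖Complex.exp z * η - 1‖ := by linarith
    rw [div_le_iff₀ (by linarith)]; nlinarith
  · have h2 : z.re ≤ ‖Complex.exp z * η - 1‖ := by
      have h1 : ‖Complex.exp z * η‖ - ‖(1:ℂ)‖ ≤ ‖Complex.exp z * η - 1‖ := norm_sub_norm_le _ _
      rw [norm_mul, hη, Complex.norm_exp, norm_one] at h1
      linarith [Real.add_one_le_exp z.re]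
    rw [div_le_iff₀ (h0.trans_le h2)]; nlinarith

lemma sector_tannery {x : ℂ} (hx : ‖x‖ < 1) {θ₀ : ℝ}
    (hη : ∀ η : ℂ, η ^ (orderOf (Complex.exp (θ₀ * I))) = 1 → η ≠ 1 → 1 ≤ ‖η - 1‖) {C : ℝ} (hC : 0 < C) :
    Tendsto (fun z : ℂ × ℂ => SS z.2 (z.1 + θ₀ * I) - Phi (orderOf (Complex.exp (θ₀ * I))) z.2 ^ 2 / z.1)
      (𝓝[{z | 0 < z.1.re ∧ ‖z.1‖ ≤ C * z.1.re}] (0, x)) (𝓝 (cc θ₀ x)) := by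
  set k := orderOf (Complex.exp (θ₀ * I)) with hk
  obtain ⟨ρ, hρ, hρ1⟩ := exists_between hx
  have hρ0 : 0 ≤ ρ := (norm_nonneg x).trans hρ.le
  have hsr : Summable fun l : ℕ => ρ ^ (l+1) := by
    simpa [pow_succ] using (summable_geometric_of_lt_one hρ0 hρ1).mul_right ρ
  set L := 𝓝[{z : ℂ × ℂ | 0 < z.1.re ∧ ‖z.1‖ ≤ C * z.1.re}] (0, x) with hL
  have ev1 : ∀ᶠ z in L, ‖z.2‖ ≤ ρ := by
    apply eventually_nhdsWithin_of_eventually_nhds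
    have : Continuous (fun z : ℂ × ℂ => ‖z.2‖) := by fun_prop
    exact (this.tendsto (0,x)).eventually_le_const hρ
  have ev2 : ∀ᶠ z in L, 0 < z.1.re ∧ ‖z.1‖ ≤ C * z.1.re := eventually_mem_nhdsWithin
  have c1 : ∀ (y : ℂ) (l : ℕ), ‖y‖ ≤ ρ → ‖y ^ (l+1) / ((l:ℂ)+1)‖ ≤ ρ ^ (l+1) := by
    intro y l hy
    rw [norm_div, norm_pow, norm_natCast_add_one]
    refine (div_le_self (by positivity) (by linarith [(Nat.cast_nonneg l : (0:ℝ) ≤ l)])).trans ?_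
    gcongr
  have c2 : ∀ (y : ℂ) (l : ℕ), ‖y‖ ≤ ρ → ‖(if k ∣ l+1 then y ^ (l+1) / ((l:ℂ)+1)^2 else 0)‖ ≤ ρ ^ (l+1) := by
    intro y l hy
    split_ifs
    · rw [norm_div, norm_pow, norm_pow, norm_natCast_add_one]
      refine (div_le_self (by positivity) (by nlinarith [(Nat.cast_nonneg l : (0:ℝ) ≤ l)])).trans ?_
      gcongr
    · rw [norm_zero]; positivity
  have hl0 : ∀ l : ℕ, ((l:ℂ)+1) ≠ 0 := fun l => by
    rw [← norm_pos_iff, norm_natCast_add_one]; positivity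
  -- the terms
  set g : ℂ → ℕ → ℂ := fun w l => if k ∣ l+1 then EE (((l:ℂ)+1) * w) else
    1 / (Complex.exp (((l:ℂ)+1) * (w + θ₀ * I)) - 1) with hg
  have hgb : ∀ (w : ℂ) (l : ℕ), 0 < w.re → ‖w‖ ≤ C * w.re → ‖g w l‖ ≤ 4 * C + 4 := by
    intro w l h1 h2
    have p1 : 0 < (((l:ℂ)+1) * w).re := by rw [re_natCast_add_one_mul]; positivity
    have p2 : ‖((l:ℂ)+1) * w‖ ≤ C * (((l:ℂ)+1) * w).re := by
      rw [re_natCast_add_one_mul, norm_mul, norm_natCast_add_one]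
      have : (0:ℝ) ≤ (l:ℝ)+1 := by positivity
      nlinarith
    simp only [hg]
    split_ifs with hl
    · exact EE_bound_sector hC p1 p2
    · rw [mul_add, Complex.exp_add]
      apply nres_bound hC p1 p2
      · rw [show ((l:ℂ)+1) * (θ₀ * I) = ((((l:ℝ)+1) * θ₀ : ℝ) : ℂ) * I by push_cast; ring]
        exact Complex.norm_exp_ofReal_mul_I _
      · apply hη
        · have e : Complex.exp (((l:ℂ)+1) * (θ₀ * I)) = Complex.exp (θ₀ * I) ^ (l+1) := by
            rw [← Complex.exp_nat_mul]; push_cast; rfl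
          rw [e, pow_right_comm, hk, pow_orderOf_eq_one, one_pow]
        · exact exp_l_ne hl
  have key : Tendsto (fun z : ℂ × ℂ => ∑' l : ℕ, z.2 ^ (l+1) / ((l:ℂ)+1) * g z.1 l) L (𝓝 (cc θ₀ x)) := by
    unfold cc
    apply tendsto_tsum_of_dominated_convergence (hsr.mul_right (4 * C + 4))
    · intro l
      apply Tendsto.mul
      · apply tendsto_nhdsWithin_of_tendsto_nhds
        have : Continuous (fun z : ℂ × ℂ => z.2 ^ (l+1) / ((l:ℂ)+1)) := by fun_prop
        exact this.tendsto (0,x)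
      · simp only [hg, ee]
        rw [← hk]
        split_ifs with hl
        · apply EE_tendsto.comp
          rw [tendsto_nhdsWithin_iff]
          constructor
          · apply tendsto_nhdsWithin_of_tendsto_nhds
            have : Continuous (fun z : ℂ × ℂ => ((l:ℂ)+1) * z.1) := by fun_prop
            simpa using this.tendsto (0,x)
          · filter_upwards [ev2] with z hz
            apply mul_ne_zero (hl0 l)
            intro h; rw [h] at hz; simp at hz
        · apply tendsto_nhdsWithin_of_tendsto_nhds
          have : ContinuousAt (fun z : ℂ × ℂ => 1 / (Complex.exp (((l:ℂ)+1) * (z.1 + θ₀ * I)) - 1)) (0,x) := by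
            apply ContinuousAt.div (by fun_prop) (by fun_prop)
            simpa [sub_eq_zero] using exp_l_ne hl
          simpa using this.tendsto
    · filter_upwards [ev1, ev2] with z h1 h2 l
      rw [norm_mul]
      have := c1 z.2 l h1
      have := hgb z.1 l h2.1 h2.2
      gcongr
  refine key.congr' ?_
  filter_upwards [ev1, ev2] with z h1 h2
  have hw0 : z.1 ≠ 0 := by intro h; rw [h] at h2; simp at h2
  have s2 : Summable fun l : ℕ => (if k ∣ l+1 then z.2 ^ (l+1) / ((l:ℂ)+1)^2 else 0) :=
    Summable.of_norm_bounded hsr fun l => c2 _ l h1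
  have s3 : Summable fun l : ℕ => z.2 ^ (l+1) / ((l:ℂ)+1) * g z.1 l := by
    refine Summable.of_norm_bounded (hsr.mul_right (4 * C + 4)) fun l => ?_
    rw [norm_mul]
    have := c1 z.2 l h1
    have := hgb z.1 l h2.1 h2.2
    gcongr
  rw [eq_sub_iff_add_eq, ← DD_eq, SS, ← tsum_div_const, ← s3.tsum_add (s2.div_const _)]
  refine tsum_congr fun l => ?_
  simp only [hg]
  split_ifs with hl
  · rw [exp_l_eq hl, add_sub_cancel_right, EE]
    have := hl0 l
    field_simp
    ring
  · simp

end PartP3c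

section PartP3d
open Complex Filter Topology MeasureTheory
set_option linter.unusedVariables false

/-- fourth root -/
noncomputable def rt (n : ℕ) : ℝ := √√(n:ℝ)

lemma rt_sq (n : ℕ) : rt n ^ 2 = √(n:ℝ) := Real.sq_sqrt (Real.sqrt_nonneg _)
lemma rt_four (n : ℕ) : rt n ^ 4 = n := by
  rw [show rt n ^ 4 = (rt n ^ 2)^2 by ring, rt_sq, Real.sq_sqrt (Nat.cast_nonneg _)]
lemma rt_pos {n : ℕ} (hn : 0 < n) : 0 < rt n := by
  apply Real.sqrt_pos.2; apply Real.sqrt_pos.2; exact_mod_cast hn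
lemma rt_tendsto : Tendsto rt atTop atTop :=
  Real.tendsto_sqrt_atTop.comp (Real.tendsto_sqrt_atTop.comp tendsto_natCast_atTop_atTop)

lemma Phi_contAt {k : ℕ} (hk : k ≠ 0) {x : ℂ} (hx : ‖x‖ < 1) (ha : 0 < fk k x) : ContinuousAt (Phi k) x :=
  (Phi_diffAt hk hx (pow_slit_of_fk_pos hk hx ha)).continuousAt

lemma SS_line_cont {y : ℂ} (hy : ‖y‖ < 1) {σ : ℝ} (hσ : 0 < σ) :
    Continuous fun θ : ℝ => SS y (σ + θ * I) := by
  unfold SS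
  have hne : ∀ (l : ℕ) (θ : ℝ), 0 < ‖Complex.exp (((l:ℂ)+1) * (σ + θ * I)) - 1‖ := by
    intro l θ
    have h1 := norm_exp_sub_one_ge (((l:ℂ)+1) * (σ + θ * I))
    rw [re_natCast_add_one_mul] at h1
    refine lt_of_lt_of_le ?_ h1
    have : ((σ:ℂ) + θ * I).re = σ := by simp
    rw [this]; positivity
  apply continuous_tsum (u := fun l : ℕ => ‖y‖ ^ (l+1) * (1 / σ))
  · intro l
    apply Continuous.mul (by fun_prop)
    apply Continuous.div (by fun_prop) (by fun_prop)
    intro θ; exact norm_pos_iff.1 (hne l θ)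
  · have : Summable fun l : ℕ => ‖y‖ ^ (l+1) := by
      simpa [pow_succ] using (summable_geometric_of_lt_one (norm_nonneg _) hy).mul_right ‖y‖
    exact this.mul_right _
  · intro l θ
    rw [norm_mul, norm_div, norm_pow, norm_natCast_add_one]
    have h1 : ‖y‖ ^ (l+1) / ((l:ℝ)+1) ≤ ‖y‖^(l+1) :=
      div_le_self (by positivity) (by linarith [(Nat.cast_nonneg l : (0:ℝ) ≤ l)])
    have h2 : ‖1 / (Complex.exp (((l:ℂ)+1) * (σ + θ * I)) - 1)‖ ≤ 1 / σ := by
      have := sigma_bound hσ θ l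
      rw [norm_div, Complex.norm_real, Real.norm_of_nonneg hσ.le] at this
      rw [norm_div, norm_one, le_div_iff₀ hσ]
      rw [one_div_mul_eq_div]; exact this
    gcongr

/-- scaled integrand near a cusp -/
noncomputable def NI (θ₀ : ℝ) (k : ℕ) (z : ℕ × ℂ) (t : ℝ) : ℂ :=
  Complex.exp (SS z.2 (((Phi k z.2).re / rt z.1 ^ 2 : ℝ) + ((θ₀ + (Phi k z.2).im / rt z.1 ^ 2 + t / rt z.1 ^ 3 : ℝ) : ℂ) * I)
    + z.1 * (((Phi k z.2).re / rt z.1 ^ 2 : ℝ) + (((Phi k z.2).im / rt z.1 ^ 2 + t / rt z.1 ^ 3 : ℝ) : ℂ) * I)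
    - 2 * Phi k z.2 * (rt z.1 : ℂ) ^ 2)

/-- saddle variable -/
noncomputable def ws (k : ℕ) (z : ℕ × ℂ) (t : ℝ) : ℂ := (Phi k z.2 + ((t / rt z.1 : ℝ):ℂ) * I) / (rt z.1 : ℂ) ^ 2

lemma ws_eq (k : ℕ) (z : ℕ × ℂ) (hz : 0 < z.1) (t : ℝ) :
    (((Phi k z.2).re / rt z.1 ^ 2 : ℝ) : ℂ) + (((Phi k z.2).im / rt z.1 ^ 2 + t / rt z.1 ^ 3 : ℝ) : ℂ) * I = ws k z t := by
  unfold ws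
  have h : (rt z.1 : ℂ) ≠ 0 := by exact_mod_cast (rt_pos hz).ne'
  nth_rewrite 3 [← Complex.re_add_im (Phi k z.2)]
  push_cast
  field_simp
  ring

lemma ws_re (k : ℕ) (z : ℕ × ℂ) (hz : 0 < z.1) (t : ℝ) : (ws k z t).re = (Phi k z.2).re / rt z.1 ^ 2 := by
  rw [← ws_eq k z hz t, Complex.add_re, Complex.ofReal_re, Complex.re_ofReal_mul]; simp

lemma NI_eq (θ₀ : ℝ) (k : ℕ) (z : ℕ × ℂ) (hz : 0 < z.1) (ha : 0 < (Phi k z.2).re) (t : ℝ) :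
    NI θ₀ k z t = Complex.exp (-(t:ℂ)^2 / (Phi k z.2 + ((t / rt z.1 : ℝ):ℂ) * I) +
      (SS z.2 (ws k z t + θ₀ * I) - Phi k z.2 ^ 2 / ws k z t)) := by
  unfold NI
  have h : (rt z.1 : ℂ) ≠ 0 := by exact_mod_cast (rt_pos hz).ne'
  have hA : Phi k z.2 + ((t / rt z.1 : ℝ):ℂ) * I ≠ 0 := by
    intro h0
    have := congrArg Complex.re h0
    simp at this; linarith
  have e1 : (((Phi k z.2).re / rt z.1 ^ 2 : ℝ) : ℂ) + ((θ₀ + (Phi k z.2).im / rt z.1 ^ 2 + t / rt z.1 ^ 3 : ℝ) : ℂ) * I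
      = ws k z t + θ₀ * I := by
    rw [← ws_eq k z hz t]; push_cast; ring
  rw [e1, ws_eq k z hz t]
  congr 1
  have e2 : (z.1 : ℂ) = (rt z.1 : ℂ)^4 := by
    have := rt_four z.1
    exact_mod_cast this.symm
  have hI : I ^ 2 = -1 := I_sq
  have e3 : (z.1 : ℂ) * ws k z t - 2 * Phi k z.2 * (rt z.1 : ℂ) ^ 2 =
      -(t:ℂ)^2 / (Phi k z.2 + ((t / rt z.1 : ℝ):ℂ) * I) - Phi k z.2 ^ 2 / ws k z t := by
    rw [e2]; unfold ws
    generalize hB : Phi k z.2 + ((t / rt z.1 : ℝ):ℂ) * I = B at *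
    have hA' : Phi k z.2 = B - (t / rt z.1 : ℂ) * I := by rw [← hB]; push_cast; ring
    rw [hA']
    field_simp
    ring_nf
    rw [hI]; ring
  linear_combination e3

lemma near_tendsto {k : ℕ} (hk : k ≠ 0) {x : ℂ} (hx : ‖x‖ < 1) (ha : 0 < fk k x) {θ₀ : ℝ}
    (hθ : orderOf (Complex.exp (θ₀ * I)) = k)
    (hη : ∀ η : ℂ, η ^ k = 1 → η ≠ 1 → 1 ≤ ‖η - 1‖) :
    Tendsto (fun z : ℕ × ℂ => ∫ t in (-rt z.1)..(rt z.1), NI θ₀ k z t) (atTop ×ˢ 𝓝 x)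
      (𝓝 (Complex.exp (cc θ₀ x) * (Real.pi / (1 / Phi k x)) ^ (1/2:ℂ))) := by
  set L : Filter (ℕ × ℂ) := atTop ×ˢ 𝓝 x with hL
  set a₀ := fk k x with ha₀
  set A₀ := Phi k x with hA₀
  have hA₀re : A₀.re = a₀ := Phi_re k x
  set B := ‖A₀‖ + 2 with hB
  have hBpos : 0 < B := by positivity
  set C := 2 * B / a₀ with hC
  have hCpos : 0 < C := by positivity
  have tq : Tendsto (fun z : ℕ × ℂ => rt z.1) L atTop := rt_tendsto.comp tendsto_fst
  have tA : Tendsto (fun z : ℕ × ℂ => Phi k z.2) L (𝓝 A₀) := (Phi_contAt hk hx ha).tendsto.comp tendsto_snd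
  have ty : Tendsto (fun z : ℕ × ℂ => z.2) L (𝓝 x) := tendsto_snd
  have e1 : ∀ᶠ z in L, a₀ / 2 < (Phi k z.2).re := by
    have := (Complex.continuous_re.tendsto A₀).comp tA
    exact this.eventually_const_lt (by rw [hA₀re]; linarith)
  have e2 : ∀ᶠ z in L, ‖Phi k z.2‖ < ‖A₀‖ + 1 := tA.norm.eventually_lt_const (by linarith)
  have e3 : ∀ᶠ z : ℕ × ℂ in L, 0 < z.1 := tendsto_fst.eventually (eventually_gt_atTop 0)
  have e4 : ∀ᶠ z : ℕ × ℂ in L, ‖z.2‖ < 1 := ty.eventually (ball_ev hx)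
  have sec : ∀ z : ℕ × ℂ, a₀ / 2 < (Phi k z.2).re → ‖Phi k z.2‖ < ‖A₀‖ + 1 → 0 < z.1 → ∀ t : ℝ, |t| ≤ rt z.1 →
      ‖Phi k z.2 + ((t / rt z.1 : ℝ):ℂ) * I‖ ≤ B ∧ 0 < (ws k z t).re ∧ ‖ws k z t‖ ≤ C * (ws k z t).re ∧
        ‖ws k z t‖ ≤ B / rt z.1 ^ 2 := by
    intro z h1 h2 h3 t ht
    have hq := rt_pos h3
    have n1 : ‖Phi k z.2 + ((t / rt z.1 : ℝ):ℂ) * I‖ ≤ B := by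
      refine (norm_add_le _ _).trans ?_
      rw [norm_mul, Complex.norm_I, mul_one, Complex.norm_real, Real.norm_eq_abs, abs_div, abs_of_pos hq]
      have : |t| / rt z.1 ≤ 1 := div_le_one_of_le₀ ht hq.le
      linarith
    have n2 : ‖ws k z t‖ ≤ B / rt z.1 ^ 2 := by
      unfold ws
      rw [norm_div, norm_pow, Complex.norm_real, Real.norm_of_nonneg hq.le]
      gcongr
    refine ⟨n1, ?_, ?_, n2⟩
    · rw [ws_re k z h3 t]; apply div_pos _ (by positivity); linarith
    · rw [ws_re k z h3 t]
      refine n2.trans ?_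
      rw [← mul_div_assoc]
      gcongr
      rw [hC, div_mul_eq_mul_div, le_div_iff₀ ha]
      nlinarith
  have st := sector_tannery hx (θ₀ := θ₀) (by rw [hθ]; exact hη) hCpos
  rw [hθ] at st
  -- uniform bound
  have e5 : ∀ᶠ z in L, ∀ t : ℝ, |t| ≤ rt z.1 →
      ‖SS z.2 (ws k z t + θ₀ * I) - Phi k z.2 ^ 2 / ws k z t - cc θ₀ x‖ < 1 := by
    have h1 := eventually_nhdsWithin_iff.1 (Metric.tendsto_nhds.1 st 1 one_pos)
    obtain ⟨δ, hδ, h2⟩ := Metric.eventually_nhds_iff.1 h1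
    have h3 : ∀ᶠ z in L, dist z.2 x < δ := ty.eventually (Metric.ball_mem_nhds x hδ)
    have h4 : ∀ᶠ z in L, B / rt z.1 ^ 2 < δ := by
      have : Tendsto (fun z : ℕ × ℂ => B / rt z.1 ^ 2) L (𝓝 0) :=
        tendsto_const_nhds.div_atTop ((tendsto_pow_atTop two_ne_zero).comp tq)
      exact this.eventually_lt_const hδ
    filter_upwards [e1, e2, e3, h3, h4] with z h1 h2' h3 h4 h5 t ht
    obtain ⟨s1, s2, s3, s4⟩ := sec z h1 h2' h3 t ht
    have := h2 (y := (ws k z t, z.2)) (by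
      rw [Prod.dist_eq, max_lt_iff]
      exact ⟨by simpa using s4.trans_lt h5, h4⟩) ⟨s2, s3⟩
    rwa [dist_eq_norm] at this
  set κ := a₀ / (2 * B ^ 2) with hκ
  have hκ0 : 0 < κ := by positivity
  have hinv : ∀ w : ℂ, (1 / w).re = w.re / ‖w‖^2 := by
    intro w; rw [one_div, Complex.inv_re, Complex.normSq_eq_norm_sq]
  have key : Tendsto (fun z : ℕ × ℂ => ∫ t : ℝ, (Set.Ioc (-rt z.1) (rt z.1)).indicator (NI θ₀ k z) t) L
      (𝓝 (∫ t : ℝ, Complex.exp (cc θ₀ x) * Complex.exp (-(1/A₀) * (t:ℂ)^2))) := by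
    apply tendsto_integral_filter_of_dominated_convergence
      (fun t => Real.exp ((cc θ₀ x).re + 1) * Real.exp (-κ * t^2))
    · filter_upwards [e1, e3, e4] with z h1 h3 h4
      apply AEStronglyMeasurable.indicator _ measurableSet_Ioc
      apply Continuous.aestronglyMeasurable
      unfold NI
      have hσ : 0 < (Phi k z.2).re / rt z.1 ^ 2 := by
        have := rt_pos h3
        apply div_pos _ (by positivity); linarith
      have c1 := (SS_line_cont h4 hσ).comp (g := fun θ : ℝ => SS z.2 (((Phi k z.2).re / rt z.1 ^ 2 : ℝ) + θ * I))
        (f := fun t : ℝ => θ₀ + (Phi k z.2).im / rt z.1 ^ 2 + t / rt z.1 ^ 3) (by fun_prop)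
      simp only [Function.comp_def] at c1
      fun_prop
    · filter_upwards [e1, e2, e3, e5] with z h1 h2 h3 h5
      refine Eventually.of_forall fun t => ?_
      by_cases ht : t ∈ Set.Ioc (-rt z.1) (rt z.1)
      · rw [Set.indicator_of_mem ht]
        have ht' : |t| ≤ rt z.1 := abs_le.2 ⟨ht.1.le, ht.2⟩
        have hre : 0 < (Phi k z.2).re := by linarith
        rw [NI_eq θ₀ k z h3 hre, Complex.norm_exp, ← Real.exp_add]
        apply Real.exp_le_exp.2
        rw [Complex.add_re]
        have b1 := (Complex.abs_re_le_norm _).trans (h5 t ht').le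
        rw [Complex.sub_re, abs_le] at b1
        obtain ⟨s1, -⟩ := sec z h1 h2 h3 t ht'
        have b2 : (-(t:ℂ)^2 / (Phi k z.2 + ((t / rt z.1 : ℝ):ℂ) * I)).re ≤ -κ * t^2 := by
          rw [show -(t:ℂ)^2 / (Phi k z.2 + ((t / rt z.1 : ℝ):ℂ) * I) =
            ((-t^2 : ℝ):ℂ) * (1 / (Phi k z.2 + ((t / rt z.1 : ℝ):ℂ) * I)) by push_cast; ring,
            Complex.re_ofReal_mul, hinv]
          have r : (Phi k z.2 + ((t / rt z.1 : ℝ):ℂ) * I).re = (Phi k z.2).re := by simp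
          rw [r]
          have np : 0 < ‖Phi k z.2 + ((t / rt z.1 : ℝ):ℂ) * I‖ := by
            apply norm_pos_iff.2; intro h0; rw [h0] at r; simp at r; linarith
          have : κ ≤ (Phi k z.2).re / ‖Phi k z.2 + ((t / rt z.1 : ℝ):ℂ) * I‖^2 := by
            rw [hκ, ← div_div]
            gcongr
          nlinarith [sq_nonneg t]
        linarith [b1.2]
      · rw [Set.indicator_of_notMem ht, norm_zero]; positivity
    · exact (integrable_exp_neg_mul_sq hκ0).const_mul _
    · refine Eventually.of_forall fun t => ?_
      have h0 : ∀ᶠ z in L, |t| < rt z.1 := tq.eventually_gt_atTop _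
      have ts : Tendsto (fun z : ℕ × ℂ => Phi k z.2 + ((t / rt z.1 : ℝ):ℂ) * I) L (𝓝 A₀) := by
        have h1 : Tendsto (fun z : ℕ × ℂ => t / rt z.1) L (𝓝 0) := tendsto_const_nhds.div_atTop tq
        have h2 := ((Complex.continuous_ofReal.tendsto 0).comp h1).mul_const I
        have := tA.add h2
        simpa using this
      have tw : Tendsto (fun z : ℕ × ℂ => (ws k z t, z.2)) L
          (𝓝[{z | 0 < z.1.re ∧ ‖z.1‖ ≤ C * z.1.re}] (0, x)) := by
        rw [tendsto_nhdsWithin_iff]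
        constructor
        · rw [nhds_prod_eq]
          refine Tendsto.prodMk ?_ ty
          have h1 : Tendsto (fun z : ℕ × ℂ => B / rt z.1 ^ 2) L (𝓝 0) :=
            tendsto_const_nhds.div_atTop ((tendsto_pow_atTop two_ne_zero).comp tq)
          apply squeeze_zero_norm' _ h1
          filter_upwards [e1, e2, e3, h0] with z h1 h2 h3 h4
          exact (sec z h1 h2 h3 t h4.le).2.2.2
        · filter_upwards [e1, e2, e3, h0] with z h1 h2 h3 h4
          have := sec z h1 h2 h3 t h4.le
          exact ⟨this.2.1, this.2.2.1⟩
      have hA0 : A₀ ≠ 0 := by intro h; rw [h] at hA₀re; simp at hA₀re; linarith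
      have t1 := (tendsto_const_nhds (x := -(t:ℂ)^2)).div ts hA0
      have t2 := (Complex.continuous_exp.tendsto _).comp (t1.add (st.comp tw))
      have : Complex.exp (cc θ₀ x) * Complex.exp (-(1/A₀) * (t:ℂ)^2) = Complex.exp (-(t:ℂ)^2 / A₀ + cc θ₀ x) := by
        rw [← Complex.exp_add]; congr 1; ring
      rw [this]
      refine t2.congr' ?_
      filter_upwards [e1, e3, h0] with z h1 h3 h4
      have hre : 0 < (Phi k z.2).re := by linarith
      have hm : t ∈ Set.Ioc (-rt z.1) (rt z.1) := ⟨(abs_lt.1 h4).1, (abs_lt.1 h4).2.le⟩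
      rw [Set.indicator_of_mem hm, NI_eq θ₀ k z h3 hre]
      rfl
  rw [integral_const_mul, integral_gaussian_complex] at key
  · refine key.congr' ?_
    filter_upwards [e3] with z h3
    rw [intervalIntegral.integral_of_le (by linarith [rt_pos h3]), integral_indicator measurableSet_Ioc]
  · rw [hinv, hA₀re]
    have : 0 < ‖A₀‖ := by
      apply norm_pos_iff.2; intro h; rw [h] at hA₀re; simp at hA₀re; linarith
    positivity

end PartP3d

section PartP3e
open Complex Filter Topology MeasureTheory
set_option linter.unusedVariables false

lemma saddle_deficit (A : ℂ) {σ : ℝ} (hσ : 0 < σ) (t : ℝ) (ha : 0 < A.re)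
    (h : 1 ≤ |t * A.re / σ - A.im|) :
    (A ^ 2 * ((σ:ℂ) / (σ + t * I))).re ≤ A.re ^ 2 - A.re^2 / (A.re^2 + (1 + |A.im|)^2) := by
  have hD : 0 < σ^2 + t^2 := by positivity
  have e : (σ:ℂ) / (σ + t * I) = ((σ^2/(σ^2+t^2) : ℝ):ℂ) - ((σ*t/(σ^2+t^2) : ℝ):ℂ) * I := by
    have h1 := w_ne hσ t
    have h2 : ((σ:ℂ)^2+t^2) ≠ 0 := by exact_mod_cast hD.ne'
    push_cast
    field_simp
    ring_nf
    rw [I_sq]; ring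
  have e2 : (A ^ 2 * ((σ:ℂ) / (σ + t * I))).re = A.re^2 - (A.re * t - A.im * σ)^2 / (σ^2+t^2) := by
    rw [e]
    simp only [pow_two, Complex.mul_re, Complex.mul_im, Complex.sub_re, Complex.sub_im, Complex.ofReal_re, Complex.ofReal_im, Complex.I_re, Complex.I_im]
    have : σ*σ+t*t ≠ 0 := by nlinarith
    field_simp
    ring
  rw [e2]
  generalize A.re = a at *
  generalize A.im = b at *
  obtain ⟨u, hu⟩ : ∃ u, u = t * a / σ := ⟨_, rfl⟩
  have ht : t = u * σ / a := by rw [hu]; field_simp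
  rw [← hu] at h
  have e3 : (a * t - b * σ)^2 / (σ^2+t^2) = a^2 * (u-b)^2 / (a^2 + u^2) := by
    rw [ht]; field_simp
  rw [e3]
  have h1 : 1 ≤ (u-b)^2 := by rw [← sq_abs]; nlinarith [abs_nonneg (u-b)]
  have h2 : u^2 ≤ (u-b)^2 * (1+|b|)^2 := by
    rw [← sq_abs u, ← sq_abs (u-b), ← mul_pow]
    apply pow_le_pow_left₀ (abs_nonneg _)
    have : |u| ≤ |u-b| + |b| := by
      have := abs_add_le (u-b) b
      simpa using this
    nlinarith [abs_nonneg b]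
  have : a^2 / (a^2 + (1+|b|)^2) ≤ a^2 * (u-b)^2 / (a^2 + u^2) := by
    rw [div_le_div_iff₀ (by positivity) (by positivity)]
    have : a^2 + u^2 ≤ (u-b)^2 * (a^2 + (1+|b|)^2) := by nlinarith [sq_nonneg a]
    nlinarith [sq_nonneg a]
  linarith

lemma rest_uniform {k : ℕ} (hk : k ≠ 0) {x : ℂ} (hx : ‖x‖ < 1) (ha : 0 < fk k x)
    (dom : ∀ j, j ≠ k → fk j x < fk k x) (H : Finset ℝ)
    (hH : ∀ θ ∈ Set.Icc (-1:ℝ) (2*Real.pi-1), orderOf (Complex.exp (θ * I)) = k → θ ∈ H) :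
    ∃ η > 0, ∀ᶠ z : ℝ × ℂ in 𝓝 (0, x), ∀ θ ∈ Set.Icc (-1:ℝ) (2*Real.pi-1), 0 < z.1 →
      (∀ h ∈ H, 1 ≤ |(θ - h) * (Phi k z.2).re / z.1 - (Phi k z.2).im|) →
      z.1 * (SS z.2 (z.1 + θ * I)).re ≤ (Phi k z.2).re ^ 2 - η := by
  have key : ∀ᶠ p : (ℝ × ℂ) × ℝ in 𝓝 ((0, x), 0), ∀ θ ∈ Set.Icc (-1:ℝ) (2*Real.pi-1), 0 < p.1.1 →
      (∀ h ∈ H, 1 ≤ |(θ - h) * (Phi k p.1.2).re / p.1.1 - (Phi k p.1.2).im|) →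
      p.1.1 * (SS p.1.2 (p.1.1 + θ * I)).re ≤ (Phi k p.1.2).re ^ 2 - p.2 := by
    apply isCompact_Icc.eventually_forall_of_forall_eventually
      (P := fun (p : (ℝ × ℂ) × ℝ) (θ : ℝ) => 0 < p.1.1 →
      (∀ h ∈ H, 1 ≤ |(θ - h) * (Phi k p.1.2).re / p.1.1 - (Phi k p.1.2).im|) →
      p.1.1 * (SS p.1.2 (p.1.1 + θ * I)).re ≤ (Phi k p.1.2).re ^ 2 - p.2)
    intro θ₀ hθ₀
    have pr : Tendsto (fun p : ((ℝ × ℂ) × ℝ) × ℝ => (p.1.1, p.2)) (𝓝 (((0, x), 0), θ₀)) (𝓝 ((0,x),θ₀)) :=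
      (Continuous.tendsto (by fun_prop) _)
    have py : Tendsto (fun p : ((ℝ × ℂ) × ℝ) × ℝ => p.1.1.2) (𝓝 (((0, x), 0), θ₀)) (𝓝 x) :=
      (Continuous.tendsto (by fun_prop) (((0, x), 0), θ₀))
    have pe : Tendsto (fun p : ((ℝ × ℂ) × ℝ) × ℝ => p.1.2) (𝓝 (((0, x), 0), θ₀)) (𝓝 0) :=
      (Continuous.tendsto (by fun_prop) (((0, x), 0), θ₀))
    have pA := (Phi_contAt hk hx ha).tendsto.comp py
    have pre := (Complex.continuous_re.tendsto _).comp pA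
    rw [Phi_re] at pre
    have pim := (Complex.continuous_im.tendsto _).comp pA
    by_cases ho : orderOf (Complex.exp (θ₀ * I)) = k
    · set δ := (fk k x)^2 / ((fk k x)^2 + (1 + |(Phi k x).im|)^2) with hδ
      have hδ0 : 0 < δ := by positivity
      have pd : Tendsto (fun p : ((ℝ × ℂ) × ℝ) × ℝ => (Phi k p.1.1.2).re^2 / ((Phi k p.1.1.2).re^2 + (1+|(Phi k p.1.1.2).im|)^2))
          (𝓝 (((0, x), 0), θ₀)) (𝓝 δ) :=
        (pre.pow 2).div ((pre.pow 2).add ((pim.abs.const_add 1).pow 2)) (by positivity)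
      have lt := (Complex.continuous_re.tendsto 0).comp (local_tannery hx θ₀)
      rw [Complex.zero_re] at lt
      have lt2 := pr.eventually (eventually_nhdsWithin_iff.1 (lt.eventually_lt_const (show (0:ℝ) < δ/4 by positivity)))
      filter_upwards [lt2, pd.eventually_const_lt (show δ/2 < δ by linarith), pe.eventually_lt_const (show (0:ℝ) < δ/4 by positivity),
        pre.eventually_const_lt ha] with p h1 h2 h3 h4 hσ hh
      have h5 := h1 hσ
      simp only [Function.comp, ho] at h5 h4
      rw [Complex.sub_re, Complex.re_ofReal_mul] at h5
      have h6 := saddle_deficit (Phi k p.1.1.2) hσ (p.2 - θ₀) h4 (hh θ₀ (hH θ₀ hθ₀ ho))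
      linarith
    · have hlt : fk (orderOf (Complex.exp (θ₀ * I))) x ^ 2 < fk k x ^ 2 := by
        have := dom _ ho
        have := fk_nonneg (orderOf (Complex.exp (θ₀ * I))) x
        nlinarith
      set δ := fk k x ^ 2 - fk (orderOf (Complex.exp (θ₀ * I))) x ^ 2 with hδ
      have hδ0 : 0 < δ := by linarith
      filter_upwards [pr.eventually (local_upper hx θ₀ (show 0 < δ/4 by linarith)),
        (pre.pow 2).eventually_const_lt (show fk k x ^ 2 - δ/4 < fk k x ^ 2 by linarith),
        pe.eventually_lt_const (show (0:ℝ) < δ/4 by positivity)] with p h1 h2 h3 hσ _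
      have := h1 hσ
      simp only [Function.comp] at h2
      linarith
  rw [nhds_prod_eq, eventually_prod_iff] at key
  obtain ⟨pa, hpa, pb, hpb, h⟩ := key
  obtain ⟨η, hη, hη0⟩ := ((hpb.filter_mono nhdsWithin_le_nhds).and (self_mem_nhdsWithin (a := (0:ℝ)) (s := Set.Ioi 0))).exists
  exact ⟨η, hη0, hpa.mono fun z hz => h hz hη⟩

/-- the part of the circle away from the cusps -/
def NH (k : ℕ) (z : ℕ × ℂ) (h : ℝ) : Set ℝ :=
  Set.Ioc (h + (Phi k z.2).im / rt z.1 ^ 2 - 1 / rt z.1 ^ 2) (h + (Phi k z.2).im / rt z.1 ^ 2 + 1 / rt z.1 ^ 2)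

noncomputable def INT (k : ℕ) (z : ℕ × ℂ) (θ : ℝ) : ℂ :=
  Complex.exp (SS z.2 (((Phi k z.2).re / rt z.1 ^ 2 : ℝ) + θ * I) + z.1 * (((Phi k z.2).re / rt z.1 ^ 2 : ℝ) + θ * I))

lemma rest_bound {k : ℕ} (hk : k ≠ 0) {x : ℂ} (hx : ‖x‖ < 1) (ha : 0 < fk k x)
    (dom : ∀ j, j ≠ k → fk j x < fk k x) (H : Finset ℝ)
    (hH : ∀ θ ∈ Set.Icc (-1:ℝ) (2*Real.pi-1), orderOf (Complex.exp (θ * I)) = k → θ ∈ H) :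
    ∃ η > 0, ∀ᶠ z : ℕ × ℂ in atTop ×ˢ 𝓝 x, ∀ θ ∈ Set.Icc (-1:ℝ) (2*Real.pi-1),
      (∀ h ∈ H, θ ∉ NH k z h) → ‖INT k z θ‖ ≤ Real.exp (rt z.1 ^ 2 * (2 * (Phi k z.2).re - η)) := by
  obtain ⟨η, hη, h1⟩ := rest_uniform hk hx ha dom H hH
  have tA : Tendsto (fun z : ℕ × ℂ => (Phi k z.2).re) (atTop ×ˢ 𝓝 x) (𝓝 (fk k x)) := by
    rw [← Phi_re]
    exact (Complex.continuous_re.tendsto _).comp ((Phi_contAt hk hx ha).tendsto.comp tendsto_snd)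
  have tq : Tendsto (fun z : ℕ × ℂ => rt z.1) (atTop ×ˢ 𝓝 x) atTop := rt_tendsto.comp tendsto_fst
  have t : Tendsto (fun z : ℕ × ℂ => (((Phi k z.2).re / rt z.1 ^ 2 : ℝ), z.2)) (atTop ×ˢ 𝓝 x) (𝓝 (0, x)) := by
    rw [nhds_prod_eq]
    exact (tA.div_atTop ((tendsto_pow_atTop two_ne_zero).comp tq)).prodMk tendsto_snd
  refine ⟨η / (2 * fk k x), by positivity, ?_⟩
  filter_upwards [t.eventually h1, tA.eventually_const_lt ha, tA.eventually_lt_const (show fk k x < 2 * fk k x by linarith),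
    tendsto_fst.eventually (eventually_gt_atTop 0)] with z h2 h3 h4 h5 θ hθ hN
  have hq := rt_pos h5
  set a := (Phi k z.2).re
  set b := (Phi k z.2).im
  have h6 := h2 θ hθ (by positivity) (by
    intro h hh
    have h7 := hN h hh
    simp only [NH, Set.mem_Ioc, not_and_or, not_lt, not_le] at h7
    have e : (θ - h) * a / (a / rt z.1 ^ 2) - b = (θ - h - b / rt z.1^2) * rt z.1 ^ 2 := by
      field_simp
    rw [e, abs_mul, abs_of_pos (pow_pos hq 2), ← div_le_iff₀ (by positivity), le_abs]
    rcases h7 with h7 | h7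
    · right; linarith
    · left; linarith)
  unfold INT
  rw [Complex.norm_exp]
  apply Real.exp_le_exp.2
  have e1 : ((z.1:ℂ) * (((a / rt z.1 ^ 2 : ℝ):ℂ) + θ * I)).re = rt z.1 ^ 2 * a := by
    rw [← Complex.ofReal_natCast, Complex.re_ofReal_mul, Complex.add_re, Complex.ofReal_re, Complex.re_ofReal_mul, Complex.I_re, mul_zero, add_zero, ← rt_four]
    field_simp
  rw [Complex.add_re, e1]
  set S := (SS z.2 (((a / rt z.1 ^ 2 : ℝ):ℂ) + θ * I)).re
  have h8 : S ≤ rt z.1 ^ 2 * ((a^2 - η) / a) := by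
    rw [← mul_div_assoc, le_div_iff₀ h3]
    rw [div_mul_eq_mul_div, div_le_iff₀ (by positivity)] at h6
    linarith
  have h9 : (a^2 - η)/a ≤ a - η / (2 * fk k x) := by
    rw [sub_div]
    have : η / (2 * fk k x) ≤ η / a := by gcongr
    have e : a^2/a = a := by field_simp
    linarith
  nlinarith [pow_pos hq 2]

end PartP3e

section PartP3f
open Complex Filter Topology MeasureTheory
set_option linter.unusedVariables false

lemma INT_cont {k : ℕ} {z : ℕ × ℂ} (hy : ‖z.2‖ < 1) (hσ : 0 < (Phi k z.2).re / rt z.1 ^ 2) : Continuous (INT k z) := by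
  unfold INT
  have c1 := SS_line_cont hy hσ
  fun_prop

lemma INT_NH {k : ℕ} {z : ℕ × ℂ} (hz : 0 < z.1) (h : ℝ) :
    (rt z.1 : ℂ) ^ 3 * Complex.exp (-(2 * Phi k z.2 * (rt z.1:ℂ)^2)) * ∫ θ in NH k z h, INT k z θ =
      Complex.exp (z.1 * h * I) * ∫ t in (-rt z.1)..(rt z.1), NI h k z t := by
  have hq := rt_pos hz
  have hq' : (rt z.1 : ℂ) ≠ 0 := by exact_mod_cast hq.ne'
  unfold NH
  have hp : 0 < 1 / rt z.1 ^ 2 := by positivity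
  rw [← intervalIntegral.integral_of_le (by linarith)]
  have e := intervalIntegral.inv_smul_integral_comp_add_div (a := -rt z.1) (b := rt z.1) (INT k z) (rt z.1 ^ 3) (h + (Phi k z.2).im / rt z.1 ^ 2)
  rw [show h + (Phi k z.2).im / rt z.1 ^ 2 + -rt z.1 / rt z.1 ^ 3 = h + (Phi k z.2).im / rt z.1 ^ 2 - 1 / rt z.1 ^ 2 by field_simp; ring,
    show h + (Phi k z.2).im / rt z.1 ^ 2 + rt z.1 / rt z.1 ^ 3 = h + (Phi k z.2).im / rt z.1 ^ 2 + 1 / rt z.1 ^ 2 by field_simp] at e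
  rw [← e]
  rw [Complex.real_smul]
  rw [← intervalIntegral.integral_const_mul, ← intervalIntegral.integral_const_mul, ← intervalIntegral.integral_const_mul]
  apply intervalIntegral.integral_congr
  intro t _
  simp only [INT, NI]
  have e2 : (rt z.1 : ℂ)^3 * ((((rt z.1^3)⁻¹ : ℝ)):ℂ) = 1 := by push_cast; field_simp
  rw [← Complex.exp_add]
  calc _ = ((rt z.1 : ℂ)^3 * ((((rt z.1^3)⁻¹ : ℝ)):ℂ)) * (Complex.exp (-(2 * Phi k z.2 * (rt z.1:ℂ)^2)) * Complex.exp (SS z.2 (((Phi k z.2).re / rt z.1 ^ 2 : ℝ) + ((h + (Phi k z.2).im / rt z.1 ^ 2 + t / rt z.1 ^ 3 : ℝ) : ℂ) * I)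
    + z.1 * (((Phi k z.2).re / rt z.1 ^ 2 : ℝ) + ((h + (Phi k z.2).im / rt z.1 ^ 2 + t / rt z.1 ^ 3 : ℝ) : ℂ) * I))) := by ring
    _ = _ := by
      rw [e2, one_mul, ← Complex.exp_add]
      congr 1
      push_cast
      ring

lemma F_asymp {k : ℕ} (hk : k ≠ 0) {x : ℂ} (hx : ‖x‖ < 1) (ha : 0 < fk k x)
    (dom : ∀ j, j ≠ k → fk j x < fk k x) (H : Finset ℝ)
    (hH : ∀ θ ∈ Set.Icc (-1:ℝ) (2*Real.pi-1), orderOf (Complex.exp (θ * I)) = k → θ ∈ H)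
    (hI : ∀ h ∈ H, h ∈ Set.Ioo (-1:ℝ) (2*Real.pi-1)) :
    Tendsto (fun z : ℕ × ℂ => (rt z.1 : ℂ) ^ 3 * Complex.exp (-(2 * Phi k z.2 * (rt z.1:ℂ)^2)) * (2 * (Real.pi:ℂ) * F z.1 z.2)
      - ∑ h ∈ H, Complex.exp (z.1 * h * I) * ∫ t in (-rt z.1)..(rt z.1), NI h k z t) (atTop ×ˢ 𝓝 x) (𝓝 0) := by
  obtain ⟨η, hη, hrest⟩ := rest_bound hk hx ha dom H hH
  set L : Filter (ℕ × ℂ) := atTop ×ˢ 𝓝 x with hL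
  have tq : Tendsto (fun z : ℕ × ℂ => rt z.1) L atTop := rt_tendsto.comp tendsto_fst
  have tq2 : Tendsto (fun z : ℕ × ℂ => rt z.1 ^ 2) L atTop := (tendsto_pow_atTop two_ne_zero).comp tq
  have tA : Tendsto (fun z : ℕ × ℂ => Phi k z.2) L (𝓝 (Phi k x)) := (Phi_contAt hk hx ha).tendsto.comp tendsto_snd
  have tre : Tendsto (fun z : ℕ × ℂ => (Phi k z.2).re) L (𝓝 (fk k x)) := by
    rw [← Phi_re]; exact (Complex.continuous_re.tendsto _).comp tA
  have tim : Tendsto (fun z : ℕ × ℂ => (Phi k z.2).im) L (𝓝 (Phi k x).im) := (Complex.continuous_im.tendsto _).comp tA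
  have tb := tim.div_atTop tq2
  have t1 := (tendsto_const_nhds (x := (1:ℝ)) (f := L)).div_atTop tq2
  have tl : ∀ h : ℝ, Tendsto (fun z : ℕ × ℂ => h + (Phi k z.2).im / rt z.1 ^ 2 - 1 / rt z.1 ^ 2) L (𝓝 h) := by
    intro h; simpa using (tb.const_add h).sub t1
  have tu : ∀ h : ℝ, Tendsto (fun z : ℕ × ℂ => h + (Phi k z.2).im / rt z.1 ^ 2 + 1 / rt z.1 ^ 2) L (𝓝 h) := by
    intro h; simpa using (tb.const_add h).add t1
  have c1 : ∀ᶠ z in L, ∀ h ∈ H, NH k z h ⊆ Set.Ioc (-1:ℝ) (2*Real.pi-1) := by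
    rw [eventually_all_finset]
    intro h hh
    filter_upwards [(tl h).eventually_const_lt (hI h hh).1, (tu h).eventually_lt_const (hI h hh).2] with z h1 h2
    exact Set.Ioc_subset_Ioc h1.le h2.le
  have c2 : ∀ᶠ z in L, ∀ h ∈ H, ∀ h' ∈ H, h < h' → Disjoint (NH k z h) (NH k z h') := by
    rw [eventually_all_finset]
    intro h hh
    rw [eventually_all_finset]
    intro h' hh'
    by_cases hlt : h < h'
    · filter_upwards [(tu h).eventually_lt_const (show h < (h+h')/2 by linarith),
        (tl h').eventually_const_lt (show (h+h')/2 < h' by linarith)] with z h1 h2 _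
      rw [Set.disjoint_left]
      intro θ m1 m2
      simp only [NH, Set.mem_Ioc] at m1 m2
      linarith [m1.2, m2.1]
    · exact Eventually.of_forall fun z hc => absurd hc hlt
  have tz : Tendsto (fun z : ℕ × ℂ => 2 * Real.pi * (rt z.1 ^ 3 * Real.exp (-(η * rt z.1 ^ 2)))) L (𝓝 0) := by
    have h1 : Tendsto (fun s : ℝ => s ^ 2 * Real.exp (-η * s)) atTop (𝓝 0) := by
      have := tendsto_rpow_mul_exp_neg_mul_atTop_nhds_zero 2 η hη
      simpa using this
    have h2 := (h1.comp tq2).const_mul (2 * Real.pi)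
    rw [mul_zero] at h2
    refine squeeze_zero' (Eventually.of_forall fun z => ?_) ?_ h2
    · have := Real.sqrt_nonneg (√(z.1:ℝ))
      have : 0 ≤ rt z.1 := this
      positivity
    · filter_upwards [tq.eventually_ge_atTop 1] with z hz
      simp only [Function.comp]
      rw [show -η * rt z.1 ^ 2 = -(η * rt z.1^2) by ring]
      have : rt z.1 ^ 3 ≤ (rt z.1 ^ 2)^2 := by
        rw [← pow_mul]; exact pow_le_pow_right₀ hz (by norm_num)
      gcongr
  refine squeeze_zero_norm' ?_ tz
  filter_upwards [c1, c2, hrest, tre.eventually_const_lt ha, tendsto_fst.eventually (eventually_gt_atTop 0),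
    tendsto_snd.eventually (ball_ev hx)] with z c1 c2 hrest hre hz hy
  have hq := rt_pos hz
  have hσ : 0 < (Phi k z.2).re / rt z.1 ^ 2 := by positivity
  have hcont := INT_cont (k := k) hy hσ
  have hpi := Real.pi_pos
  rw [cauchy hy hσ hz.ne', intervalIntegral.integral_of_le (by linarith)]
  have hfold : ∀ θ : ℝ, Complex.exp (SS z.2 (((Phi k z.2).re / rt z.1 ^ 2 : ℝ) + θ * I) + z.1 * (((Phi k z.2).re / rt z.1 ^ 2 : ℝ) + θ * I)) = INT k z θ := fun θ => rfl
  simp only [hfold]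
  set U := ⋃ h ∈ H, NH k z h with hU
  have hUm : MeasurableSet U := Finset.measurableSet_biUnion _ fun h _ => measurableSet_Ioc
  have hIntg : IntegrableOn (INT k z) (Set.Ioc (-1:ℝ) (2*Real.pi-1)) :=
    (hcont.integrableOn_Icc).mono_set Set.Ioc_subset_Icc_self
  have hUs : U ⊆ Set.Ioc (-1:ℝ) (2*Real.pi-1) := Set.iUnion₂_subset c1
  rw [← integral_inter_add_sdiff hUm hIntg, Set.inter_eq_right.2 hUs, hU, integral_biUnion_finset (s := NH k z) H (fun h _ => measurableSet_Ioc) _ (fun h hh => hIntg.mono_set (c1 h hh))]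
  swap
  · intro h hh h' hh' hne
    rcases lt_or_gt_of_ne hne with hl | hl
    · exact c2 h hh h' hh' hl
    · exact (c2 h' hh' h hh hl).symm
  rw [mul_add, Finset.mul_sum]
  simp only [INT_NH hz]
  rw [add_sub_cancel_left, norm_mul]
  have b1 : ‖∫ θ in Set.Ioc (-1:ℝ) (2*Real.pi-1) \ U, INT k z θ‖ ≤ Real.exp (rt z.1 ^ 2 * (2 * (Phi k z.2).re - η)) * (2 * Real.pi) := by
    have hfin : volume (Set.Ioc (-1:ℝ) (2*Real.pi-1) \ U) ≤ ENNReal.ofReal (2*Real.pi) := by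
      refine (measure_mono Set.sdiff_subset).trans ?_
      rw [Real.volume_Ioc]; apply le_of_eq; congr 1; ring
    have := norm_setIntegral_le_of_norm_le_const (μ := volume) (hfin.trans_lt ENNReal.ofReal_lt_top) (C := Real.exp (rt z.1 ^ 2 * (2 * (Phi k z.2).re - η))) (f := INT k z) (by
      intro θ hθ
      apply hrest θ (Set.Ioc_subset_Icc_self hθ.1)
      intro h hh hm
      exact hθ.2 (Set.mem_biUnion hh hm))
    refine this.trans ?_
    gcongr
    exact ENNReal.toReal_le_of_le_ofReal (by positivity) hfin
  rw [norm_mul, norm_pow, Complex.norm_real, Real.norm_of_nonneg hq.le, Complex.norm_exp]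
  have e1 : (-(2 * Phi k z.2 * (rt z.1:ℂ)^2)).re = -(2 * (Phi k z.2).re * rt z.1 ^ 2) := by
    rw [← Complex.ofReal_pow, Complex.neg_re, Complex.re_mul_ofReal]
    simp
  rw [e1]
  calc _ ≤ rt z.1 ^ 3 * Real.exp (-(2 * (Phi k z.2).re * rt z.1 ^ 2)) * (Real.exp (rt z.1 ^ 2 * (2 * (Phi k z.2).re - η)) * (2 * Real.pi)) := by gcongr
    _ = 2 * Real.pi * (rt z.1 ^ 3 * (Real.exp (-(2 * (Phi k z.2).re * rt z.1 ^ 2)) * Real.exp (rt z.1 ^ 2 * (2 * (Phi k z.2).re - η)))) := by ring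
    _ ≤ _ := by
      rw [← Real.exp_add]
      apply le_of_eq; congr 4; ring

lemma F_lower_gen {k : ℕ} (hk : k ≠ 0) {x : ℂ} (hx : ‖x‖ < 1) (ha : 0 < fk k x)
    (dom : ∀ j, j ≠ k → fk j x < fk k x) (H : Finset ℝ)
    (hH : ∀ θ ∈ Set.Icc (-1:ℝ) (2*Real.pi-1), orderOf (Complex.exp (θ * I)) = k → θ ∈ H)
    (hI : ∀ h ∈ H, h ∈ Set.Ioo (-1:ℝ) (2*Real.pi-1))
    (hHk : ∀ h ∈ H, orderOf (Complex.exp (h * I)) = k)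
    (hη : ∀ η : ℂ, η ^ k = 1 → η ≠ 1 → 1 ≤ ‖η - 1‖)
    {c : ℝ} (hc : 0 < c) (hs : ∀ n : ℕ, c ≤ ‖∑ h ∈ H, Complex.exp (n * h * I) * Complex.exp (cc h x)‖)
    {ε : ℝ} (hε : 0 < ε) :
    ∀ᶠ z : ℕ × ℂ in atTop ×ˢ 𝓝 x, Real.exp (2 * √z.1 * (fk k x - ε)) ≤ ‖F z.1 z.2‖ := by
  have h1 := F_asymp hk hx ha dom H hH hI
  set L : Filter (ℕ × ℂ) := atTop ×ˢ 𝓝 x with hL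
  set G : ℂ := (Real.pi / (1 / Phi k x)) ^ (1/2:ℂ) with hG
  have hP : Phi k x ≠ 0 := by
    intro h; have := Phi_re k x; rw [h] at this; simp at this; linarith
  have hG0 : G ≠ 0 := by
    rw [hG, Ne, Complex.cpow_eq_zero_iff]
    push Not
    intro h
    have : (Real.pi:ℂ) ≠ 0 := by exact_mod_cast Real.pi_ne_zero
    simp [this, hP] at h
  have h2 : Tendsto (fun z : ℕ × ℂ => ∑ h ∈ H, (Complex.exp (z.1 * h * I) * ((∫ t in (-rt z.1)..(rt z.1), NI h k z t) - Complex.exp (cc h x) * G))) L (𝓝 0) := by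
    rw [← Finset.sum_const_zero (s := H)]
    apply tendsto_finsetSum
    intro h hh
    have := near_tendsto hk hx ha (hHk h hh) hη
    have := (tendsto_iff_norm_sub_tendsto_zero.1 this)
    apply squeeze_zero_norm _ this
    intro z
    rw [norm_mul, show ((z.1:ℂ) * h * I) = ((z.1 * h : ℝ):ℂ) * I by push_cast; ring, Complex.norm_exp_ofReal_mul_I, one_mul]
  have h3 := (h1.add h2).norm
  rw [add_zero, norm_zero] at h3
  have hcG : 0 < c * ‖G‖ / 2 := by have := norm_pos_iff.2 hG0; positivity
  have tq : Tendsto (fun z : ℕ × ℂ => rt z.1) L atTop := rt_tendsto.comp tendsto_fst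
  have tq2 : Tendsto (fun z : ℕ × ℂ => rt z.1 ^ 2) L atTop := (tendsto_pow_atTop two_ne_zero).comp tq
  have tA : Tendsto (fun z : ℕ × ℂ => Phi k z.2) L (𝓝 (Phi k x)) := (Phi_contAt hk hx ha).tendsto.comp tendsto_snd
  have tre : Tendsto (fun z : ℕ × ℂ => (Phi k z.2).re) L (𝓝 (fk k x)) := by
    rw [← Phi_re]; exact (Complex.continuous_re.tendsto _).comp tA
  have tz : Tendsto (fun z : ℕ × ℂ => 2 * Real.pi * (rt z.1 ^ 3 * Real.exp (-(ε * rt z.1 ^ 2)))) L (𝓝 0) := by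
    have h1 : Tendsto (fun s : ℝ => s ^ 2 * Real.exp (-ε * s)) atTop (𝓝 0) := by
      have := tendsto_rpow_mul_exp_neg_mul_atTop_nhds_zero 2 ε hε
      simpa using this
    have h2 := (h1.comp tq2).const_mul (2 * Real.pi)
    rw [mul_zero] at h2
    refine squeeze_zero' (Eventually.of_forall fun z => ?_) ?_ h2
    · have := Real.sqrt_nonneg (√(z.1:ℝ))
      have : 0 ≤ rt z.1 := this
      positivity
    · filter_upwards [tq.eventually_ge_atTop 1] with z hz
      simp only [Function.comp]
      rw [show -ε * rt z.1 ^ 2 = -(ε * rt z.1^2) by ring]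
      have : rt z.1 ^ 3 ≤ (rt z.1 ^ 2)^2 := by
        rw [← pow_mul]; exact pow_le_pow_right₀ hz (by norm_num)
      gcongr
  filter_upwards [h3.eventually_lt_const hcG, tz.eventually_lt_const hcG, tre.eventually_const_lt (show fk k x - ε/2 < fk k x by linarith),
    tendsto_fst.eventually (eventually_gt_atTop 0)] with z g1 g2 g3 g4
  have hq := rt_pos g4
  have e0 : ∑ h ∈ H, (Complex.exp (z.1 * h * I) * ((∫ t in (-rt z.1)..(rt z.1), NI h k z t) - Complex.exp (cc h x) * G)) =
      (∑ h ∈ H, Complex.exp (z.1 * h * I) * (∫ t in (-rt z.1)..(rt z.1), NI h k z t)) - (∑ h ∈ H, Complex.exp (z.1 * h * I) * Complex.exp (cc h x)) * G := by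
    rw [Finset.sum_mul, ← Finset.sum_sub_distrib]
    apply Finset.sum_congr rfl; intros; ring
  rw [e0, sub_add_sub_cancel] at g1
  have g5 : c * ‖G‖ / 2 < ‖(rt z.1 : ℂ) ^ 3 * Complex.exp (-(2 * Phi k z.2 * (rt z.1:ℂ)^2)) * (2 * (Real.pi:ℂ) * F z.1 z.2)‖ := by
    have := norm_sub_norm_le ((∑ h ∈ H, Complex.exp (z.1 * h * I) * Complex.exp (cc h x)) * G) ((rt z.1 : ℂ) ^ 3 * Complex.exp (-(2 * Phi k z.2 * (rt z.1:ℂ)^2)) * (2 * (Real.pi:ℂ) * F z.1 z.2))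
    rw [norm_sub_rev, norm_mul _ G] at this
    have := mul_le_mul_of_nonneg_right (hs z.1) (norm_nonneg G)
    linarith
  rw [norm_mul, norm_mul, norm_mul, norm_pow, Complex.norm_real, Real.norm_of_nonneg hq.le, Complex.norm_exp, norm_mul, Complex.norm_real, Real.norm_of_nonneg Real.pi_pos.le] at g5
  have e1 : (-(2 * Phi k z.2 * (rt z.1:ℂ)^2)).re = -(2 * (Phi k z.2).re * rt z.1 ^ 2) := by
    rw [← Complex.ofReal_pow, Complex.neg_re, Complex.re_mul_ofReal]
    simp
  rw [e1] at g5
  have g6 := g2.trans g5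
  have g7 : Real.exp (-(ε * rt z.1 ^ 2)) < Real.exp (-(2 * (Phi k z.2).re * rt z.1 ^ 2)) * ‖F z.1 z.2‖ := by
    have hp : 0 < 2 * Real.pi * rt z.1 ^ 3 := by positivity
    apply lt_of_mul_lt_mul_left _ hp.le
    calc _ = 2 * Real.pi * (rt z.1 ^ 3 * Real.exp (-(ε * rt z.1 ^ 2))) := by ring
      _ < _ := g6
      _ = _ := by simp; ring
  have g8 : Real.exp (2 * (Phi k z.2).re * rt z.1 ^ 2 - ε * rt z.1^2) < ‖F z.1 z.2‖ := by
    rw [sub_eq_add_neg, Real.exp_add]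
    calc _ < Real.exp (2 * (Phi k z.2).re * rt z.1 ^ 2) * (Real.exp (-(2 * (Phi k z.2).re * rt z.1 ^ 2)) * ‖F z.1 z.2‖) := by gcongr
      _ = _ := by rw [← mul_assoc, ← Real.exp_add]; simp
  refine le_trans (Real.exp_le_exp.2 ?_) g8.le
  rw [← rt_sq]
  nlinarith [pow_pos hq 2]

end PartP3f

section PartP3g
open Complex Filter Topology MeasureTheory
set_option linter.unusedVariables false

lemma theta_of_order {k : ℕ} (hk : k ≠ 0) (hk3 : k ≤ 3) {θ : ℝ} (hθ : θ ∈ Set.Icc (-1:ℝ) (2*Real.pi-1))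
    (ho : orderOf (Complex.exp (θ * I)) = k) : ∃ m : ℕ, m < k ∧ θ = 2 * Real.pi * m / k ∧ (m = 0 → k = 1) := by
  have h1 : Complex.exp (θ * I) ^ k = 1 := by rw [← ho]; exact pow_orderOf_eq_one _
  rw [← Complex.exp_nat_mul, Complex.exp_eq_one_iff] at h1
  obtain ⟨m, hm⟩ := h1
  have h2 : (k:ℝ) * θ = m * (2 * Real.pi) := by
    have h3 : (((k:ℝ) * θ : ℝ) : ℂ) * I = ((m * (2 * Real.pi) : ℝ):ℂ) * I := by
      push_cast; rw [mul_assoc, hm]; ring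
    exact_mod_cast mul_right_cancel₀ I_ne_zero h3
  have hk0 : (0:ℝ) < k := by exact_mod_cast Nat.pos_of_ne_zero hk
  have hk3' : (k:ℝ) ≤ 3 := by exact_mod_cast hk3
  have hpi := Real.pi_gt_three
  have m0 : -1 < m := by
    have : (-1:ℝ) < m := by nlinarith [hθ.1]
    exact_mod_cast this
  have m1 : m < k := by
    have : (m:ℝ) < k := by nlinarith [hθ.2]
    exact_mod_cast this
  lift m to ℕ using by omega
  refine ⟨m, by exact_mod_cast m1, ?_, ?_⟩
  · push_cast at h2; field_simp; linarith
  · rintro rfl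
    have : θ = 0 := by
      push_cast at h2; simp at h2; rcases h2 with h2 | h2
      · exact absurd h2 hk
      · exact h2
    rw [this] at ho; simpa using ho.symm

lemma order_theta (i k : ℕ) (hk : k ≠ 0) (hi : i.Coprime k) :
    orderOf (Complex.exp (((2 * Real.pi * i / k : ℝ):ℂ) * I)) = k := by
  have := (Complex.isPrimitiveRoot_exp_of_coprime i k hk hi).eq_orderOf
  rw [this]
  conv_rhs => rw [this]
  rw [← this]
  congr 2
  push_cast; ring

lemma eta_three {η : ℂ} (h : η ^ 3 = 1) (h1 : η ≠ 1) : 1 ≤ ‖η - 1‖ := by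
  have h2 : η^2 + η + 1 = 0 := by
    have : (η - 1) * (η^2+η+1) = 0 := by linear_combination h
    rcases mul_eq_zero.1 this with h3 | h3
    · exact absurd (sub_eq_zero.1 h3) h1
    · exact h3
  have hn : ‖η‖ = 1 := norm_eq_one_of_pow_eq_one h (by norm_num)
  have h3 : (η - 1) * (2 + η) = -3 := by linear_combination h2
  have h4 := congrArg norm h3
  rw [norm_mul, norm_neg] at h4
  have h5 : ‖2 + η‖ ≤ 3 := by
    refine (norm_add_le _ _).trans ?_
    rw [hn]; norm_num
  have h6 : ‖(3:ℂ)‖ = 3 := by norm_num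
  rw [h6] at h4
  nlinarith [norm_nonneg (η - 1)]

lemma log_hasSum {z : ℂ} (hz : ‖z‖ < 1) : HasSum (fun l : ℕ => z ^ (l+1) / ((l:ℂ)+1)) (-Complex.log (1 - z)) := by
  have := Complex.hasSum_taylorSeries_neg_log hz
  rw [← hasSum_nat_add_iff' 1] at this
  simpa using this

lemma cc_three {x : ℂ} (hx : ‖x‖ < 1) (him : x.im ≠ 0) :
    (cc (2 * Real.pi * (1:ℕ) / (3:ℕ)) x).re ≠ (cc (2 * Real.pi * (2:ℕ) / (3:ℕ)) x).re := by
  set h₁ : ℝ := 2 * Real.pi * (1:ℕ) / (3:ℕ) with hh₁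
  set h₂ : ℝ := 2 * Real.pi * (2:ℕ) / (3:ℕ) with hh₂
  have o1 : orderOf (Complex.exp (h₁ * I)) = 3 := order_theta 1 3 (by norm_num) (by norm_num)
  have o2 : orderOf (Complex.exp (h₂ * I)) = 3 := order_theta 2 3 (by norm_num) (by norm_num)
  set u := Complex.exp (h₁ * I) with hu
  have hu2 : Complex.exp (h₂ * I) = u^2 := by
    rw [hu, ← Complex.exp_nat_mul]; congr 1; rw [hh₁, hh₂]; push_cast; ring
  have hu3 : u ^ 3 = 1 := by rw [← o1]; exact pow_orderOf_eq_one _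
  have p1 : ∀ l : ℕ, Complex.exp (((l:ℂ)+1) * (h₁ * I)) = u^(l+1) := by
    intro l; rw [hu, ← Complex.exp_nat_mul]; push_cast; rfl
  have p2 : ∀ l : ℕ, Complex.exp (((l:ℂ)+1) * (h₂ * I)) = (u^(l+1))^2 := by
    intro l; rw [← pow_mul, mul_comm (l+1) 2, pow_mul, ← hu2, ← Complex.exp_nat_mul]; push_cast; rfl
  have d1 : ∀ l : ℕ, 3 ∣ l + 1 ↔ u^(l+1) = 1 := by
    intro l; rw [← o1]; exact orderOf_dvd_iff_pow_eq_one
  have nu : ‖u‖ = 1 := by rw [hu]; exact Complex.norm_exp_ofReal_mul_I _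
  have bnd : ∀ θ : ℝ, orderOf (Complex.exp (θ * I)) = 3 → ∀ l, ‖ee θ l‖ ≤ 1 := by
    intro θ ho l
    unfold ee
    split_ifs with h
    · norm_num
    · rw [norm_div, norm_one]
      have e : Complex.exp (((l:ℂ)+1) * (θ * I)) = Complex.exp (θ * I) ^ (l+1) := by
        rw [← Complex.exp_nat_mul]; push_cast; rfl
      have h3 : (Complex.exp (θ * I) ^ (l+1))^3 = 1 := by
        rw [← pow_mul, mul_comm (l+1) 3, pow_mul, ← ho, pow_orderOf_eq_one, one_pow]
      have := eta_three h3 (by rw [← e]; exact exp_l_ne h)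
      rw [e]
      exact div_le_one_of_le₀ this (norm_nonneg _)
  have sm : ∀ θ : ℝ, orderOf (Complex.exp (θ * I)) = 3 → HasSum (fun l : ℕ => x ^ (l+1) / ((l:ℂ)+1) * ee θ l) (cc θ x) := by
    intro θ ho
    apply Summable.hasSum
    apply Summable.of_norm_bounded (g := fun l : ℕ => ‖x‖ ^ (l+1))
    · simpa [pow_succ] using (summable_geometric_of_lt_one (norm_nonneg _) hx).mul_right ‖x‖
    · intro l
      rw [norm_mul, norm_div, norm_pow, norm_natCast_add_one]
      have h1 : ‖x‖ ^ (l+1) / ((l:ℝ)+1) ≤ ‖x‖^(l+1) :=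
        div_le_self (by positivity) (by linarith [(Nat.cast_nonneg l : (0:ℝ) ≤ l)])
      have := mul_le_mul h1 (bnd θ ho l) (norm_nonneg _) (by positivity)
      simpa using this
  have hd := (sm h₁ o1).sub (sm h₂ o2)
  have hux : ‖u * x‖ < 1 := by rw [norm_mul, nu, one_mul]; exact hx
  have hux2 : ‖u^2 * x‖ < 1 := by rw [norm_mul, norm_pow, nu, one_pow, one_mul]; exact hx
  have hd2 := ((log_hasSum hux).sub (log_hasSum hux2)).mul_left (-1/3)
  have heq : cc h₁ x - cc h₂ x = (-1/3) * (-Complex.log (1 - u*x) - -Complex.log (1 - u^2*x)) := by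
    refine hd.unique (hd2.congr_fun ?_)
    intro l
    have hv3 : (u^(l+1))^3 = 1 := by rw [← pow_mul, mul_comm, pow_mul, hu3, one_pow]
    have key : ee h₁ l - ee h₂ l = (-1/3) * (u^(l+1) - (u^(l+1))^2) := by
      unfold ee
      rw [o1, o2, p1, p2]
      by_cases h : 3 ∣ l + 1
      · rw [if_pos h, if_pos h, (d1 l).1 h]; norm_num
      · rw [if_neg h, if_neg h]
        have hv1 : u^(l+1) ≠ 1 := fun h' => h ((d1 l).2 h')
        generalize u^(l+1) = v at *
        have hv2 : v^2 ≠ 1 := by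
          intro h'; apply hv1
          have : v^3 = v^2 * v := by ring
          rw [hv3, h', one_mul] at this; exact this.symm
        have a1 : v - 1 ≠ 0 := sub_ne_zero.2 hv1
        have a2 : v^2 - 1 ≠ 0 := sub_ne_zero.2 hv2
        have h2 : v^2 + v + 1 = 0 := by
          have : (v - 1) * (v^2+v+1) = 0 := by linear_combination hv3
          exact (mul_eq_zero.1 this).resolve_left a1
        field_simp
        have e1 : v^2 = -v-1 := by linear_combination h2
        linear_combination (-v * (v-1)^2) * h2 + v * hv3
    have : (u^2)^(l+1) = (u^(l+1))^2 := by rw [← pow_mul, ← pow_mul, mul_comm]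
    rw [mul_pow, mul_pow, this, ← mul_sub, key]
    ring
  intro hc
  have h0 : (cc h₁ x - cc h₂ x).re = 0 := by rw [Complex.sub_re, hc, sub_self]
  rw [heq, show (-1/3 : ℂ) = ((-1/3 : ℝ):ℂ) by push_cast; rfl, Complex.re_ofReal_mul, Complex.sub_re, Complex.neg_re, Complex.neg_re, Complex.log_re, Complex.log_re] at h0
  have n1 : ∀ w : ℂ, ‖w‖ < 1 → 0 < ‖1 - w‖ := by
    intro w hw; apply norm_pos_iff.2; rw [sub_ne_zero]; rintro rfl; simp at hw
  have h1 : ‖1 - u * x‖ = ‖1 - u^2 * x‖ := by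
    apply Real.log_injOn_pos (n1 _ hux) (n1 _ hux2); linarith
  have hconj : u^2 = (starRingEnd ℂ) u := by
    have : u * (starRingEnd ℂ) u = 1 := by rw [Complex.mul_conj, Complex.normSq_eq_norm_sq, nu]; norm_num
    have hu0 : u ≠ 0 := by intro h; rw [h] at nu; simp at nu
    apply mul_left_cancel₀ hu0; rw [this]; rw [← hu3]; ring
  have h2 : ‖1 - u * x‖^2 = ‖1 - u^2 * x‖^2 := by rw [h1]
  rw [hconj, ← Complex.normSq_eq_norm_sq, ← Complex.normSq_eq_norm_sq, Complex.normSq_apply, Complex.normSq_apply] at h2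
  simp at h2
  have h3 : u.im * x.im = 0 := by nlinarith
  rcases mul_eq_zero.1 h3 with h4 | h4
  · have : u^2 = u := by rw [hconj]; exact Complex.conj_eq_iff_im.2 h4
    have hu0 : u ≠ 0 := by intro h; rw [h] at nu; simp at nu
    have u1 : u = 1 := by apply mul_left_cancel₀ hu0; rw [← pow_two, this, mul_one]
    rw [u1] at o1; simp at o1
  · exact him h4

theorem F_lower {k : ℕ} (hk : k ≠ 0) (hk3 : k ≤ 3) {x : ℂ} (hx : ‖x‖ < 1)
    (dom : ∀ j, j ≠ k → fk j x < fk k x) {ε : ℝ} (hε : 0 < ε) :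
    ∀ᶠ z : ℕ × ℂ in atTop ×ˢ 𝓝 x, Real.exp (2 * √z.1 * (fk k x - ε)) ≤ ‖F z.1 z.2‖ := by
  have ha : 0 < fk k x := (fk_nonneg (k+1) x).trans_lt (dom (k+1) (by omega))
  have hpi := Real.pi_gt_three
  have single : ∀ (h : ℝ), 0 < Real.exp (cc h x).re ∧ ∀ n : ℕ, Real.exp (cc h x).re ≤ ‖∑ h ∈ ({h} : Finset ℝ), Complex.exp (n * h * I) * Complex.exp (cc h x)‖ := by
    intro h
    refine ⟨Real.exp_pos _, fun n => ?_⟩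
    rw [Finset.sum_singleton, norm_mul, show ((n:ℂ) * h * I) = ((n * h : ℝ):ℂ) * I by push_cast; ring, Complex.norm_exp_ofReal_mul_I, one_mul, Complex.norm_exp]
  have hcases : k = 1 ∨ k = 2 ∨ k = 3 := by omega
  rcases hcases with rfl | rfl | rfl
  · refine F_lower_gen hk hx ha dom {0} ?_ ?_ ?_ ?_ (single 0).1 (single 0).2 hε
    · intro θ hθ ho
      obtain ⟨m, hm, rfl, -⟩ := theta_of_order hk hk3 hθ ho
      have : m = 0 := by omega
      subst this; simp
    · intro h hh; rw [Finset.mem_singleton] at hh; subst hh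
      constructor <;> linarith
    · intro h hh; rw [Finset.mem_singleton] at hh; subst hh; simp
    · intro η h1 h2; simp at h1; exact absurd h1 h2
  · have o := order_theta 1 2 (by norm_num) (by norm_num)
    refine F_lower_gen hk hx ha dom {2 * Real.pi * (1:ℕ) / (2:ℕ)} ?_ ?_ ?_ ?_ (single _).1 (single _).2 hε
    · intro θ hθ ho
      obtain ⟨m, hm, rfl, h0⟩ := theta_of_order hk hk3 hθ ho
      have : m = 1 := by omega
      subst this; simp
    · intro h hh; rw [Finset.mem_singleton] at hh; subst hh
      push_cast
      constructor <;> linarith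
    · intro h hh; rw [Finset.mem_singleton] at hh; subst hh; exact o
    · intro η h1 h2
      have : η = -1 := (sq_eq_sq_iff_eq_or_eq_neg.1 (h1.trans (one_pow 2).symm)).resolve_left h2
      rw [this]; norm_num
  · have o1 := order_theta 1 3 (by norm_num) (by norm_num)
    have o2 := order_theta 2 3 (by norm_num) (by norm_num)
    have him := im_ne_zero_of_f3 hx (dom 1 (by norm_num))
    have hne := cc_three hx him
    have hhne : (2 * Real.pi * (1:ℕ) / (3:ℕ) : ℝ) ≠ 2 * Real.pi * (2:ℕ) / (3:ℕ) := by
      intro h; rw [h] at hne; exact hne rfl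
    refine F_lower_gen hk hx ha dom {2 * Real.pi * (1:ℕ) / (3:ℕ), 2 * Real.pi * (2:ℕ) / (3:ℕ)} ?_ ?_ ?_ ?_
      (c := |Real.exp (cc (2 * Real.pi * (1:ℕ) / (3:ℕ)) x).re - Real.exp (cc (2 * Real.pi * (2:ℕ) / (3:ℕ)) x).re|) ?_ ?_ hε
    · intro θ hθ ho
      obtain ⟨m, hm, rfl, h0⟩ := theta_of_order hk hk3 hθ ho
      have : m = 1 ∨ m = 2 := by omega
      rcases this with rfl | rfl <;> simp
    · intro h hh; rw [Finset.mem_insert, Finset.mem_singleton] at hh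
      rcases hh with rfl | rfl <;> push_cast <;> constructor <;> linarith
    · intro h hh; rw [Finset.mem_insert, Finset.mem_singleton] at hh
      rcases hh with rfl | rfl
      · exact o1
      · exact o2
    · intro η h1 h2; exact eta_three h1 h2
    · rw [abs_pos, sub_ne_zero]; intro h; exact hne (Real.exp_injective h)
    · intro n
      rw [Finset.sum_pair hhne]
      have nn : ∀ h : ℝ, ‖Complex.exp (n * h * I) * Complex.exp (cc h x)‖ = Real.exp (cc h x).re := by
        intro h
        rw [norm_mul, show ((n:ℂ) * h * I) = ((n * h : ℝ):ℂ) * I by push_cast; ring, Complex.norm_exp_ofReal_mul_I, one_mul, Complex.norm_exp]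
      rw [← nn, ← nn]
      have := abs_norm_sub_norm_le (Complex.exp (n * ((2 * Real.pi * (1:ℕ) / (3:ℕ) : ℝ):ℂ) * I) * Complex.exp (cc (2 * Real.pi * (1:ℕ) / (3:ℕ)) x)) (-(Complex.exp (n * ((2 * Real.pi * (2:ℕ) / (3:ℕ) : ℝ):ℂ) * I) * Complex.exp (cc (2 * Real.pi * (2:ℕ) / (3:ℕ)) x)))
      rw [norm_neg, sub_neg_eq_add] at this
      exact this

end PartP3g

section PartP4
open Complex Filter Topology
set_option linter.unusedVariables false

lemma F_rev {n : ℕ} (hn : n ≠ 0) {x : ℂ} (hx : x ≠ 0) : F n x = x ^ n * pa (fun m => (x⁻¹)^(m-1)) n := by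
  rw [F_eq_pa hn]
  unfold pa
  rw [Finset.mul_sum]
  apply Finset.sum_congr rfl
  intro p _
  have key : ∀ s : Multiset ℕ, (∀ i ∈ s, 0 < i) → (s.map fun _ => x).prod = x ^ s.sum * (s.map fun m => (x⁻¹)^(m-1)).prod := by
    intro s
    induction s using Multiset.induction_on with
    | empty => simp
    | cons a s ih =>
      intro h
      rw [Multiset.map_cons, Multiset.prod_cons, ih (fun i hi => h i (Multiset.mem_cons_of_mem hi)), Multiset.sum_cons, Multiset.map_cons, Multiset.prod_cons]
      obtain ⟨b, rfl⟩ : ∃ b, a = b + 1 := ⟨a - 1, by have := h a (Multiset.mem_cons_self a s); omega⟩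
      rw [Nat.add_sub_cancel, pow_add, pow_succ, inv_pow]
      field_simp
  have := key p.parts (fun i hi => p.parts_pos hi)
  rw [this, p.parts_sum]

lemma pa_tendsto {z : ℂ} (hz : ‖z‖ < 1) : ∃ c : ℂ, c ≠ 0 ∧
    Tendsto (fun p : ℕ × ℂ => pa (fun m => p.2^(m-1)) p.1) (atTop ×ˢ 𝓝 z) (𝓝 c) := by
  have hsum : ∀ ρ : ℝ, 0 ≤ ρ → ρ < 1 → Summable (fun i : ℕ => if i + 1 = 1 then 0 else ρ ^ (i+1-1)) := by
    intro ρ h0 h1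
    refine Summable.of_nonneg_of_le ?_ ?_ (summable_geometric_of_lt_one h0 h1)
    · intro i; split_ifs <;> positivity
    · intro i; split_ifs
      · positivity
      · rw [Nat.add_sub_cancel]
  have hlt : ∀ ρ : ℝ, 0 ≤ ρ → ρ < 1 → ∀ i : ℕ, (if i + 1 = 1 then 0 else ρ ^ (i+1-1)) < 1 := by
    intro ρ h0 h1 i
    split_ifs with h
    · norm_num
    · rw [Nat.add_sub_cancel]; exact pow_lt_one₀ h0 h1 (by omega)
  set b : ℂ → ℕ → ℂ := fun y j => pa (fun i => if i = 1 then 0 else y ^ (i-1)) j with hb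
  obtain ⟨ρ, hρ, hρ1⟩ := exists_between hz
  have hρ0 : 0 ≤ ρ := (norm_nonneg z).trans hρ.le
  have nrm : ∀ i : ℕ, ‖(fun i => if i = 1 then 0 else z ^ (i-1)) (i+1) * (1:ℂ)^(i+1)‖ = if i + 1 = 1 then 0 else ‖z‖ ^ (i+1-1) := by
    intro i; simp only []; split_ifs <;> simp
  have h1 := pa_hasSum (fun i => if i = 1 then 0 else z ^ (i-1)) 1
    (by simp only [nrm]; exact hsum _ (norm_nonneg _) hz) (by intro i; rw [nrm]; exact hlt _ (norm_nonneg _) hz i)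
  refine ⟨∑' j, b z j, ?_, ?_⟩
  · have := h1.2
    simp only [one_pow, mul_one] at this
    rw [hb]
    simp only []
    rw [this]; exact Complex.exp_ne_zero _
  · have hbound := pa_summable_real (fun i => if i = 1 then 0 else ρ ^ (i-1)) 1 (by intro i; split_ifs <;> positivity) zero_le_one
      (by simpa using hsum ρ hρ0 hρ1) (by intro i; rw [one_pow, mul_one]; exact hlt ρ hρ0 hρ1 i)
    simp only [one_pow, mul_one] at hbound
    have key : Tendsto (fun p : ℕ × ℂ => ∑' j, if j < p.1 + 1 then b p.2 j else 0) (atTop ×ˢ 𝓝 z) (𝓝 (∑' j, b z j)) := by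
      apply tendsto_tsum_of_dominated_convergence hbound
      · intro j
        have hc : Continuous fun y => b y j := by
          rw [hb]; unfold pa
          apply continuous_finsetSum
          intro p _
          apply continuous_multiset_prod
          intro i _
          split_ifs
          · exact continuous_const
          · fun_prop
        have := (hc.tendsto z).comp (tendsto_snd (f := (atTop : Filter ℕ)) (g := 𝓝 z))
        refine this.congr' ?_
        filter_upwards [tendsto_fst.eventually (eventually_ge_atTop j)] with p hp
        rw [if_pos (by omega)]; rfl
      · have : ∀ᶠ y in 𝓝 z, ‖y‖ < ρ := continuous_norm.continuousAt.eventually_lt_const hρ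
        filter_upwards [tendsto_snd.eventually this] with p hp j
        have hle : ‖b p.2 j‖ ≤ pa (fun i => if i = 1 then 0 else ρ ^ (i-1)) j := by
          apply pa_norm_le
          intro i
          split_ifs
          · simp
          · rw [norm_pow]; exact pow_le_pow_left₀ (norm_nonneg _) hp.le _
        split_ifs
        · exact hle
        · rw [norm_zero]; exact (norm_nonneg _).trans hle
    refine key.congr fun p => ?_
    rw [pa_factor _ (by simp) p.1]
    rw [tsum_eq_sum (s := Finset.range (p.1+1)) (by intro j hj; rw [if_neg (by simpa using hj)])]
    apply Finset.sum_congr rfl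
    intro j hj
    rw [if_pos (Finset.mem_range.1 hj)]

theorem outside_tendsto {x : ℂ} (hx : 1 < ‖x‖) : ∃ c : ℂ, c ≠ 0 ∧
    Tendsto (fun p : ℕ × ℂ => F p.1 p.2 / p.2 ^ p.1) (atTop ×ˢ 𝓝 x) (𝓝 c) := by
  have hx0 : x ≠ 0 := by rintro rfl; simp at hx; linarith
  obtain ⟨c, hc, h⟩ := pa_tendsto (z := x⁻¹) (by rw [norm_inv]; exact inv_lt_one_of_one_lt₀ hx)
  refine ⟨c, hc, ?_⟩
  have t : Tendsto (fun p : ℕ × ℂ => (p.1, p.2⁻¹)) (atTop ×ˢ 𝓝 x) (atTop ×ˢ 𝓝 x⁻¹) :=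
    tendsto_fst.prodMk ((tendsto_inv₀ hx0).comp tendsto_snd)
  refine (h.comp t).congr' ?_
  filter_upwards [tendsto_fst.eventually (eventually_ne_atTop 0), tendsto_snd.eventually (eventually_ne_nhds hx0)] with p h1 h2
  simp only [Function.comp]
  rw [F_rev h1 h2]
  field_simp

lemma F_crude : ∃ C : ℝ, 0 < C ∧ ∀ᶠ n : ℕ in atTop, ∀ x : ℂ, ‖x‖ ≤ 2 → ‖F n x‖ ≤ C * 2 ^ n := by
  obtain ⟨c, hc, h⟩ := outside_tendsto (x := 2) (by norm_num)
  have t : Tendsto (fun n : ℕ => (n, (2:ℂ))) atTop (atTop ×ˢ 𝓝 2) := tendsto_id.prodMk tendsto_const_nhds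
  have h2 := (h.comp t).norm.eventually_lt_const (show ‖c‖ < ‖c‖ + 1 by linarith)
  refine ⟨‖c‖ + 1, by positivity, ?_⟩
  filter_upwards [h2, eventually_ne_atTop 0] with n hn hn0 x hx
  simp only [Function.comp] at hn
  rw [norm_div, norm_pow, div_lt_iff₀ (by simp)] at hn
  have e : F n 2 = ((pa (fun _ => (2:ℝ)) n : ℝ):ℂ) := by
    rw [F_eq_pa hn0]; unfold pa; simp
  rw [e, Complex.norm_real] at hn
  rw [F_eq_pa hn0]
  have h3 := pa_norm_le (fun _ => x) (fun _ => (2:ℝ)) (fun _ => hx) n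
  have h4 := le_abs_self (pa (fun _ => (2:ℝ)) n)
  have h5 : ‖(2:ℂ)‖ = 2 := by norm_num
  rw [h5] at hn
  rw [Real.norm_eq_abs] at hn
  linarith

end PartP4

section PartP5a
open Complex Filter Topology
set_option linter.unusedVariables false

lemma vit_coeff {f : ℂ → ℂ} {R r M : ℝ} (hM : 0 < M) (hr : 0 < r) (hrR : r < R)
    (hf : DifferentiableOn ℂ f (Metric.ball 0 R)) (h0 : f 0 = 0)
    (hre : ∀ z ∈ Metric.ball (0:ℂ) R, (f z).re ≤ M) (m : ℕ) :
    ‖((m.factorial : ℂ))⁻¹ * iteratedDeriv m f 0‖ ≤ (2 * M * r / (R - r)) / r ^ m := by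
  have hb : ∀ z ∈ Metric.sphere (0:ℂ) r, ‖f z‖ ≤ 2 * M * r / (R - r) := by
    intro z hz
    have hz' : ‖z‖ = r := by simpa using hz
    have := Complex.borelCaratheodory_zero hM hf (fun z hz => hre z hz) (hr.trans hrR)
      (z := z) (by simp [hz', hrR]) h0
    rwa [hz'] at this
  have h1 := Complex.norm_iteratedDeriv_le_of_forall_mem_sphere_norm_le m hr
    (hf.diffContOnCl_ball (Metric.closedBall_subset_ball hrR)) hb
  rw [norm_mul, norm_inv, Complex.norm_natCast]
  have hm : (0:ℝ) < m.factorial := by exact_mod_cast m.factorial_pos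
  rw [inv_mul_le_iff₀ hm]
  calc _ ≤ _ := h1
    _ = _ := by ring

lemma vit_core {l : Filter ℕ} {k : ℕ → ℂ → ℂ} {R δ M : ℝ} (hM : 0 < M) (hδ : 0 < δ) (hδR : δ ≤ R)
    (hk : ∀ᶠ n in l, DifferentiableOn ℂ (k n) (Metric.ball 0 R) ∧ k n 0 = 0 ∧
      ∀ z ∈ Metric.ball (0:ℂ) R, (k n z).re ≤ M)
    (hc : ∀ ε > 0, ∀ᶠ n in l, ∀ z ∈ Metric.ball (0:ℂ) δ, (k n z).re ≤ ε)
    {q : ℂ} (hq : ‖q‖ < R) : Tendsto (fun n => k n q) l (𝓝 0) := by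
  obtain ⟨r, hqr, hrR⟩ := exists_between hq
  have hr : 0 < r := (norm_nonneg q).trans_lt hqr
  have hT : Tendsto (fun n => ∑' m : ℕ, (((m.factorial : ℂ))⁻¹ * iteratedDeriv m (k n) 0) * q ^ m) l
      (𝓝 (∑' m : ℕ, (0:ℂ))) := by
    apply tendsto_tsum_of_dominated_convergence
      (bound := fun m : ℕ => (2 * M * r / (R - r)) * (‖q‖ / r) ^ m)
    · apply Summable.mul_left
      apply summable_geometric_of_lt_one (by positivity)
      rw [div_lt_one hr]; exact hqr
    · intro m
      rw [tendsto_zero_iff_norm_tendsto_zero]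
      rw [Metric.tendsto_nhds]
      intro e he
      obtain ⟨ε, hε, hεe⟩ : ∃ ε > 0, (2 * ε * (δ/2) / (δ - δ/2)) / (δ/2) ^ m * ‖q‖ ^ m < e := by
        have : Tendsto (fun ε : ℝ => (2 * ε * (δ/2) / (δ - δ/2)) / (δ/2) ^ m * ‖q‖ ^ m) (𝓝[>] 0) (𝓝 0) := by
          apply Tendsto.mono_left _ nhdsWithin_le_nhds
          have : Continuous (fun ε : ℝ => (2 * ε * (δ/2) / (δ - δ/2)) / (δ/2) ^ m * ‖q‖ ^ m) := by fun_prop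
          simpa using this.tendsto 0
        obtain ⟨ε, h1, h2⟩ := ((this.eventually_lt_const he).and self_mem_nhdsWithin).exists
        exact ⟨ε, h2, h1⟩
      filter_upwards [hk, hc ε hε] with n hn hn2
      have := vit_coeff hε (r := δ/2) (by linarith) (by linarith)
        (hn.1.mono (Metric.ball_subset_ball hδR)) hn.2.1 hn2 m
      simp only [dist_zero_right, norm_norm, norm_mul, norm_pow]
      refine lt_of_le_of_lt ?_ hεe
      rw [norm_mul] at this
      gcongr
    · filter_upwards [hk] with n hn m
      have := vit_coeff hM hr hrR hn.1 hn.2.1 hn.2.2 m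
      rw [norm_mul, norm_pow, div_pow]
      calc _ ≤ _ := mul_le_mul_of_nonneg_right this (by positivity)
        _ = _ := by ring
  rw [tsum_zero] at hT
  refine hT.congr' ?_
  filter_upwards [hk] with n hn
  have := Complex.hasSum_taylorSeries_on_ball hn.1 (z := q) (by simpa using hq)
  rw [← this.tsum_eq]
  congr 1; ext m
  simp only [smul_eq_mul, sub_zero]; ring

lemma exists_log_ball {g : ℂ → ℂ} {a : ℂ} {R : ℝ} (hg : DifferentiableOn ℂ g (Metric.ball a R))
    (h0 : ∀ z ∈ Metric.ball a R, g z ≠ 0) :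
    ∃ L : ℂ → ℂ, DifferentiableOn ℂ L (Metric.ball a R) ∧ ∀ z ∈ Metric.ball a R, exp (L z) = g z := by
  rcases le_or_gt R 0 with hR | hR
  · exact ⟨0, by rw [Metric.ball_eq_empty.2 hR]; exact differentiableOn_empty, by
      rw [Metric.ball_eq_empty.2 hR]; simp⟩
  have hd : DifferentiableOn ℂ (fun z => deriv g z / g z) (Metric.ball a R) :=
    (hg.deriv Metric.isOpen_ball).div hg h0
  obtain ⟨L, hLa, hL⟩ := hd.isExactOn_ball.with_val_at a (Complex.log (g a))
  have ha : a ∈ Metric.ball a R := Metric.mem_ball_self hR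
  refine ⟨L, fun z hz => (hL z hz).differentiableAt.differentiableWithinAt, ?_⟩
  have hder : ∀ z ∈ Metric.ball a R, HasDerivAt (fun z => exp (-(L z)) * g z) 0 z := by
    intro z hz
    have h1 := ((hL z hz).neg.cexp).mul ((hg.differentiableAt (Metric.isOpen_ball.mem_nhds hz)).hasDerivAt)
    have h3 := h0 z hz
    have h2 : cexp ((-L) z) * -(deriv g z / g z) * g z + cexp ((-L) z) * deriv g z = 0 := by
      field_simp; ring
    rw [h2] at h1
    exact h1
  have hc : ∀ z ∈ Metric.ball a R, exp (-(L z)) * g z = exp (-(L a)) * g a := by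
    intro z hz
    exact (convex_ball a R).is_const_of_fderivWithin_eq_zero (𝕜 := ℂ) (f := fun z => exp (-(L z)) * g z)
      (fun z hz => (hder z hz).differentiableAt.differentiableWithinAt)
      (fun z hz => by
        rw [fderivWithin_of_isOpen Metric.isOpen_ball hz]
        have := (hder z hz).hasFDerivAt.fderiv
        rw [this]; ext; simp) hz ha
  intro z hz
  have := hc z hz
  rw [hLa, Complex.exp_neg, Complex.exp_neg, Complex.exp_log (h0 a ha), inv_mul_cancel₀ (h0 a ha)] at this
  have h2 := Complex.exp_ne_zero (L z)
  field_simp at this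
  exact this.symm

theorem vitali {l : Filter ℕ} {s : ℕ → ℝ} {g : ℕ → ℂ → ℂ} {P : ℂ → ℂ} {a q : ℂ} {R δ C : ℝ}
    (hδ : 0 < δ) (hδR : δ ≤ R) (hs : ∀ᶠ n in l, 0 < s n)
    (hg : ∀ᶠ n in l, DifferentiableOn ℂ (g n) (Metric.ball a R) ∧ ∀ z ∈ Metric.ball a R, g n z ≠ 0)
    (hP : DifferentiableOn ℂ P (Metric.ball a R))
    (hup : ∀ᶠ n in l, ∀ z ∈ Metric.ball a R, Real.log ‖g n z‖ / s n - (P z).re ≤ C)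
    (hconv : ∀ ε > 0, ∀ᶠ n in l, ∀ z ∈ Metric.ball a δ, |Real.log ‖g n z‖ / s n - (P z).re| ≤ ε)
    (hq : q ∈ Metric.ball a R) :
    Tendsto (fun n => Real.log ‖g n q‖ / s n) l (𝓝 (P q).re) := by
  classical
  have hR : 0 < R := hδ.trans_le hδR
  have ha : a ∈ Metric.ball a R := Metric.mem_ball_self hR
  have had : a ∈ Metric.ball a δ := Metric.mem_ball_self hδ
  let L : ℕ → ℂ → ℂ := fun n => if h : DifferentiableOn ℂ (g n) (Metric.ball a R) ∧ ∀ z ∈ Metric.ball a R, g n z ≠ 0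
    then (exists_log_ball h.1 h.2).choose else 0
  have hL : ∀ᶠ n in l, DifferentiableOn ℂ (L n) (Metric.ball a R) ∧ ∀ z ∈ Metric.ball a R, (L n z).re = Real.log ‖g n z‖ := by
    filter_upwards [hg] with n hn
    simp only [L, dif_pos hn]
    have := (exists_log_ball hn.1 hn.2).choose_spec
    refine ⟨this.1, fun z hz => ?_⟩
    rw [← this.2 z hz, Complex.norm_exp, Real.log_exp]
  let k : ℕ → ℂ → ℂ := fun n w => (L n (w + a) / (s n : ℂ) - P (w + a)) - (L n a / (s n : ℂ) - P a)
  have hkre : ∀ᶠ n in l, ∀ w ∈ Metric.ball (0:ℂ) R, (k n w).re =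
      (Real.log ‖g n (w + a)‖ / s n - (P (w + a)).re) - (Real.log ‖g n a‖ / s n - (P a).re) := by
    filter_upwards [hL] with n hn w hw
    have hw' : w + a ∈ Metric.ball a R := by simpa [dist_eq_norm] using hw
    simp only [k, Complex.sub_re, Complex.div_ofReal_re]
    rw [hn.2 _ hw', hn.2 _ ha]
  have hball : ∀ {ρ : ℝ} {w : ℂ}, w ∈ Metric.ball (0:ℂ) ρ → w + a ∈ Metric.ball a ρ := by
    intro ρ w hw; simpa [dist_eq_norm] using hw
  have hq' : ‖q - a‖ < R := by simpa [dist_eq_norm] using hq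
  have key := vit_core (l := l) (k := k) (R := R) (δ := δ) (M := |C| + 1) (by positivity) hδ hδR ?_ ?_ hq'
  · have h1 : Tendsto (fun n => (k n (q - a)).re) l (𝓝 0) := by
      have := (Complex.continuous_re.tendsto 0).comp key
      rw [Complex.zero_re] at this
      exact this
    have h2 : Tendsto (fun n => Real.log ‖g n a‖ / s n - (P a).re) l (𝓝 0) := by
      rw [Metric.tendsto_nhds]
      intro e he
      filter_upwards [hconv (e/2) (by linarith)] with n hn
      have := hn a had
      rw [dist_zero_right, Real.norm_eq_abs]; linarith
    have h3 := (h1.add h2).add_const (P q).re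
    simp only [add_zero, zero_add] at h3
    refine h3.congr' ?_
    filter_upwards [hkre] with n hn
    rw [hn (q - a) (by simpa using hq')]
    simp
  · filter_upwards [hL, hkre, hup, hconv 1 one_pos] with n h1 h2 h3 h4
    refine ⟨?_, by simp [k], ?_⟩
    · have hm : Set.MapsTo (fun w => w + a) (Metric.ball (0:ℂ) R) (Metric.ball a R) := fun w hw => hball hw
      have d1 : DifferentiableOn ℂ (fun w => L n (w + a)) (Metric.ball 0 R) :=
        h1.1.comp (by fun_prop) hm
      have d2 : DifferentiableOn ℂ (fun w => P (w + a)) (Metric.ball 0 R) :=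
        hP.comp (by fun_prop) hm
      exact ((d1.div_const _).sub d2).sub_const _
    · intro z hz
      rw [h2 z hz]
      have e1 := h3 _ (hball hz)
      have e2 := (abs_le.1 (h4 a had)).1
      have e3 := le_abs_self C
      linarith
  · intro ε hε
    filter_upwards [hkre, hconv (ε/2) (by linarith)] with n h2 h4 z hz
    rw [h2 z (Metric.ball_subset_ball hδR hz)]
    have e1 := (abs_le.1 (h4 _ (hball hz))).2
    have e2 := (abs_le.1 (h4 a had)).1
    linarith

end PartP5a

section PartP5b
open Complex Filter Topology
set_option linter.unusedVariables false

lemma const_of_re_le {h : ℂ → ℂ} {x : ℂ} (ha : AnalyticAt ℂ h x)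
    (hle : ∀ᶠ y in 𝓝 x, (h y).re ≤ (h x).re) : ∀ᶠ y in 𝓝 x, h y = h x := by
  rcases ha.eventually_constant_or_nhds_le_map_nhds with h1 | h1
  · exact h1
  · exfalso
    have h2 : ∀ᶠ w in 𝓝 (h x), w.re ≤ (h x).re := h1 hle
    have h3 : Tendsto (fun t : ℝ => h x + (t:ℂ)) (𝓝[>] 0) (𝓝 (h x)) := by
      apply Tendsto.mono_left _ nhdsWithin_le_nhds
      have : Continuous (fun t : ℝ => h x + (t:ℂ)) := by fun_prop
      simpa using this.tendsto 0
    obtain ⟨t, h4, h5⟩ := ((h3.eventually h2).and self_mem_nhdsWithin).exists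
    simp only [Complex.add_re, Complex.ofReal_re] at h4
    have h6 : (0:ℝ) < t := h5
    linarith

lemma gg_ray {z : ℂ} (hz : ‖z‖ < 1) (hs : z ∈ slitPlane) :
    ∃ c > 0, ∀ t : ℝ, 0 < t → t ≤ 1 → c * t ≤ gg (t * z) := by
  have hz0 : z ≠ 0 := slitPlane_ne_zero hs
  have hn : 0 < ‖z‖ := norm_pos_iff.2 hz0
  have hnorm : ∀ t : ℝ, 0 < t → ‖(t:ℂ) * z‖ = t * ‖z‖ := by
    intro t ht; rw [norm_mul, Complex.norm_real, Real.norm_of_nonneg ht.le]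
  have hlt : ∀ t : ℝ, 0 < t → t ≤ 1 → ‖(t:ℂ) * z‖ < 1 := by
    intro t ht ht1; rw [hnorm t ht]; nlinarith
  rcases le_or_gt 0 z.re with hre | hre
  · refine ⟨0.55 * ‖z‖, by positivity, fun t ht ht1 => ?_⟩
    have := gg_right (hlt t ht ht1) (by rw [Complex.re_ofReal_mul]; positivity)
    rw [hnorm t ht] at this; linarith
  · have him : z.im ≠ 0 := by
      rcases mem_slitPlane_iff.1 hs with h | h
      · linarith
      · exact h
    have hC1 : -z.re < ‖z‖ := by
      have := re_sq_add_im_sq z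
      have h2 : 0 < z.im ^ 2 := by positivity
      nlinarith
    set C := -z.re / ‖z‖ with hC
    have hC1 : C < 1 := by rw [hC, div_lt_one hn]; exact hC1
    have hC0 : 0 ≤ C := by apply div_nonneg <;> linarith
    refine ⟨(1 - C)/4 / (1 + C/2 + 1/9) * ‖z‖, ?_, fun t ht ht1 => ?_⟩
    · have : 0 < 1 - C := by linarith
      positivity
    · have := gg_left (hlt t ht ht1) (by simp [hz0, ht.ne']) (by rw [Complex.re_ofReal_mul]; nlinarith)
        C ((1 - C)/4) hC0 (by linarith) (by
          rw [Complex.re_ofReal_mul, hnorm t ht, hC]; apply le_of_eq; field_simp) (by nlinarith)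
      rw [hnorm t ht] at this
      calc _ = _ := by ring
        _ ≤ _ := this

lemma Phi_analyticAt {k : ℕ} (hk : k ≠ 0) {x : ℂ} (hx : ‖x‖ < 1) (h : x ^ k ∈ slitPlane) :
    AnalyticAt ℂ (Phi k) x := by
  rw [analyticAt_iff_eventually_differentiableAt]
  have h1 : ∀ᶠ y in 𝓝 x, y ^ k ∈ slitPlane :=
    (continuous_pow k).continuousAt.eventually (isOpen_slitPlane.mem_nhds h)
  filter_upwards [h1, ball_ev hx] with y h2 h3
  exact Phi_diffAt hk h3 h2

lemma no_tie_lt {i j : ℕ} (hi : i ≠ 0) (hij : i < j) {p : ℂ} (hp : ‖p‖ < 1)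
    (hpi : p ^ i ∈ slitPlane) (hpj : p ^ j ∈ slitPlane)
    (h : ∀ᶠ y in 𝓝 p, fk i y = fk j y) : False := by
  have hj : j ≠ 0 := by omega
  let U : Set ℂ := (fun t : ℝ => (t:ℂ) * p) '' Set.Ioc 0 1
  have hU : IsPreconnected U := isPreconnected_Ioc.image _ (by fun_prop)
  have hpU : p ∈ U := ⟨1, by simp, by simp⟩
  have hUs : ∀ k : ℕ, k ≠ 0 → p ^ k ∈ slitPlane → AnalyticOnNhd ℂ (Phi k) U := by
    rintro k hk hpk _ ⟨t, ⟨ht, ht1⟩, rfl⟩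
    apply Phi_analyticAt hk
    · rw [norm_mul, Complex.norm_real, Real.norm_of_nonneg ht.le]
      have := norm_nonneg p
      nlinarith
    · have ht' : 0 < t ^ k := by positivity
      simp only [mul_pow]
      rw [← Complex.ofReal_pow]
      rw [mem_slitPlane_iff] at hpk ⊢
      rw [Complex.re_ofReal_mul, Complex.im_ofReal_mul]
      rcases hpk with h | h
      · left; positivity
      · right; exact mul_ne_zero ht'.ne' h
  have hA : AnalyticOnNhd ℂ (fun y => Phi i y - Phi j y) U := (hUs i hi hpi).sub (hUs j hj hpj)
  have h0 : ∀ᶠ y in 𝓝 p, (Phi i y - Phi j y).re = 0 := by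
    filter_upwards [h] with y hy
    rw [Complex.sub_re, Phi_re, Phi_re, hy, sub_self]
  have hc := const_of_re_le (hA p hpU) (by
    filter_upwards [h0] with y hy
    rw [hy, h0.self_of_nhds])
  have hE := hA.eqOn_of_preconnected_of_eventuallyEq (g := fun _ => Phi i p - Phi j p)
    analyticOnNhd_const hU hpU hc
  have heq : ∀ t : ℝ, 0 < t → t ≤ 1 → fk i (t * p) = fk j (t * p) := by
    intro t ht ht1
    have := hE ⟨t, ⟨ht, ht1⟩, rfl⟩
    have h2 := congrArg Complex.re this
    simp only at h2
    rw [h0.self_of_nhds, Complex.sub_re, Phi_re, Phi_re] at h2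
    linarith
  obtain ⟨c, hc0, hc⟩ := gg_ray (norm_pow_lt_one' hp hi) hpi
  have hi0 : (0:ℝ) < i := by positivity
  have hbd : ∀ t : ℝ, 0 < t → t ≤ 1 → c / (2 * i ^ 2) ≤ 1.645 * t := by
    intro t ht ht1
    have hn : ‖(t:ℂ) * p‖ = t * ‖p‖ := by rw [norm_mul, Complex.norm_real, Real.norm_of_nonneg ht.le]
    have hnl : ‖(t:ℂ) * p‖ ≤ t := by rw [hn]; nlinarith
    have h1 : ‖(t:ℂ) * p‖ < 1 := by rw [hn]; nlinarith [norm_nonneg p]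
    have e1 := fk_sq_le h1 (k := j) (j := i + 1) (by omega) (by omega)
    have e2 := fk_sq i (t * p)
    rw [mul_pow, ← Complex.ofReal_pow] at e2
    have e3 := hc (t ^ i) (by positivity) (pow_le_one₀ ht.le ht1)
    have e4 : 1.645 * ‖(t:ℂ) * p‖ ^ (i+1) / ((i+1 : ℕ):ℝ) ^ 2 ≤ 1.645 * t ^ (i+1) := by
      have a1 : ‖(t:ℂ) * p‖ ^ (i+1) ≤ t ^ (i+1) := by gcongr
      have a2 : (1:ℝ) ≤ ((i+1 : ℕ):ℝ) ^ 2 := by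
        apply one_le_pow₀; push_cast; linarith
      rw [div_le_iff₀ (by linarith)]
      have : 0 < t ^ (i+1) := by positivity
      nlinarith
    rw [← heq t ht ht1, e2] at e1
    have e5 : c * t ^ i / (2 * i ^ 2) ≤ 1.645 * t ^ (i+1) := by
      refine le_trans ?_ (e1.trans e4)
      gcongr
    have : 0 < t ^ i := by positivity
    have e6 : (c / (2 * i ^ 2)) * t ^ i ≤ (1.645 * t) * t ^ i := by
      calc _ = c * t ^ i / (2 * i ^ 2) := by ring
        _ ≤ _ := e5
        _ = _ := by ring
    exact le_of_mul_le_mul_right e6 this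
  set d := c / (2 * (i:ℝ) ^ 2) with hd
  have hd0 : 0 < d := by positivity
  have := hbd (d / (d + 2)) (by positivity) (by rw [div_le_one (by positivity)]; linarith)
  rw [← mul_div_assoc, le_div_iff₀ (by positivity)] at this
  nlinarith

/-- no open set of ties -/
theorem no_tie {i j : ℕ} (hi : i ≠ 0) (hj : j ≠ 0) (hij : i ≠ j) {x : ℂ} (hx : ‖x‖ < 1)
    (h : ∀ᶠ y in 𝓝 x, fk i y = MM y ∧ fk j y = MM y) : False := by
  obtain ⟨p, ⟨hp1, hp2⟩, hp0⟩ : ∃ p, ((∀ᶠ y in 𝓝 p, fk i y = MM y ∧ fk j y = MM y) ∧ ‖p‖ < 1) ∧ p ≠ 0 := by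
    have h1 := (h.eventually_nhds.and (ball_ev hx))
    have h2 : ∀ᶠ y in 𝓝[≠] x, y ≠ 0 := by
      by_cases hx0 : x = 0
      · subst hx0; exact self_mem_nhdsWithin
      · exact nhdsWithin_le_nhds (isOpen_ne.mem_nhds hx0)
    exact ((eventually_nhdsWithin_of_eventually_nhds h1).and h2).exists
  have hM := MM_pos hp2 hp0
  have hpi := pow_slit_of_fk_pos hi hp2 (by rw [hp1.self_of_nhds.1]; exact hM)
  have hpj := pow_slit_of_fk_pos hj hp2 (by rw [hp1.self_of_nhds.2]; exact hM)
  rcases lt_or_gt_of_ne hij with hlt | hlt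
  · exact no_tie_lt hi hlt hp2 hpi hpj (by filter_upwards [hp1] with y hy; rw [hy.1, hy.2])
  · exact no_tie_lt hj hlt hp2 hpj hpi (by filter_upwards [hp1] with y hy; rw [hy.1, hy.2])

end PartP5b

section PartP5c
open Complex Filter Topology
set_option linter.unusedVariables false

/-- strictly dominant index -/
def SD (k : ℕ) (x : ℂ) : Prop := ∀ j, j ≠ k → fk j x < fk k x

def RR (k : ℕ) : Set ℂ := {x | ‖x‖ < 1 ∧ fk k x = MM x}

lemma R1_eq : R1 = RR 1 := by
  ext x
  simp only [R1, RR, MM, Set.mem_ofPred_eq]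
  constructor
  · rintro ⟨h, h1, h2⟩
    exact ⟨h, by rw [max_eq_left (max_le h1 h2)]⟩
  · rintro ⟨h, h1⟩
    have h2 := le_max_right (fk 1 x) (max (fk 2 x) (fk 3 x))
    rw [← h1] at h2
    exact ⟨h, (le_max_left _ _).trans h2, (le_max_right _ _).trans h2⟩

lemma le_MM1 (x : ℂ) : fk 1 x ≤ MM x := le_max_left _ _
lemma le_MM2 (x : ℂ) : fk 2 x ≤ MM x := (le_max_left _ _).trans (le_max_right _ _)
lemma le_MM3 (x : ℂ) : fk 3 x ≤ MM x := (le_max_right _ _).trans (le_max_right _ _)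

lemma R2_eq : R2 = RR 2 := by
  ext x
  simp only [R2, RR, Set.mem_ofPred_eq]
  constructor
  · rintro ⟨h, h1, h2⟩
    exact ⟨h, le_antisymm (le_MM2 x) (max_le h1 (max_le le_rfl h2))⟩
  · rintro ⟨h, h1⟩
    rw [h1]
    exact ⟨h, le_MM1 x, le_MM3 x⟩

lemma R3_eq : R3 = RR 3 := by
  ext x
  simp only [R3, RR, Set.mem_ofPred_eq]
  constructor
  · rintro ⟨h, h1, h2⟩
    exact ⟨h, le_antisymm (le_MM3 x) (max_le h1 (max_le h2 le_rfl))⟩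
  · rintro ⟨h, h1⟩
    rw [h1]
    exact ⟨h, le_MM1 x, le_MM2 x⟩

lemma exists_MM (x : ℂ) : ∃ k, k ≠ 0 ∧ k ≤ 3 ∧ fk k x = MM x := by
  unfold MM
  rcases max_choice (fk 1 x) (max (fk 2 x) (fk 3 x)) with h | h
  · exact ⟨1, by norm_num, by norm_num, h.symm⟩
  · rcases max_choice (fk 2 x) (fk 3 x) with h' | h'
    · exact ⟨2, by norm_num, by norm_num, by rw [h, h']⟩
    · exact ⟨3, by norm_num, by norm_num, by rw [h, h']⟩

lemma SD_MM {k : ℕ} {x : ℂ} (hx : ‖x‖ < 1) (h : SD k x) : fk k x = MM x := by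
  obtain ⟨j, hj, hj3, hjM⟩ := exists_MM x
  by_cases hjk : j = k
  · rw [← hjk, hjM]
  · exact absurd (h j hjk) (by rw [hjM]; exact not_lt.2 (fk_le_MM hx k))

lemma SD_ne_zero {k : ℕ} {x : ℂ} (h : SD k x) : x ≠ 0 := by
  rintro rfl
  have := h (k + 1) (by omega)
  rw [fk_zero, fk_zero] at this
  exact lt_irrefl _ this

lemma SD_of {k : ℕ} {x : ℂ} (hx : ‖x‖ < 1) (hx0 : x ≠ 0) (hk : fk k x = MM x)
    (h : ∀ j, j ≠ 0 → j ≤ 3 → j ≠ k → fk j x ≠ MM x) : SD k x := by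
  intro j hj
  rw [hk]
  rcases Nat.eq_zero_or_pos j with rfl | hj0
  · have : fk 0 x = 0 := by rw [fk_eq]; simp
    rw [this]; exact MM_pos hx hx0
  · by_cases h4 : 4 ≤ j
    · exact fk_lt_MM hx hx0 h4
    · exact lt_of_le_of_ne (fk_le_MM hx j) (h j (by omega) (by omega) hj)

lemma SD_open {k : ℕ} (hk0 : k ≠ 0) {x : ℂ} (hx : ‖x‖ < 1) (h : SD k x) : ∀ᶠ y in 𝓝 x, SD k y := by
  have h1 : ∀ j, j ≠ 0 → j ≠ k → ∀ᶠ y in 𝓝 x, fk j y < fk k y := fun j hj hjk =>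
    (fk_contAt hj hx).eventually_lt (fk_contAt hk0 hx) (h j hjk)
  have h2 : ∀ᶠ y in 𝓝 x, ∀ j ∈ Finset.Icc 1 3, j ≠ k → fk j y < fk k y := by
    rw [Filter.eventually_all_finset]
    intro j hj
    by_cases hjk : j = k
    · exact Eventually.of_forall fun y h => absurd hjk h
    · filter_upwards [h1 j (by have := (Finset.mem_Icc.1 hj).1; omega) hjk] with y hy _
      exact hy
  have h0 : ∀ᶠ y in 𝓝 x, y ≠ 0 := isOpen_ne.mem_nhds (SD_ne_zero h)
  filter_upwards [h2, h0, ball_ev hx] with y h3 h4 h5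
  have hkM : fk k y = MM y := by
    obtain ⟨j, hj, hj3, hjM⟩ := exists_MM y
    by_cases hjk : j = k
    · rw [← hjk, hjM]
    · exact absurd (h3 j (Finset.mem_Icc.2 ⟨by omega, hj3⟩) hjk) (by
        rw [hjM]; exact not_lt.2 (fk_le_MM h5 k))
  refine SD_of h5 h4 hkM fun j hj hj3 hjk => ?_
  rw [← hkM]
  exact (h3 j (Finset.mem_Icc.2 ⟨by omega, hj3⟩) hjk).ne

lemma not_tie_step {i j : ℕ} (hi : i ≠ 0) (hj : j ≠ 0) (hij : i ≠ j) {x : ℂ} (hx : ‖x‖ < 1) {P : ℂ → Prop}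
    (hP : ∀ᶠ y in 𝓝 x, P y) :
    ∃ y, ‖y‖ < 1 ∧ ∀ᶠ z in 𝓝 y, P z ∧ ¬ (fk i z = MM z ∧ fk j z = MM z) := by
  have h1 : ∃ᶠ y in 𝓝 x, ¬ (fk i y = MM y ∧ fk j y = MM y) := fun h =>
    no_tie hi hj hij hx (by filter_upwards [h] with y hy; exact not_not.1 hy)
  obtain ⟨y, hy1, hy2, hy3⟩ := (h1.and_eventually (hP.eventually_nhds.and (ball_ev hx))).exists
  refine ⟨y, hy3, hy2.and ?_⟩
  rw [not_and_or] at hy1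
  rcases hy1 with h | h
  · filter_upwards [(fk_contAt hi hy3).eventually_lt (MM_contAt hy3) (lt_of_le_of_ne (fk_le_MM hy3 i) h)] with z hz
    exact fun h => hz.ne h.1
  · filter_upwards [(fk_contAt hj hy3).eventually_lt (MM_contAt hy3) (lt_of_le_of_ne (fk_le_MM hy3 j) h)] with z hz
    exact fun h => hz.ne h.2

theorem dense_SD {x : ℂ} (hx : ‖x‖ < 1) {P : ℂ → Prop} (hP : ∀ᶠ y in 𝓝 x, P y) :
    ∃ y, ‖y‖ < 1 ∧ P y ∧ ∃ k, k ≠ 0 ∧ k ≤ 3 ∧ SD k y := by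
  obtain ⟨y1, hy1, h1⟩ := not_tie_step (i := 1) (j := 2) (by norm_num) (by norm_num) (by norm_num) hx hP
  obtain ⟨y2, hy2, h2⟩ := not_tie_step (i := 1) (j := 3) (by norm_num) (by norm_num) (by norm_num) hy1 h1
  obtain ⟨y, hy, h3⟩ := not_tie_step (i := 2) (j := 3) (by norm_num) (by norm_num) (by norm_num) hy2 h2
  obtain ⟨⟨⟨hPy, h12⟩, h13⟩, h23⟩ := h3.self_of_nhds
  refine ⟨y, hy, hPy, ?_⟩
  obtain ⟨k, hk0, hk3, hkM⟩ := exists_MM y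
  refine ⟨k, hk0, hk3, SD_of hy ?_ hkM ?_⟩
  · rintro rfl
    exact h12 (by simp [fk_zero, MM])
  · intro j hj hj3 hjk hjM
    have a1 : k = 1 ∨ k = 2 ∨ k = 3 := by omega
    have a2 : j = 1 ∨ j = 2 ∨ j = 3 := by omega
    rcases a1 with rfl | rfl | rfl <;> rcases a2 with rfl | rfl | rfl <;> simp_all

lemma frontier_RR {k : ℕ} (hk : k ≠ 0) {x : ℂ} (hx : ‖x‖ < 1) (h : x ∈ frontier (RR k)) :
    fk k x = MM x ∧ ¬ ∀ᶠ y in 𝓝 x, fk k y = MM y := by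
  constructor
  · by_contra hne
    have hlt : fk k x < MM x := lt_of_le_of_ne (fk_le_MM hx k) hne
    have h1 := (fk_contAt hk hx).eventually_lt (MM_contAt hx) hlt
    have h2 := mem_closure_iff_frequently.1 h.1
    obtain ⟨y, hy1, hy2⟩ := (h2.and_eventually h1).exists
    exact hy2.ne hy1.2
  · intro he
    apply h.2
    rw [mem_interior_iff_mem_nhds]
    filter_upwards [he, ball_ev hx] with y h1 h2
    exact ⟨h2, h1⟩

lemma ev_of_not_frontier {k : ℕ} {x : ℂ} (hx : ‖x‖ < 1) (h : x ∉ frontier (RR k)) (hk : fk k x = MM x) :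
    ∀ᶠ y in 𝓝 x, fk k y = MM y := by
  have h1 : x ∈ closure (RR k) := subset_closure ⟨hx, hk⟩
  have h2 : x ∈ interior (RR k) := by
    by_contra hn; exact h ⟨h1, hn⟩
  filter_upwards [mem_interior_iff_mem_nhds.1 h2] with y hy
  exact hy.2

theorem SD_of_not_frontier {x : ℂ} (hx : ‖x‖ < 1)
    (h : ∀ k, k ≠ 0 → k ≤ 3 → x ∉ frontier (RR k)) : ∃ k, k ≠ 0 ∧ k ≤ 3 ∧ SD k x := by
  obtain ⟨k, hk0, hk3, hkM⟩ := exists_MM x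
  have ht : ∀ i j, i ≠ 0 → i ≤ 3 → j ≠ 0 → j ≤ 3 → i ≠ j → fk i x = MM x → fk j x = MM x → False := by
    intro i j hi hi3 hj hj3 hij h1 h2
    exact no_tie hi hj hij hx ((ev_of_not_frontier hx (h i hi hi3) h1).and (ev_of_not_frontier hx (h j hj hj3) h2))
  refine ⟨k, hk0, hk3, SD_of hx ?_ hkM ?_⟩
  · rintro rfl
    exact ht 1 2 (by norm_num) (by norm_num) (by norm_num) (by norm_num) (by norm_num) (by simp [fk_zero, MM]) (by simp [fk_zero, MM])
  · intro j hj hj3 hjk hjM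
    exact ht j k hj hj3 hk0 hk3 hjk hjM hkM

theorem two_dom {m : ℕ} (hm : m ≠ 0) {x : ℂ} (hx : ‖x‖ < 1) (hx0 : x ≠ 0) (h : x ∈ frontier (RR m))
    {P : ℂ → Prop} (hP : ∀ᶠ y in 𝓝 x, P y) :
    ∃ i j y z, i ≠ j ∧ i ≠ 0 ∧ i ≤ 3 ∧ j ≠ 0 ∧ j ≤ 3 ∧ P y ∧ P z ∧ ‖y‖ < 1 ∧ ‖z‖ < 1 ∧ SD i y ∧ SD j z := by
  by_contra hcon
  push Not at hcon
  obtain ⟨hmM, hnev⟩ := frontier_RR hm hx h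
  obtain ⟨y, hy, hPy, i, hi, hi3, hSi⟩ := dense_SD hx hP
  have hall : ∀ᶠ z in 𝓝 x, fk i z = MM z := by
    filter_upwards [hP.eventually_nhds, ball_ev hx] with z hz hz1
    by_contra hne
    have hlt : fk i z < MM z := lt_of_le_of_ne (fk_le_MM hz1 i) hne
    have h1 := (fk_contAt hi hz1).eventually_lt (MM_contAt hz1) hlt
    obtain ⟨w, hw, ⟨hPw, hwlt⟩, k, hk, hk3, hSk⟩ := dense_SD hz1 (hz.and h1)
    have hki : i ≠ k := by
      rintro rfl
      exact hwlt.ne (SD_MM hw hSk)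
    exact hcon i k y w hki hi hi3 hk hk3 hPy hPw hy hw hSi hSk
  apply hnev
  have hM := MM_pos hx hx0
  have hsi := pow_slit_of_fk_pos hi hx (by rw [hall.self_of_nhds]; exact hM)
  have hsm := pow_slit_of_fk_pos hm hx (by rw [hmM]; exact hM)
  have hA : AnalyticAt ℂ (fun y => Phi m y - Phi i y) x := (Phi_analyticAt hm hx hsm).sub (Phi_analyticAt hi hx hsi)
  have h0 : (Phi m x - Phi i x).re = 0 := by
    rw [Complex.sub_re, Phi_re, Phi_re, hmM, hall.self_of_nhds, sub_self]
  have hc := const_of_re_le hA (by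
    filter_upwards [hall, ball_ev hx] with y hy hy1
    rw [h0, Complex.sub_re, Phi_re, Phi_re, hy]
    linarith [fk_le_MM hy1 m])
  filter_upwards [hc, hall] with y h1 h2
  have := congrArg Complex.re h1
  rw [h0, Complex.sub_re, Phi_re, Phi_re] at this
  linarith

end PartP5c

section PartP5d
open Complex Filter Topology
set_option linter.unusedVariables false

lemma unif_of_local {K : Set ℂ} (hK : IsCompact K) {p : ℕ → ℂ → Prop}
    (h : ∀ y ∈ K, ∀ᶠ z : ℕ × ℂ in atTop ×ˢ 𝓝 y, p z.1 z.2) : ∀ᶠ n in atTop, ∀ y ∈ K, p n y := by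
  have h1 : {z : ℕ × ℂ | p z.1 z.2} ∈ (atTop : Filter ℕ) ×ˢ 𝓝ˢ K := hK.mem_prod_nhdsSet_of_forall h
  obtain ⟨U, hU, V, hV, hUV⟩ := Filter.mem_prod_iff.1 h1
  filter_upwards [hU] with n hn y hy
  exact hUV (Set.mk_mem_prod hn (subset_of_mem_nhdsSet hV hy))

lemma pt_of_local {y : ℂ} {p : ℕ → ℂ → Prop}
    (h : ∀ᶠ z : ℕ × ℂ in atTop ×ˢ 𝓝 y, p z.1 z.2) : ∀ᶠ n in atTop, p n y :=
  (unif_of_local (K := {y}) isCompact_singleton (by rintro z rfl; exact h)).mono fun n hn => hn y rfl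

lemma ball_of_local {y : ℂ} {p : ℕ → ℂ → Prop}
    (h : ∀ᶠ z : ℕ × ℂ in atTop ×ˢ 𝓝 y, p z.1 z.2) : ∃ r > 0, ∀ᶠ n in atTop, ∀ z ∈ Metric.ball y r, p n z := by
  obtain ⟨U, hU, V, hV, hUV⟩ := Filter.mem_prod_iff.1 h
  obtain ⟨r, hr, hrV⟩ := Metric.mem_nhds_iff.1 hV
  refine ⟨r, hr, ?_⟩
  filter_upwards [hU] with n hn z hz
  exact hUV (Set.mk_mem_prod hn (hrV hz))

lemma F_diff (n : ℕ) : Differentiable ℂ (F n) := by unfold F; fun_prop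

lemma F_at_zero (n : ℕ) : F n 0 = 0 := by
  unfold F
  apply Finset.sum_eq_zero
  intro k hk
  rw [zero_pow (by have := (Finset.mem_Icc.1 hk).1; omega), mul_zero]

lemma SD_ne {k : ℕ} (hk : k ≠ 0) (hk3 : k ≤ 3) {x : ℂ} (hx : ‖x‖ < 1) (h : SD k x) :
    ∀ᶠ z : ℕ × ℂ in atTop ×ˢ 𝓝 x, F z.1 z.2 ≠ 0 := by
  filter_upwards [F_lower hk hk3 hx h one_pos] with z hz h0
  rw [h0, norm_zero] at hz
  exact absurd hz (not_le.2 (Real.exp_pos _))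

lemma ev_fst {Q : ℕ → Prop} (h : ∀ᶠ n in atTop, Q n) (x : ℂ) : ∀ᶠ z : ℕ × ℂ in atTop ×ˢ 𝓝 x, Q z.1 :=
  tendsto_fst.eventually h

lemma ev_snd {Q : ℂ → Prop} {x : ℂ} (h : ∀ᶠ y in 𝓝 x, Q y) : ∀ᶠ z : ℕ × ℂ in (atTop : Filter ℕ) ×ˢ 𝓝 x, Q z.2 :=
  tendsto_snd.eventually h

lemma sqrt_pos_ev : ∀ᶠ n : ℕ in atTop, 0 < 2 * √(n:ℝ) := by
  filter_upwards [eventually_gt_atTop 0] with n hn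
  have : (0:ℝ) < n := by exact_mod_cast hn
  positivity

lemma SD_local {k : ℕ} (hk : k ≠ 0) (hk3 : k ≤ 3) {x : ℂ} (hx : ‖x‖ < 1) (h : SD k x) {ε : ℝ} (hε : 0 < ε) :
    ∀ᶠ z : ℕ × ℂ in atTop ×ˢ 𝓝 x, |Real.log ‖F z.1 z.2‖ / (2 * √(z.1:ℝ)) - (Phi k z.2).re| ≤ ε := by
  have hc : ∀ᶠ y in 𝓝 x, |fk k y - fk k x| < ε/2 := by
    have := Metric.tendsto_nhds.1 (fk_contAt hk hx) (ε/2) (by linarith)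
    filter_upwards [this] with y hy
    rwa [Real.dist_eq] at hy
  filter_upwards [F_lower hk hk3 hx h (half_pos hε), F_upper hx (half_pos hε), ev_snd hc,
    ev_fst sqrt_pos_ev x] with z h1 h2 h3 h4
  have hpos : 0 < ‖F z.1 z.2‖ := (Real.exp_pos _).trans_le h1
  have l1 := Real.log_le_log (Real.exp_pos _) h1
  have l2 := Real.log_le_log hpos h2
  rw [Real.log_exp] at l1 l2
  rw [← SD_MM hx h] at l2
  have l1' : fk k x - ε/2 ≤ Real.log ‖F z.1 z.2‖ / (2 * √(z.1:ℝ)) := by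
    rw [le_div_iff₀ h4]; linarith
  have l2' : Real.log ‖F z.1 z.2‖ / (2 * √(z.1:ℝ)) ≤ fk k x + ε/2 := by
    rw [div_le_iff₀ h4]; linarith
  rw [Phi_re]
  have := abs_lt.1 h3
  rw [abs_le]
  constructor <;> linarith [this.1, this.2]

lemma SD_tendsto {k : ℕ} (hk : k ≠ 0) (hk3 : k ≤ 3) {x : ℂ} (hx : ‖x‖ < 1) (h : SD k x) :
    Tendsto (fun n : ℕ => Real.log ‖F n x‖ / (2 * √(n:ℝ))) atTop (𝓝 (fk k x)) := by
  rw [Metric.tendsto_nhds]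
  intro e he
  filter_upwards [pt_of_local (p := fun n z => |Real.log ‖F n z‖ / (2 * √(n:ℝ)) - (Phi k z).re| ≤ e/2)
    (SD_local hk hk3 hx h (half_pos he))] with n hn
  rw [Real.dist_eq]
  rw [Phi_re] at hn
  linarith

theorem frontier_zero {m : ℕ} (hm : m ≠ 0) {x : ℂ} (hx : ‖x‖ < 1) (h : x ∈ frontier (RR m)) {ε : ℝ} (hε : 0 < ε) :
    ∀ᶠ n in atTop, ∃ z, dist z x < ε ∧ F n z = 0 := by
  rcases eq_or_ne x 0 with rfl | hx0
  · exact Eventually.of_forall fun n => ⟨0, by simpa using hε, F_at_zero n⟩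
  by_contra hcon
  have hfr : ∃ᶠ n in atTop, ∀ z, dist z x < ε → F n z ≠ 0 := by
    refine (Filter.not_eventually.1 hcon).mono fun n hn z hz h0 => hn ⟨z, hz, h0⟩
  set l : Filter ℕ := atTop ⊓ 𝓟 {n | ∀ z, dist z x < ε → F n z ≠ 0} with hl
  have hne : l.NeBot := Filter.frequently_mem_iff_neBot.1 hfr
  have hll : l ≤ atTop := inf_le_left
  have hlz : ∀ᶠ n in l, ∀ z, dist z x < ε → F n z ≠ 0 := by
    have : {n | ∀ z, dist z x < ε → F n z ≠ 0} ∈ l := mem_inf_of_right (mem_principal_self _)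
    exact this
  obtain ⟨r1, hr1, hup⟩ := ball_of_local (p := fun n z => ‖F n z‖ ≤ Real.exp (2*√(n:ℝ)*(MM x+1))) (F_upper hx one_pos)
  have hloc : ∀ᶠ y in 𝓝 x, ‖y‖ < 1 ∧ (∀ k ∈ Finset.Icc 1 3, fk k x < MM x → fk k y < MM y) ∧
      (∀ k ∈ Finset.Icc 1 3, x ^ k ∈ slitPlane → y ^ k ∈ slitPlane) := by
    refine (ball_ev hx).and (Eventually.and ?_ ?_)
    · rw [Filter.eventually_all_finset]
      intro k hk
      by_cases hlt : fk k x < MM x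
      · filter_upwards [(fk_contAt (by have := (Finset.mem_Icc.1 hk).1; omega) hx).eventually_lt (MM_contAt hx) hlt] with y hy _
        exact hy
      · exact Eventually.of_forall fun y h => absurd h hlt
    · rw [Filter.eventually_all_finset]
      intro k hk
      by_cases hs : x ^ k ∈ slitPlane
      · filter_upwards [(continuous_pow k).continuousAt.eventually (isOpen_slitPlane.mem_nhds hs)] with y hy _
        exact hy
      · exact Eventually.of_forall fun y h => absurd h hs
  obtain ⟨r2, hr2, hloc⟩ := Metric.eventually_nhds_iff.1 hloc
  set r := min ε (min r1 r2) with hr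
  have hr0 : 0 < r := lt_min hε (lt_min hr1 hr2)
  have hrε : r ≤ ε := min_le_left _ _
  have hrr1 : r ≤ r1 := (min_le_right _ _).trans (min_le_left _ _)
  have hrr2 : r ≤ r2 := (min_le_right _ _).trans (min_le_right _ _)
  obtain ⟨i, j, p, q, hij, hi, hi3, hj, hj3, hPp, hPq, hp1, hq1, hSi, hSj⟩ :=
    two_dom hm hx hx0 h (P := fun y => dist y x < r/4) (Metric.eventually_nhds_iff.2 ⟨r/4, by linarith, fun _ h => h⟩)
  have hsub : ∀ z ∈ Metric.ball p (r/2), dist z x < r := by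
    intro z hz
    have := Metric.mem_ball.1 hz
    have h2 := dist_triangle z p x
    linarith
  have hiI : i ∈ Finset.Icc 1 3 := Finset.mem_Icc.2 ⟨by omega, hi3⟩
  have hiM : fk i x = MM x := by
    by_contra hne'
    have := (hloc (y := p) (by linarith)).2.1 i hiI (lt_of_le_of_ne (fk_le_MM hx i) hne')
    exact this.ne (SD_MM hp1 hSi)
  have hsi : x ^ i ∈ slitPlane := pow_slit_of_fk_pos hi hx (by rw [hiM]; exact MM_pos hx hx0)
  have hP : DifferentiableOn ℂ (Phi i) (Metric.ball p (r/2)) := by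
    intro z hz
    have := hloc (y := z) ((hsub z hz).trans_le hrr2)
    exact (Phi_diffAt hi this.1 (this.2.2 i hiI hsi)).differentiableWithinAt
  obtain ⟨δ, hδ, hδS⟩ := Metric.eventually_nhds_iff.1 ((SD_open hi hp1 hSi).and (ball_ev hp1))
  set d := min (δ/2) (r/2) with hd
  have hd0 : 0 < d := lt_min (by linarith) (by linarith)
  have hconv : ∀ e > 0, ∀ᶠ n in l, ∀ z ∈ Metric.ball p d,
      |Real.log ‖F n z‖ / (2 * √(n:ℝ)) - (Phi i z).re| ≤ e := by
    intro e he
    apply hll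
    have := unif_of_local (K := Metric.closedBall p d) (isCompact_closedBall p d)
      (p := fun n z => |Real.log ‖F n z‖ / (2 * √(n:ℝ)) - (Phi i z).re| ≤ e) (by
        intro y hy
        have hyd : dist y p < δ := by
          have h1 := Metric.mem_closedBall.1 hy
          have h2 : d ≤ δ/2 := min_le_left _ _
          linarith
        exact SD_local hi hi3 (hδS hyd).2 (hδS hyd).1 he)
    filter_upwards [this] with n hn z hz
    exact hn z (Metric.ball_subset_closedBall hz)
  have hq : q ∈ Metric.ball p (r/2) := by
    rw [Metric.mem_ball]
    have := dist_triangle_right q p x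
    linarith
  have hT := vitali (l := l) (s := fun n => 2 * √(n:ℝ)) (g := F) (P := Phi i) (a := p) (q := q) (R := r/2) (δ := d)
    (C := MM x + 1) hd0 (min_le_right _ _) (hll sqrt_pos_ev) (by
      filter_upwards [hlz] with n hn
      exact ⟨(F_diff n).differentiableOn, fun z hz => hn z ((hsub z hz).trans_le hrε)⟩) hP (by
      filter_upwards [hlz, hll hup, hll sqrt_pos_ev] with n hn h2 h3 z hz
      have hz0 := hn z ((hsub z hz).trans_le hrε)
      have h4 := Real.log_le_log (norm_pos_iff.2 hz0) (h2 z (Metric.mem_ball.2 ((hsub z hz).trans_le hrr1)))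
      rw [Real.log_exp] at h4
      have h5 : Real.log ‖F n z‖ / (2 * √(n:ℝ)) ≤ MM x + 1 := by
        rw [div_le_iff₀ h3]; linarith
      rw [Phi_re]
      have := fk_nonneg i z
      linarith) hconv hq
  rw [Phi_re] at hT
  have hT2 := (SD_tendsto hj hj3 hq1 hSj).mono_left hll
  have := tendsto_nhds_unique hT hT2
  exact (hSj i hij).ne this

lemma outside_local {x : ℂ} (hx : 1 < ‖x‖) {e : ℝ} (he : 0 < e) :
    ∀ᶠ z : ℕ × ℂ in atTop ×ˢ 𝓝 x, |Real.log ‖F z.1 z.2 / z.2 ^ z.1‖ / (z.1:ℝ) - ((fun _ : ℂ => (0:ℂ)) z.2).re| ≤ e := by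
  obtain ⟨c, hc, hT⟩ := outside_tendsto hx
  have h1 : Tendsto (fun p : ℕ × ℂ => Real.log ‖F p.1 p.2 / p.2 ^ p.1‖) (atTop ×ˢ 𝓝 x) (𝓝 (Real.log ‖c‖)) :=
    (Real.continuousAt_log (norm_ne_zero_iff.2 hc)).tendsto.comp hT.norm
  have h2 : Tendsto (fun p : ℕ × ℂ => ((p.1:ℝ))⁻¹) (atTop ×ˢ 𝓝 x) (𝓝 0) :=
    (tendsto_inv_atTop_nhds_zero_nat (𝕜 := ℝ)).comp tendsto_fst
  have h3 := h1.mul h2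
  rw [mul_zero] at h3
  filter_upwards [Metric.tendsto_nhds.1 h3 e he] with z hz
  rw [dist_zero_right, Real.norm_eq_abs] at hz
  simp only [Complex.zero_re, sub_zero]
  rw [div_eq_mul_inv]
  exact hz.le

theorem circle_zero {x : ℂ} (hx : ‖x‖ = 1) {ε : ℝ} (hε : 0 < ε) :
    ∀ᶠ n in atTop, ∃ z, dist z x < ε ∧ F n z = 0 := by
  wlog hε1 : ε ≤ 1/2 generalizing ε
  · filter_upwards [this (ε := 1/2) (by norm_num) le_rfl] with n hn
    obtain ⟨z, h1, h2⟩ := hn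
    exact ⟨z, by linarith, h2⟩
  by_contra hcon
  have hfr : ∃ᶠ n in atTop, ∀ z, dist z x < ε → F n z ≠ 0 := by
    refine (Filter.not_eventually.1 hcon).mono fun n hn z hz h0 => hn ⟨z, hz, h0⟩
  set l : Filter ℕ := atTop ⊓ 𝓟 {n | ∀ z, dist z x < ε → F n z ≠ 0} with hl
  have hne : l.NeBot := Filter.frequently_mem_iff_neBot.1 hfr
  have hll : l ≤ atTop := inf_le_left
  have hlz : ∀ᶠ n in l, ∀ z, dist z x < ε → F n z ≠ 0 := by
    have : {n | ∀ z, dist z x < ε → F n z ≠ 0} ∈ l := mem_inf_of_right (mem_principal_self _)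
    exact this
  set a : ℂ := ((1 + ε/8 : ℝ) : ℂ) * x with ha
  have hna : ‖a‖ = 1 + ε/8 := by
    rw [ha, norm_mul, hx, Complex.norm_real, Real.norm_of_nonneg (by linarith), mul_one]
  have hax : dist a x = ε/8 := by
    rw [dist_eq_norm, ha, show ((1 + ε/8 : ℝ) : ℂ) * x - x = ((ε/8 : ℝ) : ℂ) * x by push_cast; ring, norm_mul, hx,
      Complex.norm_real, Real.norm_of_nonneg (by linarith), mul_one]
  set b : ℂ := ((1 - ε/8 : ℝ) : ℂ) * x with hb
  have hnb : ‖b‖ = 1 - ε/8 := by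
    rw [hb, norm_mul, hx, Complex.norm_real, Real.norm_of_nonneg (by linarith), mul_one]
  have hbx : dist b x = ε/8 := by
    rw [dist_eq_norm, hb, show ((1 - ε/8 : ℝ) : ℂ) * x - x = -(((ε/8 : ℝ) : ℂ) * x) by push_cast; ring, norm_neg, norm_mul, hx,
      Complex.norm_real, Real.norm_of_nonneg (by linarith), mul_one]
  obtain ⟨q, hq1, hqb, k, hk, hk3, hSk⟩ := dense_SD (x := b) (by rw [hnb]; linarith)
    (P := fun y => dist y b < ε/8) (Metric.eventually_nhds_iff.2 ⟨ε/8, by linarith, fun _ h => h⟩)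
  have hqa : q ∈ Metric.ball a (ε/2) := by
    rw [Metric.mem_ball]
    have h1 := dist_triangle q b a
    have h2 := dist_triangle_right b a x
    linarith
  have hsub : ∀ z ∈ Metric.ball a (ε/2), dist z x < 5*ε/8 := by
    intro z hz
    have := Metric.mem_ball.1 hz
    have h2 := dist_triangle z a x
    linarith
  have hnz : ∀ z ∈ Metric.ball a (ε/2), 1/2 ≤ ‖z‖ ∧ ‖z‖ ≤ 2 := by
    intro z hz
    have h1 := hsub z hz
    rw [dist_eq_norm] at h1
    have h2 := abs_le.1 (abs_norm_sub_norm_le z x)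
    rw [hx] at h2
    constructor <;> linarith [h2.1, h2.2]
  have hz0 : ∀ z ∈ Metric.ball a (ε/2), z ≠ 0 := fun z hz => by
    rw [← norm_pos_iff]; linarith [(hnz z hz).1]
  obtain ⟨C, hC, hFC⟩ := F_crude
  have hconv : ∀ e > 0, ∀ᶠ n in l, ∀ z ∈ Metric.ball a (ε/16),
      |Real.log ‖F n z / z ^ n‖ / (n:ℝ) - ((fun _ : ℂ => (0:ℂ)) z).re| ≤ e := by
    intro e he
    apply hll
    have := unif_of_local (K := Metric.closedBall a (ε/16)) (isCompact_closedBall a _)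
      (p := fun n z => |Real.log ‖F n z / z ^ n‖ / (n:ℝ) - ((fun _ : ℂ => (0:ℂ)) z).re| ≤ e) (by
        intro y hy
        apply outside_local _ he
        have h1 := Metric.mem_closedBall.1 hy
        rw [dist_eq_norm] at h1
        have h2 := abs_le.1 (abs_norm_sub_norm_le y a)
        linarith [h2.1])
    filter_upwards [this] with n hn z hz
    exact hn z (Metric.ball_subset_closedBall hz)
  have hnpos : ∀ᶠ n : ℕ in atTop, (0:ℝ) < n := by
    filter_upwards [eventually_gt_atTop 0] with n hn
    exact_mod_cast hn
  have hT := vitali (l := l) (s := fun n => (n:ℝ)) (g := fun n z => F n z / z ^ n) (P := fun _ => 0) (a := a) (q := q)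
    (R := ε/2) (δ := ε/16) (C := |Real.log C| + Real.log 4) (by linarith) (by linarith) (hll hnpos) (by
      filter_upwards [hlz] with n hn
      refine ⟨(F_diff n).differentiableOn.div (by fun_prop) fun z hz => pow_ne_zero _ (hz0 z hz), fun z hz =>
        div_ne_zero (hn z (by linarith [hsub z hz])) (pow_ne_zero _ (hz0 z hz))⟩) (differentiableOn_const _) (by
      filter_upwards [hlz, hll hFC, hll hnpos] with n hn h2 h3 z hz
      have hFz := hn z (by linarith [hsub z hz])
      have h5 : ‖F n z / z ^ n‖ ≤ C * 4 ^ n := by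
        have hzn : 0 < ‖z‖ := norm_pos_iff.2 (hz0 z hz)
        rw [norm_div, norm_pow, div_le_iff₀ (by positivity)]
        refine (h2 z (hnz z hz).2).trans ?_
        have h6 : (1:ℝ) ≤ (2 * ‖z‖)^n := one_le_pow₀ (by linarith [(hnz z hz).1])
        calc C * 2 ^ n ≤ C * 2 ^ n * (2 * ‖z‖)^n := by
              have : 0 < C * 2 ^ n := by positivity
              nlinarith
          _ = C * 4 ^ n * ‖z‖ ^ n := by
              rw [show (4:ℝ) = 2 * 2 by norm_num, mul_pow, mul_pow]; ring
      have h4 := Real.log_le_log (norm_pos_iff.2 (div_ne_zero hFz (pow_ne_zero _ (hz0 z hz)))) h5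
      rw [Real.log_mul hC.ne' (by positivity), Real.log_pow] at h4
      simp only [Complex.zero_re, sub_zero]
      rw [div_le_iff₀ h3]
      have h7 := le_abs_self (Real.log C)
      have h8 := abs_nonneg (Real.log C)
      have h9 : (1:ℝ) ≤ n := by exact_mod_cast Nat.one_le_iff_ne_zero.2 (by rintro rfl; simp at h3)
      nlinarith) hconv hqa
  simp only [Complex.zero_re] at hT
  have hq0 := SD_ne_zero hSk
  have hlogq : Real.log ‖q‖ < 0 := Real.log_neg (norm_pos_iff.2 hq0) hq1
  have hM := MM_pos hq1 hq0
  rw [← SD_MM hq1 hSk] at hM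
  have hlow := pt_of_local (p := fun n z => Real.exp (2*√(n:ℝ)*(fk k q - fk k q)) ≤ ‖F n z‖) (F_lower hk hk3 hq1 hSk hM)
  have : -Real.log ‖q‖ ≤ 0 := by
    apply ge_of_tendsto hT
    filter_upwards [hll hlow, hll hnpos] with n h1 h2
    rw [sub_self, mul_zero, Real.exp_zero] at h1
    have h3 : 0 ≤ Real.log ‖F n q‖ := Real.log_nonneg h1
    have hF : ‖F n q‖ ≠ 0 := by linarith
    rw [norm_div, norm_pow, Real.log_div hF (pow_ne_zero _ (norm_ne_zero_iff.2 hq0)), Real.log_pow, le_div_iff₀ h2]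
    linarith
  linarith

end PartP5d

section PartP5e
open Complex Filter Topology
set_option linter.unusedVariables false

lemma outside_ne {x : ℂ} (hx : 1 < ‖x‖) : ∀ᶠ z : ℕ × ℂ in atTop ×ˢ 𝓝 x, F z.1 z.2 ≠ 0 := by
  obtain ⟨c, hc, hT⟩ := outside_tendsto hx
  filter_upwards [hT.eventually_ne hc] with z hz h0
  rw [h0, zero_div] at hz
  exact hz rfl

lemma far_ne : ∀ᶠ n in atTop, ∀ z : ℂ, 2 ≤ ‖z‖ → F n z ≠ 0 := by
  have h1 := unif_of_local (K := Metric.closedBall (0:ℂ) (1/2)) (isCompact_closedBall _ _)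
    (p := fun n z => pa (fun m => z ^ (m-1)) n ≠ 0) (by
      intro y hy
      have hy1 : ‖y‖ < 1 := by
        have : ‖y‖ ≤ 1/2 := by simpa using hy
        linarith
      obtain ⟨c, hc, hT⟩ := pa_tendsto hy1
      exact hT.eventually_ne hc)
  filter_upwards [h1, eventually_ne_atTop 0] with n hn hn0 z hz
  have hz0 : z ≠ 0 := by rw [← norm_pos_iff]; linarith
  rw [F_rev hn0 hz0]
  refine mul_ne_zero (pow_ne_zero _ hz0) (hn z⁻¹ ?_)
  simp only [Metric.mem_closedBall, dist_zero_right, norm_inv]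
  rw [one_div]
  exact inv_anti₀ (by norm_num) hz

lemma attractor_aux (A : Set ℂ)
    (hA : A = Metric.sphere (0 : ℂ) 1 ∪ ((frontier R1 ∪ frontier R2 ∪ frontier R3) ∩ Metric.ball (0 : ℂ) 1)) :
    Tendsto (fun n : ℕ => Metric.hausdorffDist {z : ℂ | F n z = 0} A) atTop (𝓝 0) := by
  rw [R1_eq, R2_eq, R3_eq] at hA
  have hAb : TotallyBounded A := by
    apply (isCompact_closedBall (0:ℂ) 1).totallyBounded.subset
    rw [hA]
    exact Set.union_subset Metric.sphere_subset_closedBall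
      (Set.inter_subset_right.trans Metric.ball_subset_closedBall)
  have hzero : ∀ x ∈ A, ∀ ε > 0, ∀ᶠ n in atTop, ∃ z, dist z x < ε ∧ F n z = 0 := by
    intro x hx ε hε
    rw [hA] at hx
    rcases hx with hx | ⟨hx, hx1⟩
    · exact circle_zero (by simpa using hx) hε
    · have hx1 : ‖x‖ < 1 := by simpa using hx1
      rcases hx with (hx | hx) | hx
      · exact frontier_zero (by norm_num) hx1 hx hε
      · exact frontier_zero (by norm_num) hx1 hx hε
      · exact frontier_zero (by norm_num) hx1 hx hε
  have hnz : ∀ x, x ∉ A → ∀ᶠ z : ℕ × ℂ in atTop ×ˢ 𝓝 x, F z.1 z.2 ≠ 0 := by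
    intro x hx
    rw [hA] at hx
    simp only [Set.mem_union, Set.mem_inter_iff, not_or, not_and, Metric.mem_ball, mem_sphere_iff_norm,
      dist_zero_right, sub_zero] at hx
    rcases lt_trichotomy ‖x‖ 1 with h | h | h
    · obtain ⟨k, hk, hk3, hS⟩ := SD_of_not_frontier h (by
        intro k hk hk3 hf
        have : k = 1 ∨ k = 2 ∨ k = 3 := by omega
        rcases this with rfl | rfl | rfl
        · exact hx.2 (Or.inl (Or.inl hf)) h
        · exact hx.2 (Or.inl (Or.inr hf)) h
        · exact hx.2 (Or.inr hf) h)
      exact SD_ne hk hk3 h hS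
    · exact absurd h hx.1
    · exact outside_ne h
  rw [Metric.tendsto_nhds]
  intro e he
  have hK : IsCompact (Metric.closedBall (0:ℂ) 2 \ Metric.thickening (e/2) A) :=
    (isCompact_closedBall _ _).diff Metric.isOpen_thickening
  have h1 := unif_of_local hK (p := fun n z => F n z ≠ 0) (fun y hy =>
    hnz y fun hyA => hy.2 (Metric.self_subset_thickening (half_pos he) A hyA))
  obtain ⟨t, htA, htf, htc⟩ := Metric.finite_approx_of_totallyBounded hAb (e/4) (by linarith)
  have h2 : ∀ᶠ n in atTop, ∀ y ∈ t, ∃ z, dist z y < e/4 ∧ F n z = 0 :=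
    (Filter.eventually_all_finite htf).2 fun y hy => hzero y (htA hy) _ (by linarith)
  filter_upwards [h1, h2, far_ne] with n hn1 hn2 hn3
  rw [dist_zero_right, Real.norm_of_nonneg Metric.hausdorffDist_nonneg]
  refine lt_of_le_of_lt (Metric.hausdorffDist_le_of_mem_dist (r := e/2) (by linarith) ?_ ?_) (by linarith)
  · intro z hz
    have hz : F n z = 0 := hz
    have hz2 : ‖z‖ < 2 := by
      by_contra hcon
      exact hn3 z (not_lt.1 hcon) hz
    have hth : z ∈ Metric.thickening (e/2) A := by
      by_contra hcon
      exact hn1 z ⟨by simpa using hz2.le, hcon⟩ hz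
    obtain ⟨a, ha, hd⟩ := Metric.mem_thickening_iff.1 hth
    exact ⟨a, ha, hd.le⟩
  · intro x hx
    obtain ⟨y, hy, hxy⟩ := Set.mem_iUnion₂.1 (htc hx)
    obtain ⟨z, hz, hz0⟩ := hn2 y hy
    refine ⟨z, hz0, ?_⟩
    have h3 := dist_triangle_right x z y
    have h4 := Metric.mem_ball.1 hxy
    linarith

end PartP5e

/-- The zero attractor: the zero sets of the partition polynomials converge, in the
Hausdorff metric, to the union of the unit circle with the boundaries of the three
regions `R(1)`, `R(2)`, `R(3)` inside the open unit disk. -/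
theorem partition_poly_zero_attractor :
    Tendsto (fun n : ℕ => Metric.hausdorffDist {z : ℂ | F n z = 0}
        (Metric.sphere (0 : ℂ) 1 ∪
          ((frontier R1 ∪ frontier R2 ∪ frontier R3) ∩ Metric.ball (0 : ℂ) 1)))
      atTop (nhds 0) := by
  exact attractor_aux _ rfl
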